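/- arXiv:1911.04546 — 2 statements merged into one kernel-verified Lean document; each statement's English description precedes it below -/
import Mathlib

section
/- If G is a connected simple graph on n vertices whose E-subgraph has maximum degree at most 3, then either G admits a path decomposition of cardinality at most ⌊n/2⌋, or G is a SET graph. -/
open SimpleGraph

variable {V : Type*}

/-- A path decomposition of a simple graph `G`: a list of nontrivial paths of `G`
that are pairwise edge-disjoint and together cover every edge of `G`. -/
structure PathDecomp (G : SimpleGraph V) where
  paths : List (Σ a b : V, G.Walk a b)
  nontrivial : ∀ p ∈ paths, 0 < p.2.2.length
  isPath : ∀ p ∈ paths, p.2.2.IsPath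
  edgeDisjoint : paths.Pairwise fun p q => ∀ e, e ∈ p.2.2.edges → e ∉ q.2.2.edges
  covers : ∀ e ∈ G.edgeSet, ∃ p ∈ paths, e ∈ p.2.2.edges

/-- Cardinality of a path decomposition. -/
def pdCard {G : SimpleGraph V} (D : PathDecomp G) : ℕ := D.paths.length

/-- `ends D u` is the number of paths in `D` having `u` as an end vertex. -/
def ends [DecidableEq V] {G : SimpleGraph V} (D : PathDecomp G) (u : V) : ℕ :=
  (D.paths.filter fun p => p.1 = u ∨ p.2.1 = u).length

/-- The path number: minimum cardinality of a path decomposition. -/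
noncomputable def pn (G : SimpleGraph V) : ℕ :=
  sInf {n | ∃ D : PathDecomp G, pdCard D = n}

/-- Degree as the `ncard` of the neighbor set (no decidability needed). -/
noncomputable def ndeg (G : SimpleGraph V) (v : V) : ℕ := {w | G.Adj v w}.ncard

/-- A SET graph: the set of even-degree vertices consists of exactly three
mutually adjacent vertices, and every odd-degree vertex has at least two
even-degree neighbors. -/
def IsSETGraph (G : SimpleGraph V) : Prop :=
  (∃ a b c : V, a ≠ b ∧ a ≠ c ∧ b ≠ c ∧
      {v : V | Even (ndeg G v)} = {a, b, c} ∧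
      G.Adj a b ∧ G.Adj a c ∧ G.Adj b c) ∧
  ∀ v : V, Odd (ndeg G v) →
    ∃ w₁ w₂ : V, w₁ ≠ w₂ ∧ G.Adj v w₁ ∧ G.Adj v w₂ ∧
      Even (ndeg G w₁) ∧ Even (ndeg G w₂)

section PathSystems

/-- The multiset of edges traversed by a list of vertices. -/
def pathEdges : List V → Multiset (Sym2 V)
  | [] => 0
  | [_] => 0
  | x :: y :: l => s(x, y) ::ₘ pathEdges (y :: l)

/-- The two ends of a list of vertices; a one-element list has a double end. -/
def pathEnds (l : List V) : Multiset V :=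
  (l.head?.toList : Multiset V) + (l.getLast?.toList : Multiset V)

lemma pathEdges_append (l₁ l₂ : List V) (v a : V) :
    pathEdges (l₁ ++ v :: a :: l₂) =
      pathEdges (l₁ ++ [v]) + s(v, a) ::ₘ pathEdges (a :: l₂) := by
  induction l₁ with
  | nil => simp [pathEdges]
  | cons x t ih =>
    cases t with
    | nil => simp [pathEdges, Multiset.cons_swap]
    | cons y t =>
      simp only [List.cons_append, pathEdges] at ih ⊢
      rw [ih]
      simp [Multiset.cons_swap]

lemma pathEdges_reverse (l : List V) : pathEdges l.reverse = pathEdges l := by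
  induction l with
  | nil => rfl
  | cons x t ih =>
    cases t with
    | nil => rfl
    | cons y t =>
      have h := pathEdges_append t.reverse [] y x
      simp only [List.reverse_cons, List.append_assoc, List.cons_append, List.nil_append] at h ih ⊢
      rw [h, ih]
      simp only [pathEdges, Sym2.eq_swap (a := y)]
      rw [← Multiset.singleton_add, add_comm]
      simp

lemma pathEnds_reverse (l : List V) : pathEnds l.reverse = pathEnds l := by
  simp [pathEnds, add_comm]

lemma pathEnds_cons_append (x a : V) (m l : List V) :
    pathEnds (x :: m ++ a :: l) = x ::ₘ ((a :: l).getLast?.toList : Multiset V) := by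
  simp [pathEnds, List.getLast?_append, List.getLast?_cons]

lemma pathEnds_cons_cons (x a : V) (l : List V) :
    pathEnds (x :: a :: l) = x ::ₘ ((a :: l).getLast?.toList : Multiset V) :=
  pathEnds_cons_append x a [] l

lemma pathEnds_cons (x : V) (l : List V) :
    pathEnds (x :: l) = x ::ₘ ((x :: l).getLast?.toList : Multiset V) := by
  simp [pathEnds]

lemma eq_of_append_cons_eq {a : V} {l l' k k' : List V} (h₁ : a ∉ l) (h₂ : a ∉ l')
    (h : l ++ a :: k = l' ++ a :: k') : l = l' := by
  induction l generalizing l' with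
  | nil =>
    cases l' with
    | nil => rfl
    | cons y t => simp at h h₂; exact absurd h.1 h₂.1
  | cons x t ih =>
    cases l' with
    | nil => simp at h h₁; exact absurd h.1.symm h₁.1
    | cons y t' =>
      simp only [List.cons_append, List.cons.injEq, List.mem_cons, not_or] at h h₁ h₂
      rw [h.1, ih h₁.2 h₂.2 h.2]

variable [DecidableEq V]

lemma even_incidence_add_ends (l : List V) (h : l.Nodup) (v : V) :
    Even ((pathEdges l).countP (v ∈ ·) + (pathEnds l).count v) := by
  induction l with
  | nil => simp [pathEdges, pathEnds]
  | cons x t ih =>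
    cases t with
    | nil => by_cases hv : v = x <;> simp [pathEdges, pathEnds, hv]
    | cons y t =>
      have hxy : x ≠ y := by rintro rfl; simp at h
      have := ih (List.nodup_cons.1 h).2
      have e1 : (pathEnds (y :: t)).count v
          = (if v = y then 1 else 0) +
            Multiset.count v ((y :: t).getLast?.toList : Multiset V) := by
        rw [pathEnds_cons, Multiset.count_cons, add_comm]
      have e2 : (pathEnds (x :: y :: t)).count v
          = (if v = x then 1 else 0) +
            Multiset.count v ((y :: t).getLast?.toList : Multiset V) := by
        rw [pathEnds_cons_cons, Multiset.count_cons, add_comm]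
      rw [e1] at this
      rw [e2]
      simp only [pathEdges, Multiset.countP_cons, Sym2.mem_iff]
      by_cases hx : v = x
      · have hy : v ≠ y := hx ▸ hxy
        simp only [hx, hxy, true_or, if_true, if_false] at this ⊢
        rw [Nat.even_iff] at *; omega
      · by_cases hy : v = y
        · have hyx := hxy.symm
          simp only [hy, hyx, or_true, if_true, if_false] at this ⊢
          rw [Nat.even_iff] at *; omega
        · simp only [hx, hy, or_self, if_false] at this ⊢
          rw [Nat.even_iff] at *; omega

/-- `D` is a family of (possibly one-vertex) paths whose edges partition `E`. -/
structure IsDec (E : Finset (Sym2 V)) (D : Multiset (List V)) : Prop where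
  ne_nil : ∀ P ∈ D, P ≠ []
  nodup : ∀ P ∈ D, P.Nodup
  edges : D.bind pathEdges = E.val

/-- The number of path ends of the family `D` at the vertex `v`. -/
def endCount (D : Multiset (List V)) (v : V) : ℕ := (D.bind pathEnds).count v

/-- The number of edges of `E` incident with `v`. -/
def edgeDeg (E : Finset (Sym2 V)) (v : V) : ℕ := (E.filter (v ∈ ·)).card

lemma IsDec.even_edgeDeg_add_endCount {E : Finset (Sym2 V)} {D : Multiset (List V)}
    (h : IsDec E D) (v : V) : Even (edgeDeg E v + endCount D v) := by
  have key : ∀ D' : Multiset (List V), (∀ P ∈ D', P.Nodup) →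
      Even ((D'.bind pathEdges).countP (v ∈ ·) + (D'.bind pathEnds).count v) := by
    intro D'
    induction D' using Multiset.induction_on with
    | empty => simp
    | cons P D' ih =>
      intro hn
      have h1 := ih fun Q hQ => hn Q (Multiset.mem_cons_of_mem hQ)
      have h2 := even_incidence_add_ends P (hn P (Multiset.mem_cons_self P D')) v
      simp only [Multiset.cons_bind, Multiset.countP_add, Multiset.count_add]
      rw [Nat.even_iff] at *; omega
  have := key D h.nodup
  rw [h.edges] at this
  simpa [edgeDeg, endCount, Finset.card_def, Multiset.countP_eq_card_filter] using this

/-- `y` precedes `a` on a path of `D` starting at `x`. -/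
def Arc (D : Multiset (List V)) (a x y : V) : Prop :=
  ∃ P ∈ D, ∃ Q, (Q = P ∨ Q = P.reverse) ∧ Q.head? = some x ∧ ∃ l₁ l₂, Q = l₁ ++ y :: a :: l₂

/-- Some path of `D` avoiding `a` ends at `x`. -/
def FreeEnd (D : Multiset (List V)) (a x : V) : Prop :=
  ∃ P ∈ D, a ∉ P ∧ (P.head? = some x ∨ P.getLast? = some x)

/-- Extending a path that avoids `a` from its end `b` to `a`. -/
lemma IsDec.extend {E : Finset (Sym2 V)} {D : Multiset (List V)} {a b : V} (h : IsDec E D)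
    (hab : s(a, b) ∉ E) (hf : FreeEnd D a b) :
    ∃ D', IsDec (insert s(a, b) E) D' ∧ D'.card = D.card ∧
      ∀ v, endCount D' v + (if v = b then 1 else 0) = endCount D v + (if v = a then 1 else 0) := by
  obtain ⟨P, hP, haP, hend⟩ := hf
  obtain ⟨D₀, rfl⟩ := Multiset.exists_cons_of_mem hP
  obtain ⟨Q, hQe, hQn, hQs, haQ, hQh⟩ : ∃ Q : List V, pathEdges Q = pathEdges P ∧ Q.Nodup ∧
      pathEnds Q = pathEnds P ∧ a ∉ Q ∧ Q.head? = some b := by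
    rcases hend with hh | hh
    · exact ⟨P, rfl, h.nodup P hP, rfl, haP, hh⟩
    · exact ⟨P.reverse, pathEdges_reverse P, by simpa using h.nodup P hP, pathEnds_reverse P,
        by simpa using haP, by simpa using hh⟩
  obtain ⟨t, rfl⟩ := List.head?_eq_some_iff.1 hQh
  refine ⟨(a :: b :: t) ::ₘ D₀, ⟨?_, ?_, ?_⟩, by simp, ?_⟩
  · intro R hR
    rcases Multiset.mem_cons.1 hR with rfl | hR
    · simp
    · exact h.ne_nil R (Multiset.mem_cons_of_mem hR)
  · intro R hR
    rcases Multiset.mem_cons.1 hR with rfl | hR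
    · exact List.nodup_cons.2 ⟨haQ, hQn⟩
    · exact h.nodup R (Multiset.mem_cons_of_mem hR)
  · have := h.edges
    simp only [Multiset.cons_bind] at this ⊢
    rw [Finset.insert_val_of_notMem hab, ← this, ← hQe]
    simp [pathEdges]
  · intro v
    simp only [endCount, Multiset.cons_bind, ← hQs, Multiset.count_add]
    rw [pathEnds_cons_cons, pathEnds_cons, Multiset.count_cons, Multiset.count_cons]
    ring

/-- Rotating a path at `a`: the edge `av` is exchanged for `ab`. -/
lemma IsDec.rotate {E : Finset (Sym2 V)} {D : Multiset (List V)} {a b v : V} (h : IsDec E D)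
    (hab : s(a, b) ∉ E) (harc : Arc D a b v) :
    s(a, v) ∈ E ∧ v ≠ a ∧ ∃ D', IsDec (insert s(a, b) (E.erase s(a, v))) D' ∧ D'.card = D.card ∧
      (∀ w, endCount D' w + (if w = b then 1 else 0) =
        endCount D w + (if w = v then 1 else 0)) ∧
      (∀ x y, y ≠ v → Arc D a x y → Arc D' a x y) ∧ (∀ x, FreeEnd D a x → FreeEnd D' a x) := by
  obtain ⟨P, hP, Q, hQP, hQh, l₁, l₂, hQ⟩ := harc
  obtain ⟨D₀, rfl⟩ := Multiset.exists_cons_of_mem hP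
  have hQe : pathEdges Q = pathEdges P := by
    rcases hQP with rfl | rfl
    · rfl
    · exact pathEdges_reverse P
  have hQs : pathEnds Q = pathEnds P := by
    rcases hQP with rfl | rfl
    · rfl
    · exact pathEnds_reverse P
  have hQn : Q.Nodup := by
    rcases hQP with rfl | rfl
    · exact h.nodup _ hP
    · simpa using h.nodup _ hP
  have hPQ : P = Q ∨ P = Q.reverse := by
    rcases hQP with rfl | rfl <;> simp
  have hva : v ≠ a := by
    rintro rfl
    rw [hQ] at hQn
    simp [List.nodup_append] at hQn
  have hedges := h.edges
  simp only [Multiset.cons_bind, ← hQe] at hedges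
  obtain ⟨m, hm⟩ : ∃ m, l₁ ++ [v] = b :: m := by
    cases l₁ with
    | nil => simp [hQ] at hQh; exact ⟨[], by simp [hQh]⟩
    | cons c l => simp [hQ] at hQh; exact ⟨l ++ [v], by simp [hQh]⟩
  have hQ' : Q = (l₁ ++ [v]) ++ a :: l₂ := by simp [hQ]
  have hE1 : pathEdges Q = pathEdges (b :: m) + s(v, a) ::ₘ pathEdges (a :: l₂) := by
    rw [hQ, pathEdges_append, hm]
  have hE2 : pathEdges ((b :: m).reverse ++ a :: l₂)
      = pathEdges (b :: m) + s(b, a) ::ₘ pathEdges (a :: l₂) := by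
    have := pathEdges_append m.reverse l₂ b a
    rw [← pathEdges_reverse (b :: m)]
    simpa using this
  have hav : s(a, v) ∈ E := by
    have : s(a, v) ∈ E.val := by
      rw [← hedges, hE1]; simp [Sym2.eq_swap]
    exact this
  have hvb : v ≠ b := by rintro rfl; exact hab hav
  refine ⟨hav, hva, ((b :: m).reverse ++ a :: l₂) ::ₘ D₀, ⟨?_, ?_, ?_⟩, by simp, ?_, ?_, ?_⟩
  · intro R hR
    rcases Multiset.mem_cons.1 hR with rfl | hR
    · simp
    · exact h.ne_nil R (Multiset.mem_cons_of_mem hR)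
  · intro R hR
    rcases Multiset.mem_cons.1 hR with rfl | hR
    · have hperm : List.Perm ((b :: m).reverse ++ a :: l₂) Q := by
        rw [hQ', hm]; exact (List.reverse_perm _).append_right _
      exact hperm.nodup_iff.2 hQn
    · exact h.nodup R (Multiset.mem_cons_of_mem hR)
  · have hne : s(a, b) ∉ E.erase s(a, v) := fun hh => hab (Finset.mem_of_mem_erase hh)
    rw [Finset.insert_val_of_notMem hne, Finset.erase_val, ← hedges, Multiset.cons_bind, hE1, hE2,
      Sym2.eq_swap (a := v), Sym2.eq_swap (a := b)]
    simp [Multiset.erase_cons_head]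
  · intro w
    simp only [endCount, Multiset.cons_bind, ← hQs, Multiset.count_add]
    have e1 : pathEnds ((b :: m).reverse ++ a :: l₂) =
        v ::ₘ ((a :: l₂).getLast?.toList : Multiset V) := by
      rw [← hm, List.reverse_append]
      exact pathEnds_cons_append v a l₁.reverse l₂
    have e2 : pathEnds Q = b ::ₘ ((a :: l₂).getLast?.toList : Multiset V) := by
      rw [hQ', hm]
      exact pathEnds_cons_append b a m l₂
    rw [e1, e2, Multiset.count_cons, Multiset.count_cons]
    ring
  · rintro x y hy ⟨R, hR, R', hRR', hh, k₁, k₂, hk⟩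
    rcases Multiset.mem_cons.1 hR with rfl | hR
    · have hRQ : R' = Q ∨ R' = Q.reverse := by
        rcases hRR' with rfl | rfl <;> rcases hPQ with hh' | hh' <;> rw [hh'] <;> simp
      rcases hRQ with rfl | rfl
      · exfalso
        apply hy
        have h1 : (l₁ ++ [v]) ++ a :: l₂ = (k₁ ++ [y]) ++ a :: k₂ := by
          rw [← hQ', hk]; simp
        have hnd := hQn
        rw [hQ'] at hnd
        have n1 : a ∉ l₁ ++ [v] := fun hc => (List.nodup_append.1 hnd).2.2 a hc a (by simp) rfl
        rw [hk, show k₁ ++ y :: a :: k₂ = (k₁ ++ [y]) ++ a :: k₂ by simp] at hQn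
        have n2 : a ∉ k₁ ++ [y] := fun hc => (List.nodup_append.1 hQn).2.2 a hc a (by simp) rfl
        have := eq_of_append_cons_eq n1 n2 h1
        have h3 := congrArg List.getLast? this
        simpa using h3.symm
      · refine ⟨_, Multiset.mem_cons_self _ _, _, Or.inr rfl, ?_, ?_⟩
        · rw [hQ', hm] at hh
          simpa using hh
        · have hQr : Q.reverse = l₂.reverse ++ a :: (b :: m).reverse := by
            rw [hQ', hm]; simp
          have hnd : Q.reverse.Nodup := by simpa using hQn
          have h1 : l₂.reverse ++ a :: (b :: m).reverse = (k₁ ++ [y]) ++ a :: k₂ := by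
            rw [← hQr, hk]; simp
          have n1 : a ∉ l₂.reverse := by
            rw [hQr] at hnd
            exact fun hc => (List.nodup_append.1 hnd).2.2 a hc a (by simp) rfl
          have n2 : a ∉ k₁ ++ [y] := by
            rw [hQr, h1] at hnd
            exact fun hc => (List.nodup_append.1 hnd).2.2 a hc a (by simp) rfl
          have := eq_of_append_cons_eq n1 n2 h1
          refine ⟨k₁, b :: m, ?_⟩
          simp [this]
    · exact ⟨R, Multiset.mem_cons_of_mem hR, R', hRR', hh, k₁, k₂, hk⟩
  · rintro x ⟨R, hR, haR, hx⟩
    rcases Multiset.mem_cons.1 hR with rfl | hR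
    · exfalso
      apply haR
      rcases hPQ with hh | hh <;> rw [hh, hQ] <;> simp
    · exact ⟨R, Multiset.mem_cons_of_mem hR, haR, hx⟩

end PathSystems

section Augmentation

lemma isChain_cons_mono_of_mem {R S : V → V → Prop} {l : List V} :
    ∀ {x : V}, (∀ p q, q ∈ l → R p q → S p q) → List.IsChain R (x :: l) →
      List.IsChain S (x :: l) := by
  induction l with
  | nil => intros; simp
  | cons y t ih =>
    intro x hRS h
    rw [List.isChain_cons_cons] at h ⊢
    exact ⟨hRS _ _ (by simp) h.1, ih (fun p q hq => hRS p q (List.mem_cons_of_mem _ hq)) h.2⟩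

lemma pathEdges_append_cons (l₁ l₂ : List V) (a : V) :
    pathEdges (l₁ ++ a :: l₂) = pathEdges (l₁ ++ [a]) + pathEdges (a :: l₂) := by
  cases l₂ with
  | nil => simp [pathEdges]
  | cons b l₂ => rw [pathEdges_append]; simp [pathEdges]

lemma Arc.mem {E : Finset (Sym2 V)} {D : Multiset (List V)} (h : IsDec E D) {a x y : V}
    (hxy : Arc D a x y) : s(a, y) ∈ E ∧ y ≠ a := by
  obtain ⟨P, hP, Q, hQP, -, l₁, l₂, hQ⟩ := hxy
  have hQe : pathEdges Q = pathEdges P := by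
    rcases hQP with rfl | rfl
    · rfl
    · exact pathEdges_reverse P
  have hQn : Q.Nodup := by
    rcases hQP with rfl | rfl
    · exact h.nodup _ hP
    · simpa using h.nodup _ hP
  constructor
  · have : s(a, y) ∈ D.bind pathEdges := by
      rw [Multiset.mem_bind]
      refine ⟨P, hP, ?_⟩
      rw [← hQe, hQ, pathEdges_append]
      simp [Sym2.eq_swap]
    rw [h.edges] at this
    exact this
  · rintro rfl
    rw [hQ] at hQn
    simp [List.nodup_append] at hQn

variable [DecidableEq V]

/-- Adding the edge `ab` by a sequence of rotations at `a` followed by an extension. -/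
lemma IsDec.extend_of_isChain {a : V} (n : ℕ) : ∀ {E : Finset (Sym2 V)} {D : Multiset (List V)}
    {b : V} {l : List V}, l.length ≤ n → IsDec E D → s(a, b) ∉ E →
    List.IsChain (Arc D a) (b :: l) → FreeEnd D a ((b :: l).getLast (by simp)) →
    ∃ D', IsDec (insert s(a, b) E) D' ∧ D'.card = D.card ∧
      ∀ v, endCount D' v + (if v = b then 1 else 0) =
        endCount D v + (if v = a then 1 else 0) := by
  induction n with
  | zero =>
    intro E D b l hl h hab _ hf
    have : l = [] := List.length_eq_zero_iff.1 (by omega)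
    subst this
    exact h.extend hab (by simpa using hf)
  | succ n ih =>
    intro E D b l hl h hab hc hf
    cases l with
    | nil => exact h.extend hab (by simpa using hf)
    | cons v t =>
      rw [List.isChain_cons_cons] at hc
      by_cases hv : v ∈ t
      · obtain ⟨t₁, t₂, rfl⟩ := List.append_of_mem hv
        refine ih (l := v :: t₂) ?_ h hab ?_ ?_
        · simp at hl ⊢; omega
        · rw [List.isChain_cons_cons]
          refine ⟨hc.1, ?_⟩
          have h2 := hc.2
          rw [← List.cons_append] at h2
          exact h2.right_of_append
        · simpa using hf
      · obtain ⟨hav, hva, D', hD', hcard, hends, harc, hfree⟩ := h.rotate hab hc.1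
        have hvb : v ≠ b := by rintro rfl; exact hab hav
        have hav' : s(a, v) ∉ insert s(a, b) (E.erase s(a, v)) := by
          simp only [Finset.mem_insert, Finset.mem_erase, ne_eq, not_true_eq_false, false_and,
            or_false, Sym2.eq_iff]
          rintro (⟨-, h'⟩ | ⟨-, h'⟩)
          · exact hvb h'
          · exact hva h'
        obtain ⟨D'', hD'', hcard', hends'⟩ := ih (l := t) (by simp at hl; omega) hD' hav'
          (isChain_cons_mono_of_mem
            (fun p q hq hpq => harc p q (by rintro rfl; exact hv hq) hpq) hc.2)
          (hfree _ (by simpa using hf))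
        refine ⟨D'', ?_, hcard'.trans hcard, fun w => ?_⟩
        · rw [Finset.insert_comm, Finset.insert_erase hav] at hD''
          exact hD''
        · have := hends w
          have := hends' w
          omega

/-- Either one of the edges `ab` with `b ∈ B` can be added to the decomposition, or the path
ends at `B` are outnumbered by neighbours of `a`. -/
lemma IsDec.extend_or [Fintype V] {E : Finset (Sym2 V)} {D : Multiset (List V)} {a : V}
    {B : Finset V} (h : IsDec E D) (haB : a ∉ B) (hB : ∀ b ∈ B, s(a, b) ∉ E) :
    (∃ b ∈ B, ∃ D', IsDec (insert s(a, b) E) D' ∧ D'.card = D.card ∧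
      ∀ v, endCount D' v + (if v = b then 1 else 0) =
        endCount D v + (if v = a then 1 else 0)) ∨
    ∃ W : Finset V, (∀ w ∈ W, s(a, w) ∈ E) ∧
      ∑ v ∈ B, endCount D v + ∑ v ∈ W, endCount D v ≤ W.card := by
  classical
  set S : Finset V := Finset.univ.filter fun x => ∃ b ∈ B, Relation.ReflTransGen (Arc D a) b x
    with hS
  have hmemS : ∀ x, x ∈ S ↔ ∃ b ∈ B, Relation.ReflTransGen (Arc D a) b x := by simp [hS]
  by_cases hfree : ∃ x ∈ S, FreeEnd D a x
  · left
    obtain ⟨x, hx, hf⟩ := hfree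
    obtain ⟨b, hb, hbx⟩ := (hmemS x).1 hx
    obtain ⟨l, hl, hlast⟩ := List.exists_isChain_cons_of_relationReflTransGen hbx
    exact ⟨b, hb, h.extend_of_isChain l.length le_rfl (hB b hb) hl (by rw [hlast]; exact hf)⟩
  · right
    push Not at hfree
    have hSsub : ∀ x ∈ S, x ∉ B → s(a, x) ∈ E := by
      intro x hx hxB
      obtain ⟨b, hb, hbx⟩ := (hmemS x).1 hx
      rcases Relation.ReflTransGen.cases_tail hbx with rfl | ⟨y, -, hy⟩
      · exact absurd hb hxB
      · exact (Arc.mem h hy).1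
    have haS : a ∉ S := by
      intro hx
      obtain ⟨b, hb, hbx⟩ := (hmemS a).1 hx
      rcases Relation.ReflTransGen.cases_tail hbx with rfl | ⟨y, -, hy⟩
      · exact haB hb
      · exact (Arc.mem h hy).2 rfl
    have hBS : B ⊆ S := fun b hb => (hmemS b).2 ⟨b, hb, .refl⟩
    refine ⟨S \ B, fun w hw => ?_, ?_⟩
    · exact hSsub w (Finset.mem_sdiff.1 hw).1 (Finset.mem_sdiff.1 hw).2
    rw [add_comm, Finset.sum_sdiff hBS]
    set T : Finset (Sym2 V) := (S \ B).image fun w => s(a, w) with hT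
    have hstep : ∀ P ∈ D, ∀ Q, (Q = P ∨ Q = P.reverse) → ∀ l₁ l₂ x, Q = l₁ ++ a :: l₂ →
        Q.head? = some x → x ∈ S → 1 ≤ (pathEdges (l₁ ++ [a])).countP (· ∈ T) := by
      intro P hP Q hQP l₁ l₂ x hQ hh hx
      have hne : l₁ ≠ [] := by
        rintro rfl
        simp [hQ] at hh
        exact haS (hh ▸ hx)
      obtain ⟨k, y, rfl⟩ : ∃ k y, l₁ = k ++ [y] :=
        ⟨_, _, (List.dropLast_append_getLast hne).symm⟩
      have harc : Arc D a x y := ⟨P, hP, Q, hQP, hh, k, l₂, by simp [hQ]⟩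
      obtain ⟨b, hb, hbx⟩ := (hmemS x).1 hx
      have hyS : y ∈ S := (hmemS y).2 ⟨b, hb, hbx.tail harc⟩
      have hyB : y ∉ B := fun hy => hB y hy (Arc.mem h harc).1
      rw [Nat.one_le_iff_ne_zero, ← Nat.pos_iff_ne_zero, Multiset.countP_pos]
      refine ⟨s(a, y), ?_, Finset.mem_image_of_mem _ (Finset.mem_sdiff.2 ⟨hyS, hyB⟩)⟩
      have := pathEdges_append k [] y a
      simp only [List.append_assoc, List.cons_append, List.nil_append]
      rw [this]
      simp [Sym2.eq_swap]
    have hpath : ∀ P ∈ D, (pathEnds P).countP (· ∈ S) ≤ (pathEdges P).countP (· ∈ T) := by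
      intro P hP
      have hne := h.ne_nil P hP
      have hhead := List.head?_eq_some_head hne
      have hlast := List.getLast?_eq_some_getLast hne
      by_cases haP : a ∈ P
      · obtain ⟨l₁, l₂, hl⟩ := List.append_of_mem haP
        have h1 := hstep P hP P (Or.inl rfl) l₁ l₂ _ hl hhead
        have h2 := hstep P hP P.reverse (Or.inr rfl) l₂.reverse l₁.reverse (P.getLast hne)
          (by simp [hl]) (by simp [hlast])
        have h3 : pathEdges (l₂.reverse ++ [a]) = pathEdges (a :: l₂) := by
          rw [← pathEdges_reverse (a :: l₂)]; simp
        rw [h3] at h2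
        have h4 : pathEdges P = pathEdges (l₁ ++ [a]) + pathEdges (a :: l₂) := by
          rw [hl]
          exact pathEdges_append_cons l₁ l₂ a
        rw [h4, Multiset.countP_add]
        simp only [pathEnds, hhead, hlast, Multiset.countP_add]
        have e1 : ∀ z : V, Multiset.countP (· ∈ S) ((some z).toList : Multiset V)
            = if z ∈ S then 1 else 0 := by
          intro z
          rw [show ((some z).toList : Multiset V) = z ::ₘ 0 from rfl, Multiset.countP_cons]
          simp
        rw [e1, e1]
        split_ifs with hx hy hy
        · exact Nat.add_le_add (h1 hx) (h2 hy)
        · exact (h1 hx).trans (Nat.le_add_right _ _)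
        · exact (h2 hy).trans (Nat.le_add_left _ _)
        · exact Nat.zero_le _
      · have e1 : ∀ z ∈ pathEnds P, z ∉ S := by
          intro z hz hzS
          refine hfree z hzS ⟨P, hP, haP, ?_⟩
          simp only [pathEnds, hhead, hlast, Multiset.mem_add] at hz
          rw [hhead, hlast]
          simpa [eq_comm] using hz
        rw [Multiset.countP_eq_zero.2 e1]
        exact Nat.zero_le _
    have hsum : ∀ D' : Multiset (List V), (∀ P ∈ D', P ∈ D) →
        (D'.bind pathEnds).countP (· ∈ S) ≤ (D'.bind pathEdges).countP (· ∈ T) := by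
      intro D'
      induction D' using Multiset.induction_on with
      | empty => simp
      | cons P D' ih =>
        intro hD'
        simp only [Multiset.cons_bind, Multiset.countP_add]
        exact Nat.add_le_add (hpath P (hD' P (Multiset.mem_cons_self P D')))
          (ih fun Q hQ => hD' Q (Multiset.mem_cons_of_mem hQ))
    have h1 := hsum D fun _ h => h
    rw [h.edges] at h1
    have h2 : ∑ v ∈ S, endCount D v = (D.bind pathEnds).countP (· ∈ S) := by
      simp only [endCount]
      rw [Multiset.countP_eq_card_filter, ← Multiset.sum_count_eq_card (s := S)]
      · refine Finset.sum_congr rfl fun v hv => ?_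
        rw [Multiset.count_filter_of_pos hv]
      · intro v hv
        exact (Multiset.mem_filter.1 hv).2
    rw [h2]
    refine h1.trans ?_
    rw [Multiset.countP_eq_card_filter]
    calc (Multiset.filter (· ∈ T) E.val).card = (E.filter (· ∈ T)).card := rfl
      _ ≤ T.card := Finset.card_le_card fun e he => (Finset.mem_filter.1 he).2
      _ ≤ _ := Finset.card_image_le

end Augmentation

section Calculus

variable [DecidableEq V]

/-- `E` is decomposed into at most `k` paths with at least `g v` path ends at each vertex `v`. -/
def HasDec (E : Finset (Sym2 V)) (k : ℕ) (g : V → ℕ) : Prop :=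
  ∃ D, IsDec E D ∧ D.card ≤ k ∧ ∀ v, g v ≤ endCount D v

/-- The edges joining `a` to the vertices of `B`. -/
def starEdges (a : V) (B : Finset V) : Finset (Sym2 V) := B.image fun b => s(a, b)

lemma mem_starEdges {a u v : V} {B : Finset V} (hu : u ≠ a) :
    s(u, v) ∈ starEdges a B ↔ v = a ∧ u ∈ B := by
  simp only [starEdges, Finset.mem_image, Sym2.eq_iff]
  constructor
  · rintro ⟨b, hb, ⟨h, -⟩ | ⟨h, h'⟩⟩
    · exact absurd h.symm hu
    · exact ⟨h.symm, h' ▸ hb⟩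
  · rintro ⟨rfl, h⟩
    exact ⟨u, h, Or.inr ⟨rfl, rfl⟩⟩

lemma mem_starEdges_self {a v : V} {B : Finset V} : s(a, v) ∈ starEdges a B ↔ v ∈ B := by
  simp only [starEdges, Finset.mem_image, Sym2.eq_iff]
  constructor
  · rintro ⟨b, hb, ⟨-, h⟩ | ⟨h, h'⟩⟩
    · exact h ▸ hb
    · exact h ▸ h' ▸ hb
  · intro h
    exact ⟨v, h, by simp⟩

lemma HasDec.mono {E : Finset (Sym2 V)} {k : ℕ} {g g' : V → ℕ} (h : HasDec E k g)
    (hg : ∀ v, g' v ≤ g v) : HasDec E k g' := by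
  obtain ⟨D, h1, h2, h3⟩ := h
  exact ⟨D, h1, h2, fun v => (hg v).trans (h3 v)⟩

lemma HasDec.parity {E : Finset (Sym2 V)} {k : ℕ} {g : V → ℕ} (h : HasDec E k g) :
    HasDec E k fun v => edgeDeg E v % 2 := by
  obtain ⟨D, h1, h2, -⟩ := h
  refine ⟨D, h1, h2, fun v => ?_⟩
  have := h1.even_edgeDeg_add_endCount v
  rw [Nat.even_iff] at this
  dsimp only
  omega

variable [Fintype V]

/-- The neighbours of `a` in `E` at which `g` vanishes. -/
def zeroNbrs (E : Finset (Sym2 V)) (g : V → ℕ) (a : V) : Finset V :=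
  Finset.univ.filter fun v => s(a, v) ∈ E ∧ g v = 0

lemma HasDec.insert_edge {E : Finset (Sym2 V)} {k : ℕ} {g g' : V → ℕ} {a b : V} (h : HasDec E k g)
    (hab : a ≠ b) (hE : s(a, b) ∉ E) (hz : (zeroNbrs E g a).card < g b)
    (hg : ∀ v, g' v + (if v = b then 1 else 0) ≤ g v + (if v = a then 1 else 0)) :
    HasDec (insert s(a, b) E) k g' := by
  obtain ⟨D, h1, h2, h3⟩ := h
  rcases h1.extend_or (B := {b}) (a := a) (by simpa using hab) (by simpa using hE) with
    ⟨b', hb', D', h1', h2', h3'⟩ | ⟨W, hW, hsum⟩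
  · obtain rfl : b' = b := by simpa using hb'
    refine ⟨D', h1', h2' ▸ h2, fun v => ?_⟩
    have := h3' v
    have := hg v
    have := h3 v
    omega
  · exfalso
    have hle : W.card ≤ (zeroNbrs E g a).card + ∑ v ∈ W, endCount D v := by
      have : W ⊆ zeroNbrs E g a ∪ W.filter fun v => 1 ≤ g v := by
        intro w hw
        simp only [zeroNbrs, Finset.mem_union, Finset.mem_filter, Finset.mem_univ, true_and]
        rcases Nat.eq_zero_or_pos (g w) with h0 | h0
        · exact Or.inl ⟨hW w hw, h0⟩
        · exact Or.inr ⟨hw, h0⟩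
      refine (Finset.card_le_card this).trans ((Finset.card_union_le _ _).trans ?_)
      gcongr
      rw [Finset.card_eq_sum_ones]
      refine (Finset.sum_le_sum fun v hv => (Finset.mem_filter.1 hv).2.trans (h3 v)).trans ?_
      exact Finset.sum_le_sum_of_subset (Finset.filter_subset _ _)
    have := h3 b
    rw [Finset.sum_singleton] at hsum
    omega

/-- At least half of the edges from `a` to `B` can be added. -/
lemma HasDec.exists_half_star {E : Finset (Sym2 V)} {k : ℕ} {g : V → ℕ} {a : V} {B : Finset V}
    (h : HasDec E k g) (haB : a ∉ B) (hE : ∀ b ∈ B, s(a, b) ∉ E) (hB : ∀ b ∈ B, 1 ≤ g b)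
    (hN : ∀ v, s(a, v) ∈ E → 1 ≤ g v) :
    ∃ A ⊆ B, (B \ A).card ≤ A.card ∧ HasDec (E ∪ starEdges a A) k
      fun v => if v = a then g a + A.card else if v ∈ A then g v - 1 else g v := by
  classical
  set 𝒜 := B.powerset.filter fun A => HasDec (E ∪ starEdges a A) k
      fun v => if v = a then g a + A.card else if v ∈ A then g v - 1 else g v with h𝒜
  have hne : 𝒜.Nonempty := by
    refine ⟨∅, ?_⟩
    simp only [h𝒜, Finset.mem_filter, Finset.mem_powerset, Finset.empty_subset, true_and]
    simp only [starEdges, Finset.image_empty, Finset.union_empty]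
    exact h.mono fun v => by split_ifs with hv <;> simp_all
  obtain ⟨A, hA, hmax⟩ := Finset.exists_max_image 𝒜 Finset.card hne
  simp only [h𝒜, Finset.mem_filter, Finset.mem_powerset] at hA hmax
  obtain ⟨hAB, hdec⟩ := hA
  refine ⟨A, hAB, ?_, hdec⟩
  obtain ⟨D, h1, h2, h3⟩ := hdec
  have haA : a ∉ A := fun hh => haB (hAB hh)
  have hE' : ∀ b ∈ B \ A, s(a, b) ∉ E ∪ starEdges a A := by
    intro b hb
    rw [Finset.mem_sdiff] at hb
    rw [Finset.mem_union, mem_starEdges_self]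
    exact fun hh => hh.elim (hE b hb.1) hb.2
  rcases h1.extend_or (B := B \ A) (a := a) (by simp [haB]) hE' with
    ⟨b, hb, D', h1', h2', h3'⟩ | ⟨W, hW, hsum⟩
  · exfalso
    rw [Finset.mem_sdiff] at hb
    have hle := hmax (insert b A) ⟨Finset.insert_subset hb.1 hAB, ?_⟩
    · rw [Finset.card_insert_of_notMem hb.2] at hle
      omega
    · refine ⟨D', ?_, h2' ▸ h2, fun v => ?_⟩
      · rw [starEdges, Finset.image_insert, Finset.union_insert]
        exact h1'
      · have e1 := h3' v
        have e2 := h3 v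
        have hba : b ≠ a := by rintro rfl; exact haB hb.1
        rw [Finset.card_insert_of_notMem hb.2]
        dsimp only at e2 ⊢
        by_cases hva : v = a
        · subst hva
          simp [hba.symm] at e1 e2 ⊢
          omega
        · by_cases hvb : v = b
          · subst hvb
            simp [hva, hb.2] at e1 e2 ⊢
            omega
          · simp [hva, hvb] at e1 e2 ⊢
            omega
  · have e1 : (B \ A).card ≤ ∑ v ∈ B \ A, endCount D v := by
      rw [Finset.card_eq_sum_ones]
      refine Finset.sum_le_sum fun v hv => ?_
      rw [Finset.mem_sdiff] at hv
      have e2 := h3 v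
      have := hB v hv.1
      have hva : v ≠ a := by rintro rfl; exact haB hv.1
      simp only [hva, hv.2, if_false] at e2
      omega
    have e2 : (W \ A).card ≤ ∑ v ∈ W, endCount D v := by
      rw [Finset.card_eq_sum_ones]
      refine (Finset.sum_le_sum fun v hv => ?_).trans
        (Finset.sum_le_sum_of_subset Finset.sdiff_subset)
      rw [Finset.mem_sdiff] at hv
      have hav : s(a, v) ∈ E := by
        rcases Finset.mem_union.1 (hW v hv.1) with hh | hh
        · exact hh
        · exact absurd (mem_starEdges_self.1 hh) hv.2
      have e2 := h3 v
      have := hN v hav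
      dsimp only at e2
      by_cases hva : v = a
      · subst hva; simp at e2; omega
      · simp only [hva, hv.2, if_false] at e2
        omega
    have e3 : W.card ≤ (W \ A).card + A.card := by
      have := Finset.card_le_card_sdiff_add_card (s := W) (t := A)
      omega
    omega

/-- Adding the edges from `x` to `R`, one at a time at the vertices of `R`. -/
lemma HasDec.add_star {E : Finset (Sym2 V)} {k : ℕ} {g : V → ℕ} {x : V} (e : ℕ) (R : Finset V)
    (h : HasDec E k g) (hx : x ∉ R) (hE : ∀ r ∈ R, s(x, r) ∉ E) (hg : R.card + e ≤ g x)
    (hz : ∀ r ∈ R, (zeroNbrs E g r).card ≤ e) :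
    HasDec (E ∪ starEdges x R) k fun v => if v = x then g x - R.card else g v := by
  induction R using Finset.induction_on with
  | empty =>
    simp only [starEdges, Finset.image_empty, Finset.union_empty]
    exact h.mono fun v => by split_ifs with hv <;> simp_all
  | insert r R hr ih =>
    rw [Finset.card_insert_of_notMem hr] at hg ⊢
    have hxr : x ≠ r := by rintro rfl; simp at hx
    have hxR : x ∉ R := fun hh => hx (Finset.mem_insert_of_mem hh)
    have h1 := ih hxR (fun r hr => hE r (Finset.mem_insert_of_mem hr)) (by omega)
      fun r hr => hz r (Finset.mem_insert_of_mem hr)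
    have hE' : s(r, x) ∉ E := by rw [Sym2.eq_swap]; exact hE r (Finset.mem_insert_self _ _)
    have hs : E ∪ starEdges x (insert r R) = insert s(r, x) (E ∪ starEdges x R) := by
      rw [starEdges, Finset.image_insert, Finset.union_insert, Sym2.eq_swap]; rfl
    rw [hs]
    refine h1.insert_edge hxr.symm ?_ ?_ ?_
    · rw [Finset.mem_union, mem_starEdges hxr.symm]
      exact fun hh => hh.elim hE' fun h => hr h.2
    · simp only [if_true]
      have : zeroNbrs (E ∪ starEdges x R) (fun v => if v = x then g x - R.card else g v) r ⊆
          zeroNbrs E g r := by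
        intro v hv
        simp only [zeroNbrs, Finset.mem_filter, Finset.mem_univ, true_and, Finset.mem_union,
          mem_starEdges hxr.symm] at hv ⊢
        obtain ⟨hv | hv, h0⟩ := hv
        · have hvx : v ≠ x := by rintro rfl; exact hE' hv
          simp only [hvx, if_false] at h0
          exact ⟨hv, h0⟩
        · exact absurd hv.2 hr
      have := Finset.card_le_card this
      have := hz r (Finset.mem_insert_self _ _)
      omega
    · intro v
      by_cases hv : v = x
      · subst hv; simp [hxr]; omega
      · simp [hv]

/-- Adding the three edges from `x` to a set `T` of three vertices. -/
lemma HasDec.add_three {E : Finset (Sym2 V)} {k : ℕ} {g g' : V → ℕ} {x : V} {T : Finset V}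
    (h : HasDec E k g) (hT : T.card = 3) (hx : x ∉ T) (hE : ∀ r ∈ T, s(x, r) ∉ E)
    (hgx : 1 ≤ g x) (hgT : ∀ r ∈ T, 1 ≤ g r) (hN : ∀ v, s(x, v) ∈ E → 1 ≤ g v)
    (hz : ∀ r ∈ T, (Finset.univ.filter fun v => s(r, v) ∈ E ∧ (g v = 0 ∨ v ∈ T)).card ≤ 2)
    (hg'x : g' x ≤ g x + 1) (hg'T : ∀ r ∈ T, g' r = 0) (hg' : ∀ v, v ≠ x → g' v ≤ g v) :
    HasDec (E ∪ starEdges x T) k g' := by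
  obtain ⟨A, hAT, hcard, hdec⟩ := h.exists_half_star hx hE hgT hN
  have hsum := Finset.card_sdiff_add_card_eq_card hAT
  have hxA : x ∉ A := fun hh => hx (hAT hh)
  have h1 := hdec.add_star 2 (T \ A) (fun hh => hx (Finset.mem_sdiff.1 hh).1) ?_ ?_ ?_
  · rw [Finset.union_assoc, starEdges, starEdges, ← Finset.image_union,
      Finset.union_sdiff_of_subset hAT] at h1
    refine h1.mono fun v => ?_
    by_cases hv : v = x
    · subst hv; simp; omega
    · simp only [hv, if_false]
      split_ifs with hvA
      · rw [hg'T v (hAT hvA)]; omega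
      · exact hg' v hv
  · intro r hr
    rw [Finset.mem_sdiff] at hr
    rw [Finset.mem_union, mem_starEdges_self]
    exact fun hh => hh.elim (hE r hr.1) hr.2
  · simp only [if_true]; omega
  · intro r hr
    rw [Finset.mem_sdiff] at hr
    have hrx : r ≠ x := by rintro rfl; exact hx hr.1
    refine (Finset.card_le_card ?_).trans (hz r hr.1)
    intro v hv
    simp only [zeroNbrs, Finset.mem_filter, Finset.mem_univ, true_and, Finset.mem_union,
      mem_starEdges hrx] at hv ⊢
    obtain ⟨hv | hv, h0⟩ := hv
    · refine ⟨hv, ?_⟩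
      have hvx : v ≠ x := by
        rintro rfl
        rw [Sym2.eq_swap] at hv
        exact hE r hr.1 hv
      simp only [hvx, if_false] at h0
      split_ifs at h0 with hvA
      · exact Or.inr (hAT hvA)
      · exact Or.inl h0
    · exact absurd hv.2 hr.2

/-- Adding a matching, given as a set of ordered pairs. -/
lemma HasDec.add_matching {E : Finset (Sym2 V)} {k : ℕ} {g : V → ℕ} (M : Finset (V × V))
    (h : HasDec E k g) (hne : ∀ p ∈ M, p.1 ≠ p.2) (hE : ∀ p ∈ M, s(p.1, p.2) ∉ E)
    (hg : ∀ p ∈ M, 1 ≤ g p.2) (hN : ∀ p ∈ M, ∀ v, s(p.1, v) ∈ E → 1 ≤ g v)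
    (hM : ∀ p ∈ M, ∀ q ∈ M, p ≠ q →
      s(p.1, q.2) ∉ E ∧ p.1 ≠ q.1 ∧ p.1 ≠ q.2 ∧ p.2 ≠ q.2) :
    HasDec (E ∪ M.image fun p => s(p.1, p.2)) k
      fun v => if v ∈ M.image Prod.snd then g v - 1 else g v := by
  induction M using Finset.induction_on with
  | empty => simpa using h
  | insert p M hp ih =>
    have h1 := ih (fun q hq => hne q (Finset.mem_insert_of_mem hq))
      (fun q hq => hE q (Finset.mem_insert_of_mem hq))
      (fun q hq => hg q (Finset.mem_insert_of_mem hq))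
      (fun q hq => hN q (Finset.mem_insert_of_mem hq))
      (fun q hq q' hq' => hM q (Finset.mem_insert_of_mem hq) q' (Finset.mem_insert_of_mem hq'))
    have hpM : ∀ q ∈ M, s(p.1, q.2) ∉ E ∧ p.1 ≠ q.1 ∧ p.1 ≠ q.2 ∧ p.2 ≠ q.2 := fun q hq =>
      hM p (Finset.mem_insert_self _ _) q (Finset.mem_insert_of_mem hq)
        (by rintro rfl; exact hp hq)
    have hp2 : p.2 ∉ M.image Prod.snd := by
      rw [Finset.mem_image]
      rintro ⟨q, hq, hqp⟩
      exact (hpM q hq).2.2.2 hqp.symm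
    have hedge : ∀ v, s(p.1, v) ∉ M.image fun p => s(p.1, p.2) := by
      intro v hv
      rw [Finset.mem_image] at hv
      obtain ⟨q, hq, hqv⟩ := hv
      rcases Sym2.eq_iff.1 hqv with ⟨h', -⟩ | ⟨-, h'⟩
      · exact (hpM q hq).2.1 h'.symm
      · exact (hpM q hq).2.2.1 h'.symm
    have hpp := hne p (Finset.mem_insert_self _ _)
    rw [Finset.image_insert, Finset.union_insert]
    refine h1.insert_edge hpp ?_ ?_ ?_
    · rw [Finset.mem_union]
      exact fun hh => hh.elim (hE p (Finset.mem_insert_self _ _)) (hedge _)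
    · rw [if_neg hp2]
      refine lt_of_lt_of_le ?_ (hg p (Finset.mem_insert_self _ _))
      rw [Nat.lt_one_iff, Finset.card_eq_zero, Finset.eq_empty_iff_forall_notMem]
      intro v hv
      simp only [zeroNbrs, Finset.mem_filter, Finset.mem_univ, true_and, Finset.mem_union] at hv
      obtain ⟨hv | hv, h0⟩ := hv
      · have := hN p (Finset.mem_insert_self _ _) v hv
        split_ifs at h0 with hvM
        · obtain ⟨q, hq, rfl⟩ := Finset.mem_image.1 hvM
          exact (hpM q hq).1 hv
        · omega
      · exact hedge v hv
    · intro v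
      have hgp := hg p (Finset.mem_insert_self _ _)
      rw [Finset.image_insert]
      simp only [Finset.mem_insert]
      by_cases hv : v = p.2
      · subst hv
        simp only [true_or, if_true, if_neg hp2]
        omega
      · simp only [hv, false_or, if_false]
        split_ifs <;> omega

end Calculus

section OneZero

variable [DecidableEq V]

lemma edgeDeg_insert {E : Finset (Sym2 V)} {a b : V} (h : s(a, b) ∉ E) (v : V) :
    edgeDeg (insert s(a, b) E) v = edgeDeg E v + if v = a ∨ v = b then 1 else 0 := by
  rw [edgeDeg, edgeDeg, Finset.filter_insert]
  simp only [Sym2.mem_iff]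
  split_ifs
  · rw [Finset.card_insert_of_notMem (by simp [h])]
  · rfl

variable [Fintype V]

lemma sum_shift {f : V → ℕ} {x z : V} (hxz : x ≠ z) (hz : 1 ≤ f z) :
    ∑ v, (f v + (if v = x then 1 else 0) - (if v = z then 1 else 0)) = ∑ v, f v := by
  have h1 : ∑ v, ((f v + (if v = x then 1 else 0) - (if v = z then 1 else 0)) +
      (if v = z then 1 else 0)) = ∑ v, (f v + (if v = x then 1 else 0)) := by
    refine Finset.sum_congr rfl fun v _ => ?_
    by_cases hv : v = z
    · subst hv; simp [hxz.symm]; omega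
    · simp [hv]
  rw [Finset.sum_add_distrib, Finset.sum_add_distrib] at h1
  simpa using h1

lemma hasDec_empty {k : ℕ} {f : V → ℕ} (hf : ∀ v, f v % 2 = 0) (hk : ∑ v, f v = 2 * k) :
    HasDec ∅ k f := by
  have hmem : ∀ P ∈ (Finset.univ.val.bind fun v : V => Multiset.replicate (f v / 2) [v]),
      ∃ v, P = [v] := by
    intro P hP
    obtain ⟨v, -, hv⟩ := Multiset.mem_bind.1 hP
    exact ⟨v, Multiset.eq_of_mem_replicate hv⟩
  refine ⟨Finset.univ.val.bind fun v => Multiset.replicate (f v / 2) [v], ⟨?_, ?_, ?_⟩, ?_, ?_⟩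
  · intro P hP
    obtain ⟨v, rfl⟩ := hmem P hP
    simp
  · intro P hP
    obtain ⟨v, rfl⟩ := hmem P hP
    simp
  · rw [Finset.empty_val, Multiset.eq_zero_iff_forall_notMem]
    intro e he
    obtain ⟨P, hP, heP⟩ := Multiset.mem_bind.1 he
    obtain ⟨v, rfl⟩ := hmem P hP
    simp [pathEdges] at heP
  · rw [Multiset.card_bind]
    simp only [Function.comp_def, Multiset.card_replicate]
    change ∑ v, f v / 2 ≤ k
    have : ∑ v, f v = 2 * ∑ v, f v / 2 := by
      rw [Finset.mul_sum]
      exact Finset.sum_congr rfl fun v _ => by have := hf v; omega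
    omega
  · intro v
    have h1 : ∀ m : ℕ, ∀ u : V, ((Multiset.replicate m [u]).bind pathEnds).count v =
        if v = u then 2 * m else 0 := by
      intro m u
      rw [Multiset.count_bind, Multiset.map_replicate, Multiset.sum_replicate]
      by_cases hvu : v = u
      · subst hvu; simp [pathEnds, mul_comm]
      · simp [pathEnds, hvu]
    rw [endCount, Multiset.bind_assoc, Multiset.count_bind]
    change f v ≤ ∑ u, ((Multiset.replicate (f u / 2) [u]).bind pathEnds).count v
    simp only [h1]
    simp only [Finset.sum_ite_eq, Finset.mem_univ, if_true]
    have := hf v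
    omega

/-- Prescribed numbers of path ends can be realized if they vanish at no more than one
non-isolated vertex. -/
lemma hasDec_of_unique_zero {k : ℕ} (n : ℕ) : ∀ {E : Finset (Sym2 V)} {f : V → ℕ}, E.card ≤ n →
    (∀ v, s(v, v) ∉ E) → (∀ v, f v % 2 = edgeDeg E v % 2) → ∑ v, f v = 2 * k →
    (∀ x y, f x = 0 → f y = 0 → (∃ w, s(x, w) ∈ E) → (∃ w, s(y, w) ∈ E) → x = y) →
    HasDec E k f := by
  have hempty : ∀ {f : V → ℕ}, (∀ v, f v % 2 = edgeDeg ∅ v % 2) → ∑ v, f v = 2 * k →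
      HasDec ∅ k f := fun hf hk => hasDec_empty (fun v => by rw [hf v]; simp [edgeDeg]) hk
  induction n with
  | zero =>
    intro E f hn hl hf hk hu
    obtain rfl : E = ∅ := Finset.card_eq_zero.1 (by omega)
    exact hempty hf hk
  | succ n ih =>
    intro E f hn hl hf hk hu
    rcases E.eq_empty_or_nonempty with rfl | hne
    · exact hempty hf hk
    by_cases hzero : ∃ x, f x = 0 ∧ ∃ w, s(x, w) ∈ E
    · obtain ⟨x, hx0, z, hxz⟩ := hzero
      have hne : x ≠ z := by rintro rfl; exact hl x hxz
      have hzx : s(z, x) ∈ E := by rwa [Sym2.eq_swap]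
      have hpos : ∀ v w, s(v, w) ∈ E → v ≠ x → 1 ≤ f v := by
        intro v w hvw hvx
        by_contra h0
        exact hvx (hu v x (by omega) hx0 ⟨w, hvw⟩ ⟨z, hxz⟩)
      have hz1 : 1 ≤ f z := hpos z x hzx hne.symm
      have hnot : s(z, x) ∉ E.erase s(z, x) := Finset.notMem_erase _ _
      have hins : insert s(z, x) (E.erase s(z, x)) = E := Finset.insert_erase hzx
      have hdeg := edgeDeg_insert hnot
      rw [hins] at hdeg
      have key : HasDec (E.erase s(z, x)) k
          fun v => f v + (if v = x then 1 else 0) - (if v = z then 1 else 0) := by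
        refine ih ?_ ?_ ?_ ?_ ?_
        · rw [Finset.card_erase_of_mem hzx]; omega
        · exact fun v hv => hl v (Finset.mem_of_mem_erase hv)
        · intro v
          have h1 := hf v
          have h2 := hdeg v
          by_cases hvx : v = x
          · subst hvx; simp [hne] at h2 ⊢; omega
          · by_cases hvz : v = z
            · subst hvz; simp [hne.symm] at h2 ⊢; omega
            · simp [hvx, hvz] at h2 ⊢; omega
        · rw [sum_shift hne hz1, hk]
        · have : ∀ u, f u + (if u = x then 1 else 0) - (if u = z then 1 else 0) = 0 →
              (∃ w, s(u, w) ∈ E.erase s(z, x)) → u = z := by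
            rintro u hu0 ⟨w, hw⟩
            by_contra huz
            by_cases hux : u = x
            · subst hux; simp [hne] at hu0
            · have := hpos u w (Finset.mem_of_mem_erase hw) hux
              simp [hux, huz] at hu0
              omega
          intro u u' h1 h2 h3 h4
          rw [this u h1 h3, this u' h2 h4]
      rw [← hins]
      refine key.insert_edge hne.symm hnot ?_ ?_
      · have h0 : 0 < f x + (if x = x then 1 else 0) - (if x = z then 1 else 0) := by
          simp [hne]
        refine lt_of_eq_of_lt ?_ h0
        rw [Finset.card_eq_zero, Finset.eq_empty_iff_forall_notMem]
        intro v hv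
        simp only [zeroNbrs, Finset.mem_filter, Finset.mem_univ, true_and, Finset.mem_erase] at hv
        obtain ⟨⟨h1, h2⟩, h3⟩ := hv
        have hvx : v ≠ x := by rintro rfl; exact h1 rfl
        have hvz : v ≠ z := by rintro rfl; exact hl _ h2
        have := hpos v z (by rwa [Sym2.eq_swap]) hvx
        simp [hvx, hvz] at h3
        omega
      · intro v
        by_cases hvz : v = z
        · subst hvz; simp [hne.symm]; omega
        · simp [hvz]
    · have hpos : ∀ v w, s(v, w) ∈ E → 1 ≤ f v := by
        intro v w hvw
        by_contra h0
        exact hzero ⟨v, by omega, w, hvw⟩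
      obtain ⟨e, he⟩ := hne
      induction e using Sym2.ind with | _ x a
      have hxa : x ≠ a := by rintro rfl; exact hl x he
      have hax : s(a, x) ∈ E := by rwa [Sym2.eq_swap]
      have hfx := hpos x a he
      have hfa := hpos a x hax
      by_cases hy : ∃ y, y ≠ a ∧ s(x, y) ∈ E
      · obtain ⟨y, hya, hxy⟩ := hy
        have hxy' : x ≠ y := by rintro rfl; exact hl x hxy
        have hfy := hpos y x (by rwa [Sym2.eq_swap])
        set H := (E.erase s(a, x)).erase s(x, y) with hH
        have hxy1 : s(x, y) ∈ E.erase s(a, x) := by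
          refine Finset.mem_erase.2 ⟨?_, hxy⟩
          rw [Sym2.eq_swap (a := a)]
          intro h
          rcases Sym2.eq_iff.1 h with ⟨-, h⟩ | ⟨h, -⟩
          · exact hya h
          · exact hxa h
        have hins1 : insert s(x, y) H = E.erase s(a, x) := Finset.insert_erase hxy1
        have hins2 : insert s(a, x) (E.erase s(a, x)) = E := Finset.insert_erase hax
        have hn1 : s(x, y) ∉ H := Finset.notMem_erase _ _
        have hn2 : s(a, x) ∉ E.erase s(a, x) := Finset.notMem_erase _ _
        have hd1 := edgeDeg_insert hn1
        have hd2 := edgeDeg_insert hn2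
        rw [hins1] at hd1
        rw [hins2] at hd2
        have hHE : ∀ e ∈ H, e ∈ E := fun e he =>
          Finset.mem_of_mem_erase (Finset.mem_of_mem_erase he)
        have key : HasDec H k
            fun v => f v + (if v = y then 1 else 0) - (if v = a then 1 else 0) := by
          refine ih ?_ ?_ ?_ ?_ ?_
          · rw [hH, Finset.card_erase_of_mem hxy1, Finset.card_erase_of_mem hax]; omega
          · exact fun v hv => hl v (hHE _ hv)
          · intro v
            have h1 := hf v
            have h2 := hd1 v
            have h3 := hd2 v
            by_cases hvx : v = x
            · subst hvx; simp [hxa, hxy'] at h2 h3 ⊢; omega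
            · by_cases hva : v = a
              · subst hva; simp [hya.symm, hxa.symm] at h2 h3 ⊢; omega
              · by_cases hvy : v = y
                · subst hvy; simp [hya, hxy'.symm] at h2 h3 ⊢; omega
                · simp [hvx, hva, hvy] at h2 h3 ⊢; omega
          · rw [sum_shift hya hfa, hk]
          · have : ∀ u, f u + (if u = y then 1 else 0) - (if u = a then 1 else 0) = 0 →
                (∃ w, s(u, w) ∈ H) → u = a := by
              rintro u hu0 ⟨w, hw⟩
              by_contra hua
              have := hpos u w (hHE _ hw)
              simp [hua] at hu0
              omega
            intro u u' h1 h2 h3 h4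
            rw [this u h1 h3, this u' h2 h4]
        have key2 : HasDec (E.erase s(a, x)) k
            fun v => f v + (if v = x then 1 else 0) - (if v = a then 1 else 0) := by
          rw [← hins1]
          refine key.insert_edge hxy' hn1 ?_ ?_
          · have h0 : 0 < f y + (if y = y then 1 else 0) - (if y = a then 1 else 0) := by
              simp [hya]
            refine lt_of_eq_of_lt ?_ h0
            rw [Finset.card_eq_zero, Finset.eq_empty_iff_forall_notMem]
            intro v hv
            simp only [zeroNbrs, Finset.mem_filter, Finset.mem_univ, true_and] at hv
            have hva : v ≠ a := by
              rintro rfl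
              have := (Finset.mem_erase.1 (Finset.mem_erase.1 hv.1).2).1
              exact this Sym2.eq_swap
            have := hpos v x (by rw [Sym2.eq_swap]; exact hHE _ hv.1)
            have h3 := hv.2
            simp [hva] at h3
            omega
          · intro v
            by_cases hva : v = a
            · subst hva; simp [hya.symm]; omega
            · simp [hva]; omega
        rw [← hins2]
        refine key2.insert_edge hxa.symm hn2 ?_ ?_
        · have h0 : 0 < f x + (if x = x then 1 else 0) - (if x = a then 1 else 0) := by
            simp [hxa]
          refine lt_of_eq_of_lt ?_ h0
          rw [Finset.card_eq_zero, Finset.eq_empty_iff_forall_notMem]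
          intro v hv
          simp only [zeroNbrs, Finset.mem_filter, Finset.mem_univ, true_and] at hv
          have hav := Finset.mem_of_mem_erase hv.1
          have hva : v ≠ a := by rintro rfl; exact hl _ hav
          have := hpos v a (by rwa [Sym2.eq_swap])
          have h3 := hv.2
          simp [hva] at h3
          omega
        · intro v
          by_cases hva : v = a
          · subst hva; simp [hxa.symm]; omega
          · simp [hva]
      · push Not at hy
        have hn1 : s(x, a) ∉ E.erase s(x, a) := Finset.notMem_erase _ _
        have hins : insert s(x, a) (E.erase s(x, a)) = E := Finset.insert_erase he
        have hd := edgeDeg_insert hn1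
        rw [hins] at hd
        have hiso : ∀ w, s(x, w) ∉ E.erase s(x, a) := by
          intro w hw
          rw [Finset.mem_erase] at hw
          by_cases hwa : w = a
          · subst hwa; exact hw.1 rfl
          · exact hy w hwa hw.2
        have key : HasDec (E.erase s(x, a)) k
            fun v => f v + (if v = a then 1 else 0) - (if v = x then 1 else 0) := by
          refine ih ?_ ?_ ?_ ?_ ?_
          · rw [Finset.card_erase_of_mem he]; omega
          · exact fun v hv => hl v (Finset.mem_of_mem_erase hv)
          · intro v
            have h1 := hf v
            have h2 := hd v
            by_cases hvx : v = x
            · subst hvx; simp [hxa] at h2 ⊢; omega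
            · by_cases hva : v = a
              · subst hva; simp [hxa.symm] at h2 ⊢; omega
              · simp [hvx, hva] at h2 ⊢; omega
          · rw [sum_shift hxa.symm hfx, hk]
          · rintro u u' h1 - ⟨w, hw⟩ -
            exfalso
            have hux : u ≠ x := by rintro rfl; exact hiso w hw
            have := hpos u w (Finset.mem_of_mem_erase hw)
            simp [hux] at h1
            omega
        rw [← hins]
        refine key.insert_edge hxa hn1 ?_ ?_
        · have h0 : 0 < f a + (if a = a then 1 else 0) - (if a = x then 1 else 0) := by
            simp [hxa.symm]
          refine lt_of_eq_of_lt ?_ h0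
          rw [Finset.card_eq_zero, Finset.eq_empty_iff_forall_notMem]
          intro v hv
          simp only [zeroNbrs, Finset.mem_filter, Finset.mem_univ, true_and] at hv
          exact hiso v hv.1
        · intro v
          by_cases hvx : v = x
          · subst hvx; simp [hxa]; omega
          · simp [hvx]

end OneZero

section Parity

variable [DecidableEq V]

/-- The parity of the degree of `v` in `E`. -/
def par (E : Finset (Sym2 V)) (v : V) : ℕ := edgeDeg E v % 2

lemma par_eq_zero_or_one (E : Finset (Sym2 V)) (v : V) : par E v = 0 ∨ par E v = 1 :=
  Nat.mod_two_eq_zero_or_one _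

lemma edgeDeg_union {E F : Finset (Sym2 V)} (h : Disjoint E F) (v : V) :
    edgeDeg (E ∪ F) v = edgeDeg E v + edgeDeg F v := by
  rw [edgeDeg, Finset.filter_union, Finset.card_union_of_disjoint]
  · rfl
  · exact Finset.disjoint_filter_filter h

lemma edgeDeg_eq_sdiff_add {E F : Finset (Sym2 V)} (h : F ⊆ E) (v : V) :
    edgeDeg E v = edgeDeg (E \ F) v + edgeDeg F v := by
  conv_lhs => rw [← Finset.sdiff_union_of_subset h]
  exact edgeDeg_union Finset.sdiff_disjoint v

lemma edgeDeg_eq_zero {F : Finset (Sym2 V)} {v : V} (h : ∀ w, s(v, w) ∉ F) :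
    edgeDeg F v = 0 := by
  rw [edgeDeg, Finset.card_eq_zero, Finset.eq_empty_iff_forall_notMem]
  intro e he
  rw [Finset.mem_filter] at he
  obtain ⟨w, rfl⟩ := he.2
  exact h w he.1

lemma edgeDeg_singleton (a b v : V) :
    edgeDeg {s(a, b)} v = if v = a ∨ v = b then 1 else 0 := by
  have := edgeDeg_insert (E := ∅) (a := a) (b := b) (by simp) v
  rw [insert_empty_eq] at this
  rw [this]
  simp [edgeDeg]

lemma edgeDeg_starEdges {x : V} {B : Finset V} (hx : x ∉ B) (v : V) :
    edgeDeg (starEdges x B) v = if v = x then B.card else if v ∈ B then 1 else 0 := by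
  induction B using Finset.induction_on with
  | empty => simp [starEdges, edgeDeg]
  | insert b B hb ih =>
    have hxb : x ≠ b := by rintro rfl; simp at hx
    have hxB : x ∉ B := fun h => hx (Finset.mem_insert_of_mem h)
    have h1 : starEdges x (insert b B) = insert s(x, b) (starEdges x B) := by
      simp [starEdges, Finset.image_insert]
    rw [h1, edgeDeg_insert (by rwa [mem_starEdges_self]), ih hxB, Finset.card_insert_of_notMem hb]
    by_cases hv : v = x
    · simp [hv]
    · by_cases hvb : v = b
      · subst hvb; simp [hv, hb]
      · simp [hv, hvb]

lemma par_sdiff_of_notMem {E F : Finset (Sym2 V)} (hF : F ⊆ E) {v : V}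
    (h : ∀ w, s(v, w) ∉ F) : par (E \ F) v = par E v := by
  rw [par, par, edgeDeg_eq_sdiff_add hF v, edgeDeg_eq_zero h, add_zero]

lemma sdiff_ssubset_of_mem {E F : Finset (Sym2 V)} (hF : F ⊆ E) {e : Sym2 V} (he : e ∈ F) :
    E \ F ⊂ E := Finset.sdiff_ssubset hF ⟨e, he⟩

variable [Fintype V]

/-- The neighbours of `v` in `E` of even degree. -/
def evenNbrs (E : Finset (Sym2 V)) (v : V) : Finset V := zeroNbrs E (par E) v

lemma mem_evenNbrs {E : Finset (Sym2 V)} {v w : V} :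
    w ∈ evenNbrs E v ↔ s(v, w) ∈ E ∧ par E w = 0 := by
  simp [evenNbrs, zeroNbrs]

/-- `W` is a union of components of `E` whose even vertices form a triangle `T`, and whose odd
vertices have at least two even neighbours. -/
structure IsSETOn (E : Finset (Sym2 V)) (W : Set V) (T : Finset V) : Prop where
  card : T.card = 3
  subset : ∀ v ∈ T, v ∈ W
  adj : ∀ u ∈ T, ∀ v ∈ T, u ≠ v → s(u, v) ∈ E
  par_iff : ∀ v ∈ W, par E v = 0 ↔ v ∈ T
  closed : ∀ v ∈ W, ∀ w, s(v, w) ∈ E → w ∈ W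
  two_le : ∀ v ∈ W, par E v = 1 → 2 ≤ (evenNbrs E v).card

/-- The edge sets for which a small path decomposition is constructed. -/
structure Admissible (E : Finset (Sym2 V)) : Prop where
  loopless : ∀ v, s(v, v) ∉ E
  card_le : ∀ v, par E v = 0 → (evenNbrs E v).card ≤ 3
  not_set : ∀ W T, ¬ IsSETOn E W T

lemma evenNbrs_sdiff_of_isolated {E F : Finset (Sym2 V)} (hF : F ⊆ E) {v : V}
    (hv : par (E \ F) v = 0)
    (h : ∀ v w, s(v, w) ∈ F → par (E \ F) v = 0 → evenNbrs (E \ F) v = ∅) :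
    evenNbrs (E \ F) v ⊆ evenNbrs E v := by
  intro w hw
  rw [mem_evenNbrs] at hw ⊢
  have hw1 : ∀ u, s(w, u) ∉ F := by
    intro u hu
    have h1 := h w u hu hw.2
    have h2 : v ∈ evenNbrs (E \ F) w := mem_evenNbrs.2 ⟨by rw [Sym2.eq_swap]; exact hw.1, hv⟩
    rw [h1] at h2
    simp at h2
  rw [← par_sdiff_of_notMem hF hw1]
  exact ⟨(Finset.mem_sdiff.1 hw.1).1, hw.2⟩

lemma Admissible.card_evenNbrs_sdiff_le {E F : Finset (Sym2 V)} (hE : Admissible E) (hF : F ⊆ E)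
    (h : ∀ v w, s(v, w) ∈ F → par (E \ F) v = 0 → evenNbrs (E \ F) v = ∅) (v : V)
    (hv : par (E \ F) v = 0) : (evenNbrs (E \ F) v).card ≤ 3 := by
  by_cases ht : ∃ w, s(v, w) ∈ F
  · obtain ⟨w, hw⟩ := ht
    rw [h v w hw hv]
    simp
  · push Not at ht
    refine (Finset.card_le_card (evenNbrs_sdiff_of_isolated hF hv h)).trans (hE.card_le v ?_)
    rwa [← par_sdiff_of_notMem hF ht]

lemma IsSETOn.of_sdiff {E F : Finset (Sym2 V)} (hF : F ⊆ E) {W : Set V} {T : Finset V}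
    (h : IsSETOn (E \ F) W T) (hW : ∀ v ∈ W, ∀ w, s(v, w) ∉ F) : IsSETOn E W T := by
  have hpar : ∀ v ∈ W, par (E \ F) v = par E v := fun v hv => par_sdiff_of_notMem hF (hW v hv)
  have hmem : ∀ v ∈ W, ∀ w, s(v, w) ∈ E → s(v, w) ∈ E \ F := fun v hv w hw =>
    Finset.mem_sdiff.2 ⟨hw, hW v hv w⟩
  have hsub : ∀ e ∈ E \ F, e ∈ E := fun e he => (Finset.mem_sdiff.1 he).1
  refine ⟨h.card, h.subset, fun u hu v hv huv => hsub _ (h.adj u hu v hv huv), ?_, ?_, ?_⟩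
  · intro v hv
    rw [← hpar v hv]
    exact h.par_iff v hv
  · exact fun v hv w hw => h.closed v hv w (hmem v hv w hw)
  · intro v hv h1
    refine (h.two_le v hv (by rw [hpar v hv, h1])).trans (Finset.card_le_card ?_)
    intro w hw
    rw [mem_evenNbrs] at hw ⊢
    refine ⟨hsub _ hw.1, ?_⟩
    rw [← hpar w (h.closed v hv w hw.1)]
    exact hw.2

/-- Removing edges preserves admissibility if every vertex that loses an edge keeps at most one
even neighbour, and none if it becomes even itself. -/
lemma Admissible.sdiff {E F : Finset (Sym2 V)} (hE : Admissible E) (hF : F ⊆ E)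
    (h : ∀ v w, s(v, w) ∈ F → (evenNbrs (E \ F) v).card ≤ 1 ∧
      (par (E \ F) v = 0 → evenNbrs (E \ F) v = ∅)) : Admissible (E \ F) := by
  refine ⟨fun v hv => hE.loopless v (Finset.mem_sdiff.1 hv).1,
    hE.card_evenNbrs_sdiff_le hF fun v w hw => (h v w hw).2, fun W T hS => ?_⟩
  refine hE.not_set W T (hS.of_sdiff hF fun v hv w hw => ?_)
  have h1 := h v w hw
  rcases par_eq_zero_or_one (E \ F) v with h0 | h0
  · have hvT := (hS.par_iff v hv).1 h0
    obtain ⟨u, hu, huv⟩ := Finset.exists_mem_ne (by rw [hS.card]; norm_num) v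
    have : u ∈ evenNbrs (E \ F) v :=
      mem_evenNbrs.2 ⟨hS.adj v hvT u hu huv.symm, (hS.par_iff u (hS.subset u hu)).2 hu⟩
    rw [h1.2 h0] at this
    simp at this
  · have := hS.two_le v hv h0
    omega

/-- A vertex with exactly one even neighbour. -/
lemma hasDec_of_evenNbrs_eq_singleton {E : Finset (Sym2 V)} {k : ℕ} {x y : V}
    (hE : Admissible E) (ih : ∀ H ⊂ E, Admissible H → HasDec H k fun _ => 0)
    (hcard : ∀ v, par E v = 0 → (evenNbrs E v).card ≤ 2)
    (hx : par E x = 0) (hN : evenNbrs E x = {y}) : HasDec E k fun _ => 0 := by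
  have hy : s(x, y) ∈ E ∧ par E y = 0 := mem_evenNbrs.1 (by rw [hN]; simp)
  have hxy : x ≠ y := by rintro rfl; exact hE.loopless _ hy.1
  have hF : {s(x, y)} ⊆ E := by simpa using hy.1
  have hpar : ∀ v, (v = x ∨ v = y → par (E \ {s(x, y)}) v = 1) ∧
      (¬ (v = x ∨ v = y) → par (E \ {s(x, y)}) v = par E v) := by
    intro v
    have h1 := edgeDeg_eq_sdiff_add hF v
    rw [edgeDeg_singleton] at h1
    constructor
    · intro hv
      have : par E v = 0 := by rcases hv with rfl | rfl; exacts [hx, hy.2]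
      rw [if_pos hv] at h1
      unfold par at *
      omega
    · intro hv
      rw [if_neg hv] at h1
      unfold par at *
      omega
  have hmem : ∀ v w, w ∈ evenNbrs (E \ {s(x, y)}) v → w ∈ evenNbrs E v ∧ w ≠ x ∧ w ≠ y := by
    intro v w hw
    rw [mem_evenNbrs] at hw ⊢
    by_cases h : w = x ∨ w = y
    · have := (hpar w).1 h; omega
    · rw [(hpar w).2 h] at hw
      push Not at h
      exact ⟨⟨(Finset.mem_sdiff.1 hw.1).1, hw.2⟩, h⟩
  have hx0 : evenNbrs (E \ {s(x, y)}) x = ∅ := by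
    rw [Finset.eq_empty_iff_forall_notMem]
    intro w hw
    have := hmem x w hw
    rw [hN, Finset.mem_singleton] at this
    exact this.2.2 this.1
  have hadm : Admissible (E \ {s(x, y)}) := by
    refine hE.sdiff hF fun v w hvw => ?_
    have hv : v = x ∨ v = y := by
      rw [Finset.mem_singleton, Sym2.eq_iff] at hvw
      tauto
    refine ⟨?_, fun h0 => by have := (hpar v).1 hv; omega⟩
    rcases hv with rfl | rfl
    · simp [hx0]
    · have h1 : evenNbrs (E \ {s(x, v)}) v ⊆ (evenNbrs E v).erase x := fun w hw =>
        Finset.mem_erase.2 ⟨(hmem v w hw).2.1, (hmem v w hw).1⟩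
      have h2 : x ∈ evenNbrs E v := mem_evenNbrs.2 ⟨by rw [Sym2.eq_swap]; exact hy.1, hx⟩
      have h3 := Finset.card_le_card h1
      rw [Finset.card_erase_of_mem h2] at h3
      have := hcard v hy.2
      omega
  have h1 := (ih _ (sdiff_ssubset_of_mem hF (Finset.mem_singleton_self _)) hadm).parity
  have h2 : insert s(x, y) (E \ {s(x, y)}) = E := by
    rw [Finset.sdiff_singleton_eq_erase, Finset.insert_erase hy.1]
  rw [← h2]
  refine h1.insert_edge hxy (by simp) ?_ ?_
  · change (evenNbrs (E \ {s(x, y)}) x).card < par (E \ {s(x, y)}) y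
    rw [hx0, (hpar y).1 (Or.inr rfl)]
    simp
  · intro v
    have := (hpar v).1
    by_cases hv : v = y
    · have := this (Or.inr hv)
      unfold par at this
      simp [hv] at this ⊢
      omega
    · simp [hv]

/-- Two adjacent even vertices, each with one further even neighbour, these being distinct. -/
lemma hasDec_of_evenNbrs_eq_pairs {E : Finset (Sym2 V)} {k : ℕ} {s s' v t : V}
    (hE : Admissible E) (ih : ∀ H ⊂ E, Admissible H → HasDec H k fun _ => 0)
    (hcard : ∀ v, par E v = 0 → (evenNbrs E v).card ≤ 2)
    (hs : par E s = 0) (hv : par E v = 0) (hNs : evenNbrs E s = {s', v})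
    (hNv : evenNbrs E v = {s, t}) (hst : s ≠ t) (hsv : s' ≠ v) (hne : s' ≠ t) :
    HasDec E k fun _ => 0 := by
  have hs' : s(s, s') ∈ E ∧ par E s' = 0 := mem_evenNbrs.1 (by rw [hNs]; simp)
  have ht : s(v, t) ∈ E ∧ par E t = 0 := mem_evenNbrs.1 (by rw [hNv]; simp)
  have hsv' : s(s, v) ∈ E := (mem_evenNbrs.1 (by rw [hNs]; simp : v ∈ evenNbrs E s)).1
  have n1 : s ≠ s' := by rintro rfl; exact hE.loopless _ hs'.1
  have n2 : v ≠ t := by rintro rfl; exact hE.loopless _ ht.1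
  have n3 : s ≠ v := by rintro rfl; exact hE.loopless _ hsv'
  have hee : s(v, t) ≠ s(s, s') := by
    intro h
    rcases Sym2.eq_iff.1 h with ⟨h, -⟩ | ⟨h, -⟩
    · exact n3 h.symm
    · exact hsv h.symm
  set F : Finset (Sym2 V) := {s(v, t), s(s, s')} with hFdef
  have hF : F ⊆ E := by
    intro e he
    simp only [hFdef, Finset.mem_insert, Finset.mem_singleton] at he
    rcases he with rfl | rfl
    exacts [ht.1, hs'.1]
  have hdegF : ∀ u, edgeDeg F u = if u = s ∨ u = s' ∨ u = v ∨ u = t then 1 else 0 := by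
    intro u
    rw [hFdef, edgeDeg_insert (by simpa using hee), edgeDeg_singleton]
    by_cases h1 : u = s
    · subst h1; simp [n3, hst]
    · by_cases h2 : u = s'
      · subst h2; simp [hsv, hne]
      · simp [h1, h2]
  have hpar : ∀ u, (u = s ∨ u = s' ∨ u = v ∨ u = t → par (E \ F) u = 1) ∧
      (¬ (u = s ∨ u = s' ∨ u = v ∨ u = t) → par (E \ F) u = par E u) := by
    intro u
    have h1 := edgeDeg_eq_sdiff_add hF u
    rw [hdegF] at h1
    constructor
    · intro hu
      have : par E u = 0 := by rcases hu with rfl | rfl | rfl | rfl; exacts [hs, hs'.2, hv, ht.2]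
      rw [if_pos hu] at h1
      unfold par at *
      omega
    · intro hu
      rw [if_neg hu] at h1
      unfold par at *
      omega
  have hmem : ∀ u w, w ∈ evenNbrs (E \ F) u → w ∈ evenNbrs E u ∧
      ¬ (w = s ∨ w = s' ∨ w = v ∨ w = t) := by
    intro u w hw
    rw [mem_evenNbrs] at hw ⊢
    by_cases h : w = s ∨ w = s' ∨ w = v ∨ w = t
    · have := (hpar w).1 h; omega
    · rw [(hpar w).2 h] at hw
      exact ⟨⟨(Finset.mem_sdiff.1 hw.1).1, hw.2⟩, h⟩
  have hs0 : evenNbrs (E \ F) s = ∅ := by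
    rw [Finset.eq_empty_iff_forall_notMem]
    intro w hw
    have := hmem s w hw
    rw [hNs] at this
    simp only [Finset.mem_insert, Finset.mem_singleton] at this
    tauto
  have hv0 : evenNbrs (E \ F) v = ∅ := by
    rw [Finset.eq_empty_iff_forall_notMem]
    intro w hw
    have := hmem v w hw
    rw [hNv] at this
    simp only [Finset.mem_insert, Finset.mem_singleton] at this
    tauto
  have hle : ∀ u w, par E u = 0 → w ∈ evenNbrs E u → (w = s ∨ w = s' ∨ w = v ∨ w = t) →
      (evenNbrs (E \ F) u).card ≤ 1 := by
    intro u w hu hw hw'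
    have h1 : evenNbrs (E \ F) u ⊆ (evenNbrs E u).erase w := fun z hz =>
      Finset.mem_erase.2 ⟨by rintro rfl; exact (hmem u z hz).2 hw', (hmem u z hz).1⟩
    have h3 := Finset.card_le_card h1
    rw [Finset.card_erase_of_mem hw] at h3
    have := hcard u hu
    omega
  have hadm : Admissible (E \ F) := by
    refine hE.sdiff hF fun u w huw => ?_
    have hu : u = s ∨ u = s' ∨ u = v ∨ u = t := by
      simp only [hFdef, Finset.mem_insert, Finset.mem_singleton, Sym2.eq_iff] at huw
      tauto
    refine ⟨?_, fun h0 => by have := (hpar u).1 hu; omega⟩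
    rcases hu with rfl | rfl | rfl | rfl
    · simp [hs0]
    · exact hle u s hs'.2 (mem_evenNbrs.2 ⟨by rw [Sym2.eq_swap]; exact hs'.1, hs⟩) (by simp)
    · simp [hv0]
    · exact hle u v ht.2 (mem_evenNbrs.2 ⟨by rw [Sym2.eq_swap]; exact ht.1, hv⟩) (by simp)
  have h1 := (ih _ (sdiff_ssubset_of_mem hF (e := s(v, t)) (by simp [hFdef])) hadm).parity
  have h2 : insert s(v, t) (insert s(s, s') (E \ F)) = E := by
    have : insert s(v, t) (insert s(s, s') (E \ F)) = F ∪ (E \ F) := by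
      rw [hFdef, Finset.insert_union, Finset.singleton_union]
    rw [this, Finset.union_sdiff_of_subset hF]
  rw [← h2]
  have h3 : HasDec (insert s(s, s') (E \ F)) k
      fun u => if u = s' then 0 else par (E \ F) u := by
    refine h1.insert_edge n1 (by simp [hFdef]) ?_ ?_
    · change (evenNbrs (E \ F) s).card < par (E \ F) s'
      rw [hs0, (hpar s').1 (by simp)]
      simp
    · intro u
      by_cases hu : u = s'
      · have := (hpar u).1 (by simp [hu])
        unfold par at this
        simp [hu] at this ⊢
        omega
      · simp [hu, par]
  refine h3.insert_edge n2 (by simp [hFdef, hee]) ?_ ?_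
  · rw [if_neg hne.symm, (hpar t).1 (by simp), Nat.lt_one_iff, Finset.card_eq_zero,
      Finset.eq_empty_iff_forall_notMem]
    intro u hu
    simp only [zeroNbrs, Finset.mem_filter, Finset.mem_univ, true_and, Finset.mem_insert] at hu
    obtain ⟨h4 | h4, h5⟩ := hu
    · rcases Sym2.eq_iff.1 h4 with ⟨h, -⟩ | ⟨h, -⟩
      · exact n3 h.symm
      · exact hsv h.symm
    · split_ifs at h5 with h6
      · subst h6
        have : u ∈ evenNbrs E v := mem_evenNbrs.2 ⟨(Finset.mem_sdiff.1 h4).1, hs'.2⟩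
        rw [hNv] at this
        simp only [Finset.mem_insert, Finset.mem_singleton] at this
        rcases this with h | h
        exacts [n1 h.symm, hne h]
      · have : u ∈ evenNbrs (E \ F) v := mem_evenNbrs.2 ⟨h4, h5⟩
        rw [hv0] at this
        simp at this
  · intro u
    by_cases hu : u = t
    · have := (hpar u).1 (by simp [hu])
      subst hu
      simp [this, hne.symm]
    · simp [hu]

end Parity

section EvenStar

variable [DecidableEq V] [Fintype V] {E : Finset (Sym2 V)} {x : V}

lemma mem_evenNbrs_comm {v w : V} (hv : par E v = 0) (h : w ∈ evenNbrs E v) :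
    v ∈ evenNbrs E w :=
  mem_evenNbrs.2 ⟨by rw [Sym2.eq_swap]; exact (mem_evenNbrs.1 h).1, hv⟩

lemma Admissible.notMem_evenNbrs_self (hE : Admissible E) (v : V) : v ∉ evenNbrs E v :=
  fun h => hE.loopless v (mem_evenNbrs.1 h).1

lemma starEdges_evenNbrs_subset (E : Finset (Sym2 V)) (x : V) :
    starEdges x (evenNbrs E x) ⊆ E := by
  intro e he
  obtain ⟨w, hw, rfl⟩ := Finset.mem_image.1 he
  exact (mem_evenNbrs.1 hw).1

lemma par_sdiff_evenStar (hE : Admissible E) (hx : par E x = 0)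
    (hN : (evenNbrs E x).card = 3) (v : V) :
    par (E \ starEdges x (evenNbrs E x)) v =
      if v ∈ insert x (evenNbrs E x) then 1 else par E v := by
  have h1 := edgeDeg_eq_sdiff_add (starEdges_evenNbrs_subset E x) v
  rw [edgeDeg_starEdges (hE.notMem_evenNbrs_self x), hN] at h1
  by_cases hv : v = x
  · subst hv
    rw [if_pos rfl] at h1
    rw [if_pos (Finset.mem_insert_self _ _)]
    unfold par at *
    omega
  · rw [if_neg hv] at h1
    by_cases hv' : v ∈ evenNbrs E x
    · have := (mem_evenNbrs.1 hv').2
      rw [if_pos hv'] at h1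
      rw [if_pos (Finset.mem_insert_of_mem hv')]
      unfold par at *
      omega
    · rw [if_neg hv'] at h1
      rw [if_neg (by simp [hv, hv'])]
      unfold par at *
      omega

lemma evenNbrs_sdiff_evenStar_subset (hE : Admissible E) (hx : par E x = 0)
    (hN : (evenNbrs E x).card = 3) (v : V) :
    evenNbrs (E \ starEdges x (evenNbrs E x)) v ⊆
      evenNbrs E v \ insert x (evenNbrs E x) := by
  intro w hw
  rw [mem_evenNbrs, par_sdiff_evenStar hE hx hN] at hw
  rw [Finset.mem_sdiff, mem_evenNbrs]
  by_cases h : w ∈ insert x (evenNbrs E x)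
  · simp [h] at hw
  · rw [if_neg h] at hw
    exact ⟨⟨(Finset.mem_sdiff.1 hw.1).1, hw.2⟩, h⟩

lemma mem_of_mem_evenStar {v w : V} (h : s(v, w) ∈ starEdges x (evenNbrs E x)) :
    v ∈ insert x (evenNbrs E x) := by
  by_cases hv : v = x
  · simp [hv]
  · exact Finset.mem_insert_of_mem ((mem_starEdges hv).1 h).2

lemma hasDec_of_admissible_sdiff_evenStar {k : ℕ} (hE : Admissible E)
    (ih : ∀ H ⊂ E, Admissible H → HasDec H k fun _ => 0) (hx : par E x = 0)
    (hN : (evenNbrs E x).card = 3) (hadm : Admissible (E \ starEdges x (evenNbrs E x))) :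
    HasDec E k fun _ => 0 := by
  have hF := starEdges_evenNbrs_subset E x
  have hpar := par_sdiff_evenStar hE hx hN
  have hsub := evenNbrs_sdiff_evenStar_subset hE hx hN
  obtain ⟨y, hy⟩ : (evenNbrs E x).Nonempty := by
    rw [← Finset.card_pos, hN]
    norm_num
  have h1 := (ih _ (sdiff_ssubset_of_mem hF (mem_starEdges_self.2 hy)) hadm).parity
  have hone : ∀ v ∈ insert x (evenNbrs E x), par (E \ starEdges x (evenNbrs E x)) v = 1 :=
    fun v hv => by rw [hpar, if_pos hv]
  rw [← Finset.sdiff_union_of_subset hF]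
  refine h1.add_three hN (hE.notMem_evenNbrs_self x) ?_ ?_ ?_ ?_ ?_ ?_ ?_ ?_
  · intro r hr
    rw [Finset.mem_sdiff, mem_starEdges_self]
    tauto
  · exact (hone x (Finset.mem_insert_self _ _)).ge
  · exact fun r hr => (hone r (Finset.mem_insert_of_mem hr)).ge
  · intro v hv
    by_contra h0
    have : v ∈ evenNbrs (E \ starEdges x (evenNbrs E x)) x :=
      mem_evenNbrs.2 ⟨hv, by unfold par; omega⟩
    have := Finset.mem_sdiff.1 (hsub _ this)
    exact this.2 (Finset.mem_insert_of_mem this.1)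
  · intro r hr
    have hxr := mem_evenNbrs_comm hx hr
    have h2 := hE.card_le r (mem_evenNbrs.1 hr).2
    have h3 : (Finset.univ.filter fun v => s(r, v) ∈ E \ starEdges x (evenNbrs E x) ∧
        (edgeDeg (E \ starEdges x (evenNbrs E x)) v % 2 = 0 ∨ v ∈ evenNbrs E x)) ⊆
        (evenNbrs E r).erase x := by
      intro v hv
      obtain ⟨-, hv1, hv2⟩ := Finset.mem_filter.1 hv
      rw [Finset.mem_erase]
      constructor
      · rintro rfl
        rw [Finset.mem_sdiff, Sym2.eq_swap, mem_starEdges_self] at hv1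
        exact hv1.2 hr
      · rcases hv2 with hv2 | hv2
        · exact (Finset.mem_sdiff.1 (hsub r (mem_evenNbrs.2 ⟨hv1, hv2⟩))).1
        · exact mem_evenNbrs.2 ⟨(Finset.mem_sdiff.1 hv1).1, (mem_evenNbrs.1 hv2).2⟩
    have h4 := Finset.card_le_card h3
    rw [Finset.card_erase_of_mem hxr] at h4
    omega
  · exact Nat.zero_le _
  · exact fun _ _ => rfl
  · exact fun _ _ => Nat.zero_le _

/-- An even vertex with three even neighbours. -/
lemma hasDec_of_card_evenNbrs_eq_three {k : ℕ} (hE : Admissible E)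
    (ih : ∀ H ⊂ E, Admissible H → HasDec H k fun _ => 0) (hx : par E x = 0)
    (hN : (evenNbrs E x).card = 3) : HasDec E k fun _ => 0 := by
  have hF := starEdges_evenNbrs_subset E x
  by_cases hadm : Admissible (E \ starEdges x (evenNbrs E x))
  · exact hasDec_of_admissible_sdiff_evenStar hE ih hx hN hadm
  have hpar := par_sdiff_evenStar hE hx hN
  have hsub := evenNbrs_sdiff_evenStar_subset hE hx hN
  have hset : ∃ W T, IsSETOn (E \ starEdges x (evenNbrs E x)) W T := by
    by_contra hcon
    push Not at hcon
    refine hadm ⟨fun v hv => hE.loopless v (Finset.mem_sdiff.1 hv).1,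
      hE.card_evenNbrs_sdiff_le hF fun v w hw h0 => ?_, hcon⟩
    rw [hpar, if_pos (mem_of_mem_evenStar hw)] at h0
    omega
  obtain ⟨W, T, hS⟩ := hset
  have htouch : ∃ r ∈ W, ∃ w, s(r, w) ∈ starEdges x (evenNbrs E x) := by
    by_contra hcon
    push Not at hcon
    exact hE.not_set W T (hS.of_sdiff hF hcon)
  obtain ⟨r, hrW, w, hrw⟩ := htouch
  have hr := mem_of_mem_evenStar hrw
  have hr1 : par (E \ starEdges x (evenNbrs E x)) r = 1 := by rw [hpar, if_pos hr]
  obtain ⟨p, hp, q, hq, hpq⟩ := Finset.one_lt_card.1 (hS.two_le r hrW hr1)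
  have hrT : r ∉ T := fun h => by
    rw [← hS.par_iff r hrW] at h
    omega
  have hmemT : ∀ v ∈ evenNbrs (E \ starEdges x (evenNbrs E x)) r, v ∈ T := by
    intro v hv
    rw [mem_evenNbrs] at hv
    exact (hS.par_iff v (hS.closed r hrW v hv.1)).1 hv.2
  have hr0 : par E r = 0 := by
    rcases Finset.mem_insert.1 hr with h | h
    · rw [h, hx]
    · exact (mem_evenNbrs.1 h).2
  have hpT := hmemT p hp
  have hqT := hmemT q hq
  have hpN := (Finset.mem_sdiff.1 (hsub r hp)).1
  have hqN := (Finset.mem_sdiff.1 (hsub r hq)).1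
  have hTN : ∀ u ∈ T, ∀ v ∈ T, u ≠ v → v ∈ evenNbrs E u := fun u hu v hv huv =>
    (Finset.mem_sdiff.1 (hsub u (mem_evenNbrs.2
      ⟨hS.adj u hu v hv huv, (hS.par_iff v (hS.subset v hv)).2 hv⟩))).1
  obtain ⟨o, hoT, hop, hoq⟩ : ∃ o ∈ T, o ≠ p ∧ o ≠ q := by
    obtain ⟨o, ho⟩ : ((T.erase p).erase q).Nonempty := by
      rw [← Finset.card_pos, Finset.card_erase_of_mem (Finset.mem_erase.2 ⟨hpq.symm, hqT⟩),
        Finset.card_erase_of_mem hpT, hS.card]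
      norm_num
    simp only [Finset.mem_erase] at ho
    exact ⟨o, ho.2.2, ho.2.1, ho.1⟩
  have hp0 : par E p = 0 := (mem_evenNbrs.1 hpN).2
  have hNp : {q, o, r} = evenNbrs E p := by
    refine Finset.eq_of_subset_of_card_le ?_ ((hE.card_le p hp0).trans ?_)
    · intro v hv
      simp only [Finset.mem_insert, Finset.mem_singleton] at hv
      rcases hv with rfl | rfl | rfl
      · exact hTN p hpT v hqT hpq
      · exact hTN p hpT v hoT hop.symm
      · exact mem_evenNbrs_comm hr0 hpN
    · rw [Finset.card_eq_three.2 ⟨q, o, r, hoq.symm, ?_, ?_, rfl⟩]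
      · rintro rfl; exact hrT hqT
      · rintro rfl; exact hrT hoT
  have hNp3 : (evenNbrs E p).card = 3 := by
    rw [← hNp, Finset.card_eq_three.2 ⟨q, o, r, hoq.symm, ?_, ?_, rfl⟩]
    · rintro rfl; exact hrT hqT
    · rintro rfl; exact hrT hoT
  refine hasDec_of_admissible_sdiff_evenStar hE ih hp0 hNp3
    (hE.sdiff (starEdges_evenNbrs_subset E p) fun v w hvw => ?_)
  have hv := mem_of_mem_evenStar hvw
  refine ⟨?_, fun h0 => ?_⟩
  · have hsub' := Finset.card_le_card (evenNbrs_sdiff_evenStar_subset hE hp0 hNp3 v)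
    have key : ∀ u₁ u₂, u₁ ≠ u₂ → par E v = 0 → u₁ ∈ evenNbrs E v → u₂ ∈ evenNbrs E v →
        u₁ ∈ insert p (evenNbrs E p) → u₂ ∈ insert p (evenNbrs E p) →
        (evenNbrs E v \ insert p (evenNbrs E p)).card ≤ 1 := by
      intro u₁ u₂ hne hv0 h1 h2 h3 h4
      have h5 : evenNbrs E v \ insert p (evenNbrs E p) ⊆ ((evenNbrs E v).erase u₁).erase u₂ := by
        intro z hz
        rw [Finset.mem_sdiff] at hz
        refine Finset.mem_erase.2 ⟨?_, Finset.mem_erase.2 ⟨?_, hz.1⟩⟩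
        · rintro rfl; exact hz.2 h4
        · rintro rfl; exact hz.2 h3
      have h6 := Finset.card_le_card h5
      rw [Finset.card_erase_of_mem (Finset.mem_erase.2 ⟨hne.symm, h2⟩),
        Finset.card_erase_of_mem h1] at h6
      have := hE.card_le v hv0
      omega
    refine hsub'.trans ?_
    have hpar0 : ∀ v ∈ T, par E v = 0 := by
      intro v hv
      by_cases h : v = p
      · rw [h, hp0]
      · exact (mem_evenNbrs.1 (hTN p hpT v hv (Ne.symm h))).2
    rw [← hNp] at hv key ⊢
    simp only [Finset.mem_insert, Finset.mem_singleton] at hv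
    rcases hv with rfl | rfl | rfl | rfl
    · exact key q o hoq.symm hp0 (hTN _ hpT _ hqT hpq) (hTN _ hpT _ hoT hop.symm)
        (by simp) (by simp)
    · exact key p o hop.symm (hpar0 _ hqT) (hTN _ hqT _ hpT hpq.symm) (hTN _ hqT _ hoT hoq.symm)
        (by simp) (by simp)
    · exact key p q hpq (hpar0 _ hoT) (hTN _ hoT _ hpT hop) (hTN _ hoT _ hqT hoq)
        (by simp) (by simp)
    · exact key p q hpq hr0 hpN hqN (by simp) (by simp)
  · rw [par_sdiff_evenStar hE hp0 hNp3, if_pos hv] at h0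
    omega

end EvenStar

section OddStar

variable [DecidableEq V]

lemma edgeDeg_eq_one {F : Finset (Sym2 V)} {v w : V} (h : s(v, w) ∈ F)
    (hu : ∀ w', s(v, w') ∈ F → w' = w) : edgeDeg F v = 1 := by
  rw [edgeDeg, Finset.card_eq_one]
  refine ⟨s(v, w), Finset.eq_singleton_iff_unique_mem.2 ⟨by simp [h], fun e he => ?_⟩⟩
  rw [Finset.mem_filter] at he
  obtain ⟨w', rfl⟩ := he.2
  rw [hu w' he.1]

variable [Fintype V]

/-- A vertex together with its even neighbours. -/
def cls (E : Finset (Sym2 V)) (v : V) : Finset V := insert v (evenNbrs E v)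

lemma self_mem_cls (E : Finset (Sym2 V)) (v : V) : v ∈ cls E v := Finset.mem_insert_self _ _

/-- Every even vertex is isolated among the even vertices or lies in an isolated triangle. -/
structure IsTriangular (E : Finset (Sym2 V)) : Prop where
  card : ∀ v, par E v = 0 → evenNbrs E v = ∅ ∨ (evenNbrs E v).card = 2
  cls_eq : ∀ v, par E v = 0 → ∀ w ∈ evenNbrs E v, cls E w = cls E v

lemma IsTriangular.card_le {E : Finset (Sym2 V)} (hT : IsTriangular E) {v : V}
    (hv : par E v = 0) : (evenNbrs E v).card ≤ 2 := by
  rcases hT.card v hv with h | h <;> simp [h]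

lemma hasDec_or_isTriangular {E : Finset (Sym2 V)} {k : ℕ} (hE : Admissible E)
    (ih : ∀ H ⊂ E, Admissible H → HasDec H k fun _ => 0) :
    HasDec E k (fun _ => 0) ∨ IsTriangular E := by
  by_contra hcon
  rw [not_or] at hcon
  obtain ⟨hD, hT⟩ := hcon
  have hcard : ∀ v, par E v = 0 → (evenNbrs E v).card ≤ 2 := by
    intro v hv
    have h1 := hE.card_le v hv
    have h2 : (evenNbrs E v).card ≠ 3 :=
      fun h => hD (hasDec_of_card_evenNbrs_eq_three hE ih hv h)
    omega
  have hcard' : ∀ v, par E v = 0 → evenNbrs E v = ∅ ∨ (evenNbrs E v).card = 2 := by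
    intro v hv
    have h1 := hcard v hv
    have h2 : (evenNbrs E v).card ≠ 1 := fun h => by
      obtain ⟨y, hy⟩ := Finset.card_eq_one.1 h
      exact hD (hasDec_of_evenNbrs_eq_singleton hE ih hcard hv hy)
    rw [← Finset.card_eq_zero]
    omega
  refine hT ⟨hcard', fun v hv w hw => ?_⟩
  have hvw := mem_evenNbrs_comm hv hw
  have hw0 := (mem_evenNbrs.1 hw).2
  have h2 := (hcard' v hv).resolve_left (Finset.ne_empty_of_mem hw)
  have h2' := (hcard' w hw0).resolve_left (Finset.ne_empty_of_mem hvw)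
  obtain ⟨t, ht⟩ : ∃ t, (evenNbrs E v).erase w = {t} := by
    rw [← Finset.card_eq_one, Finset.card_erase_of_mem hw, h2]
  obtain ⟨t', ht'⟩ : ∃ t', (evenNbrs E w).erase v = {t'} := by
    rw [← Finset.card_eq_one, Finset.card_erase_of_mem hvw, h2']
  have e1 : evenNbrs E v = {w, t} := by rw [← ht, Finset.insert_erase hw]
  have e2 : evenNbrs E w = {t', v} := by
    rw [Finset.pair_comm, ← ht', Finset.insert_erase hvw]
  have n1 : t ≠ w := (Finset.mem_erase.1 (ht ▸ Finset.mem_singleton_self t)).1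
  have n2 : t' ≠ v := (Finset.mem_erase.1 (ht' ▸ Finset.mem_singleton_self t')).1
  obtain rfl : t' = t := by
    by_contra hne
    exact hD (hasDec_of_evenNbrs_eq_pairs hE ih hcard hw0 hv e2 e1 n1.symm n2 hne)
  rw [cls, cls, e1, e2]
  ext z
  simp only [Finset.mem_insert, Finset.mem_singleton]
  tauto

set_option maxHeartbeats 2000000 in
/-- An odd vertex `x` and a choice `B` of even neighbours of `x`, together with a set `M` of edges
inside the even triangles meeting `B`. -/
lemma hasDec_of_oddStar {E : Finset (Sym2 V)} {k : ℕ} {x : V} {B : Finset V}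
    {M : Finset (V × V)} (hE : Admissible E)
    (ih : ∀ H ⊂ E, Admissible H → HasDec H k fun _ => 0) (hT : IsTriangular E)
    (hx : par E x = 1) (hB : B ⊆ evenNbrs E x) (hB0 : B.Nonempty)
    (hM0 : ∀ p ∈ M, par E p.1 = 0) (hM : ∀ p ∈ M, p.2 ∈ evenNbrs E p.1)
    (hMB : ∀ p ∈ M, p.1 ∉ B) (hM2 : ∀ p ∈ M, p.2 ∉ evenNbrs E x)
    (hMN : ∀ p ∈ M, evenNbrs E p.1 ⊆ insert p.2 B)
    (hMM : ∀ p ∈ M, ∀ q ∈ M, cls E p.1 = cls E q.1 → p = q)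
    (hNx : evenNbrs E x ⊆ B ∪ M.image Prod.fst)
    (hBN : ∀ v ∈ B, (evenNbrs E v \ (B ∪ (M.image Prod.fst ∪ M.image Prod.snd))).card ≤ 1)
    (heven : Even B.card ∨ ∀ p ∈ M, p.1 ∉ evenNbrs E x)
    (hfin : ∀ A ⊆ B, (B \ A).card ≤ A.card → B \ A = ∅ ∨
      (B \ A).card + 2 ≤ (1 + B.card) % 2 + A.card ∨
      ∃ r ∈ B \ A, (evenNbrs E r \ (B \ A ∪ M.image Prod.fst)).card ≤ 1) :
    HasDec E k fun _ => 0 := by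
  have hxB : x ∉ B := fun h => hE.notMem_evenNbrs_self x (hB h)
  have hB0' : ∀ v ∈ B, par E v = 0 := fun v hv => (mem_evenNbrs.1 (hB hv)).2
  have hM0' : ∀ p ∈ M, par E p.2 = 0 := fun p hp => (mem_evenNbrs.1 (hM p hp)).2
  have hMne : ∀ p ∈ M, p.1 ≠ p.2 := fun p hp h =>
    hE.notMem_evenNbrs_self p.1 (by simpa [← h] using hM p hp)
  have hcls2 : ∀ p ∈ M, cls E p.2 = cls E p.1 := fun p hp => hT.cls_eq p.1 (hM0 p hp) _ (hM p hp)
  have hx1 : ∀ p ∈ M, p.1 ≠ x := fun p hp h => by have := hM0 p hp; rw [h] at this; omega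
  have hx2 : ∀ p ∈ M, p.2 ≠ x := fun p hp h => by have := hM0' p hp; rw [h] at this; omega
  have hMB2 : ∀ p ∈ M, p.2 ∉ B := fun p hp h => hM2 p hp (hB h)
  have h11 : ∀ p ∈ M, ∀ q ∈ M, p.1 = q.1 → p = q := fun p hp q hq h => hMM p hp q hq (by rw [h])
  have h12 : ∀ p ∈ M, ∀ q ∈ M, p.1 ≠ q.2 := fun p hp q hq h => by
    obtain rfl := hMM p hp q hq (by rw [h, hcls2 q hq])
    exact hMne p hp h
  have h22 : ∀ p ∈ M, ∀ q ∈ M, p.2 = q.2 → p = q := fun p hp q hq h =>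
    hMM p hp q hq (by rw [← hcls2 p hp, ← hcls2 q hq, h])
  set Me : Finset (Sym2 V) := M.image fun p => s(p.1, p.2) with hMe
  have hmemMe : ∀ v w, s(v, w) ∈ Me → ∃ p ∈ M, (v = p.1 ∧ w = p.2) ∨ (v = p.2 ∧ w = p.1) := by
    intro v w h
    obtain ⟨p, hp, h⟩ := Finset.mem_image.1 h
    refine ⟨p, hp, ?_⟩
    rw [Sym2.eq_iff] at h
    tauto
  have hxMe : ∀ w, s(x, w) ∉ Me := fun w h => by
    obtain ⟨p, hp, ⟨h, -⟩ | ⟨h, -⟩⟩ := hmemMe x w h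
    exacts [hx1 p hp h.symm, hx2 p hp h.symm]
  have hBMe : ∀ v ∈ B, ∀ w, s(v, w) ∉ Me := fun v hv w h => by
    obtain ⟨p, hp, ⟨rfl, -⟩ | ⟨rfl, -⟩⟩ := hmemMe v w h
    exacts [hMB p hp hv, hMB2 p hp hv]
  set F := starEdges x B ∪ Me with hFdef
  have hF : F ⊆ E := by
    intro e he
    rcases Finset.mem_union.1 he with h | h
    · obtain ⟨b, hb, rfl⟩ := Finset.mem_image.1 h
      exact (mem_evenNbrs.1 (hB hb)).1
    · obtain ⟨p, hp, rfl⟩ := Finset.mem_image.1 h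
      exact (mem_evenNbrs.1 (hM p hp)).1
  set U := B ∪ (M.image Prod.fst ∪ M.image Prod.snd) with hU
  have hmemU : ∀ v, v ∈ U ↔ v ∈ B ∨ ∃ p ∈ M, v = p.1 ∨ v = p.2 := by
    intro v
    simp only [hU, Finset.mem_union, Finset.mem_image]
    constructor
    · rintro (h | ⟨p, hp, rfl⟩ | ⟨p, hp, rfl⟩)
      exacts [Or.inl h, Or.inr ⟨p, hp, Or.inl rfl⟩, Or.inr ⟨p, hp, Or.inr rfl⟩]
    · rintro (h | ⟨p, hp, rfl | rfl⟩)
      exacts [Or.inl h, Or.inr (Or.inl ⟨p, hp, rfl⟩), Or.inr (Or.inr ⟨p, hp, rfl⟩)]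
  have hU0 : ∀ v ∈ U, par E v = 0 := by
    intro v hv
    rcases (hmemU v).1 hv with h | ⟨p, hp, rfl | rfl⟩
    exacts [hB0' v h, hM0 p hp, hM0' p hp]
  have hxU : x ∉ U := fun h => by have := hU0 x h; omega
  have hparU : ∀ v ∈ U, par (E \ F) v = 1 := by
    intro v hv
    have h1 := edgeDeg_eq_sdiff_add hF v
    have h0 := hU0 v hv
    have hvx : v ≠ x := by rintro rfl; exact hxU hv
    have h2 : edgeDeg F v = 1 := by
      rcases (hmemU v).1 hv with h | ⟨p, hp, rfl | rfl⟩
      · refine edgeDeg_eq_one (w := x) ?_ fun w hw => ?_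
        · exact Finset.mem_union_left _ ((mem_starEdges hvx).2 ⟨rfl, h⟩)
        · rcases Finset.mem_union.1 hw with hw | hw
          · exact ((mem_starEdges hvx).1 hw).1
          · exact absurd hw (hBMe v h w)
      · refine edgeDeg_eq_one (w := p.2) ?_ fun w hw => ?_
        · exact Finset.mem_union_right _ (Finset.mem_image_of_mem _ hp)
        · rcases Finset.mem_union.1 hw with hw | hw
          · exact absurd ((mem_starEdges hvx).1 hw).2 (hMB p hp)
          · obtain ⟨q, hq, ⟨h, rfl⟩ | ⟨h, -⟩⟩ := hmemMe _ w hw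
            · rw [h11 p hp q hq h]
            · exact absurd h (h12 p hp q hq)
      · refine edgeDeg_eq_one (w := p.1) ?_ fun w hw => ?_
        · rw [Sym2.eq_swap]
          exact Finset.mem_union_right _ (Finset.mem_image_of_mem _ hp)
        · rcases Finset.mem_union.1 hw with hw | hw
          · exact absurd ((mem_starEdges hvx).1 hw).2 (hMB2 p hp)
          · obtain ⟨q, hq, ⟨h, -⟩ | ⟨h, rfl⟩⟩ := hmemMe _ w hw
            · exact absurd h.symm (h12 q hq p hp)
            · rw [h22 p hp q hq h]
    unfold par at *
    omega
  have hparx : par (E \ F) x = (1 + B.card) % 2 := by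
    have h1 := edgeDeg_eq_sdiff_add hF x
    have hdisj : Disjoint (starEdges x B) Me := by
      rw [Finset.disjoint_left]
      intro e he
      obtain ⟨b, -, rfl⟩ := Finset.mem_image.1 he
      exact hxMe b
    rw [hFdef, edgeDeg_union hdisj, edgeDeg_starEdges hxB, if_pos rfl, edgeDeg_eq_zero hxMe,
      ← hFdef] at h1
    unfold par at *
    omega
  have hparo : ∀ v, v ≠ x → v ∉ U → par (E \ F) v = par E v := by
    intro v hvx hvU
    refine par_sdiff_of_notMem hF fun w hw => hvU ((hmemU v).2 ?_)
    rcases Finset.mem_union.1 hw with hw | hw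
    · exact Or.inl ((mem_starEdges hvx).1 hw).2
    · obtain ⟨p, hp, h⟩ := hmemMe v w hw
      exact Or.inr ⟨p, hp, by tauto⟩
  have hsubE : ∀ e ∈ E \ F, e ∈ E := fun e he => (Finset.mem_sdiff.1 he).1
  have hzero : ∀ u v, s(u, v) ∈ E \ F → par (E \ F) v = 0 → v = x ∨ v ∈ evenNbrs E u \ U := by
    intro u v huv h0
    by_cases hvx : v = x
    · exact Or.inl hvx
    · have hvU : v ∉ U := fun h => by have := hparU v h; omega
      rw [hparo v hvx hvU] at h0
      exact Or.inr (Finset.mem_sdiff.2 ⟨mem_evenNbrs.2 ⟨hsubE _ huv, h0⟩, hvU⟩)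
  have hNxU : evenNbrs E x ⊆ U := by
    intro v hv
    rw [hU, ← Finset.union_assoc]
    exact Finset.mem_union_left _ (hNx hv)
  have hx0 : ∀ v, s(x, v) ∈ E \ F → par (E \ F) v ≠ 0 := by
    intro v hv h0
    rcases hzero x v hv h0 with rfl | h
    · exact hE.loopless _ (hsubE _ hv)
    · exact (Finset.mem_sdiff.1 h).2 (hNxU (Finset.mem_sdiff.1 h).1)
  have hMU : ∀ p ∈ M, ∀ v, v ∈ evenNbrs E p.1 → v ∈ U := by
    intro p hp v hv
    refine (hmemU v).2 ?_
    rcases Finset.mem_insert.1 (hMN p hp hv) with h | h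
    · exact Or.inr ⟨p, hp, Or.inr h⟩
    · exact Or.inl h
  have hM2U : ∀ p ∈ M, ∀ v, v ∈ evenNbrs E p.2 → v ∈ U := by
    intro p hp v hv
    have : v ∈ cls E p.1 := by
      rw [← hcls2 p hp]
      exact Finset.mem_insert_of_mem hv
    rcases Finset.mem_insert.1 this with rfl | h
    · exact (hmemU _).2 (Or.inr ⟨p, hp, Or.inl rfl⟩)
    · exact hMU p hp v h
  have hBx : ∀ b ∈ B, s(b, x) ∉ E \ F := fun b hb h => by
    refine (Finset.mem_sdiff.1 h).2 (Finset.mem_union_left _ ?_)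
    rw [Sym2.eq_swap]
    exact mem_starEdges_self.2 hb
  have hadm : Admissible (E \ F) := by
    refine hE.sdiff hF fun v w hvw => ?_
    by_cases hvx : v = x
    · subst hvx
      have : evenNbrs (E \ F) v = ∅ := by
        rw [Finset.eq_empty_iff_forall_notMem]
        intro u hu
        rw [mem_evenNbrs] at hu
        exact hx0 u hu.1 hu.2
      simp [this]
    · have hvU : v ∈ U := by
        refine (hmemU v).2 ?_
        rcases Finset.mem_union.1 hvw with hw | hw
        · exact Or.inl ((mem_starEdges hvx).1 hw).2
        · obtain ⟨p, hp, h⟩ := hmemMe v w hw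
          exact Or.inr ⟨p, hp, by tauto⟩
      refine ⟨?_, fun h => by have := hparU v hvU; omega⟩
      have hone : (∀ u ∈ evenNbrs E v, u ∈ U) → (evenNbrs (E \ F) v).card ≤ 1 := by
        intro h
        refine (Finset.card_le_card (t := {x}) fun u hu => ?_).trans (by simp)
        rw [mem_evenNbrs] at hu
        rcases hzero v u hu.1 hu.2 with h' | h'
        · simp [h']
        · exact absurd (h u (Finset.mem_sdiff.1 h').1) (Finset.mem_sdiff.1 h').2
      rcases (hmemU v).1 hvU with h | ⟨p, hp, rfl | rfl⟩
      · refine (Finset.card_le_card fun u hu => ?_).trans (hBN v h)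
        rw [mem_evenNbrs] at hu
        refine (hzero v u hu.1 hu.2).resolve_left ?_
        rintro rfl
        exact hBx v h hu.1
      · exact hone (hMU p hp)
      · exact hone (hM2U p hp)
  obtain ⟨b₀, hb₀⟩ := hB0
  have h1 : HasDec (E \ F) k (par (E \ F)) := (ih _ (sdiff_ssubset_of_mem hF
    (Finset.mem_union_left _ (mem_starEdges_self.2 hb₀))) hadm).parity
  have h2 := h1.add_matching M hMne
    (fun p hp h => (Finset.mem_sdiff.1 h).2
      (Finset.mem_union_right _ (Finset.mem_image_of_mem _ hp)))
    (fun p hp => (hparU _ ((hmemU _).2 (Or.inr ⟨p, hp, Or.inr rfl⟩))).ge) ?_ ?_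
  rotate_left
  · intro p hp v hv
    by_contra h0
    rcases hzero p.1 v hv (by omega) with rfl | h
    · rcases heven with h | h
      · rw [Nat.even_iff] at h
        omega
      · refine h p hp (mem_evenNbrs.2 ⟨?_, hM0 p hp⟩)
        rw [Sym2.eq_swap]
        exact hsubE _ hv
    · rw [Finset.mem_sdiff] at h
      exact h.2 (hMU p hp v h.1)
  · intro p hp q hq hpq
    refine ⟨fun h => hpq ?_, fun h => hpq (h11 p hp q hq h), h12 p hp q hq,
      fun h => hpq (h22 p hp q hq h)⟩
    refine hMM p hp q hq ?_
    rw [← hcls2 q hq]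
    exact (hT.cls_eq p.1 (hM0 p hp) q.2 (mem_evenNbrs.2 ⟨hsubE _ h, hM0' q hq⟩)).symm
  rw [← hMe] at h2
  have hm2 : ∀ v, v ∈ M.image Prod.snd ↔ ∃ p ∈ M, v = p.2 := by
    intro v
    rw [Finset.mem_image]
    exact ⟨fun ⟨p, hp, h⟩ => ⟨p, hp, h.symm⟩, fun ⟨p, hp, h⟩ => ⟨p, hp, h.symm⟩⟩
  have hB2 : ∀ b ∈ B, b ∉ M.image Prod.snd := fun b hb h => by
    obtain ⟨p, hp, rfl⟩ := (hm2 b).1 h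
    exact hMB2 p hp hb
  have hx2' : x ∉ M.image Prod.snd := fun h => by
    obtain ⟨p, hp, h⟩ := (hm2 x).1 h
    exact hx2 p hp h.symm
  have hstar := h2.exists_half_star (a := x) (B := B) hxB ?_ ?_ ?_
  rotate_left
  · intro b hb h
    rcases Finset.mem_union.1 h with h | h
    · rw [Sym2.eq_swap] at h
      exact hBx b hb h
    · exact hxMe b h
  · intro b hb
    rw [if_neg (hB2 b hb)]
    exact (hparU b ((hmemU b).2 (Or.inl hb))).ge
  · intro v hv
    rcases Finset.mem_union.1 hv with h | h
    · rw [if_neg]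
      · exact Nat.one_le_iff_ne_zero.2 (hx0 v h)
      · intro hv2
        obtain ⟨p, hp, rfl⟩ := (hm2 v).1 hv2
        exact hM2 p hp (mem_evenNbrs.2 ⟨hsubE _ h, hM0' p hp⟩)
    · exact absurd h (hxMe v)
  obtain ⟨A, hAB, hAcard, h3⟩ := hstar
  have hcardB : (B \ A).card + A.card = B.card := Finset.card_sdiff_add_card_eq_card hAB
  set E₁ := E \ F ∪ Me ∪ starEdges x A with hE₁
  set g : V → ℕ := fun v => if v = x then
      (if x ∈ M.image Prod.snd then par (E \ F) x - 1 else par (E \ F) x) + A.card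
    else if v ∈ A then (if v ∈ M.image Prod.snd then par (E \ F) v - 1 else par (E \ F) v) - 1
    else if v ∈ M.image Prod.snd then par (E \ F) v - 1 else par (E \ F) v with hg
  have hgx : g x = (1 + B.card) % 2 + A.card := by
    simp only [hg, if_pos, if_neg hx2', hparx]
  have hgne : ∀ v, v ≠ x → g v = 0 → par E v = 0 ∧ v ∉ B \ A ∪ M.image Prod.fst := by
    intro v hvx h0
    simp only [hg, if_neg hvx] at h0
    constructor
    · by_contra hv0
      have hvU : v ∉ U := fun h => hv0 (hU0 v h)
      have hvA : v ∉ A := fun h => hvU ((hmemU v).2 (Or.inl (hAB h)))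
      have hv2 : v ∉ M.image Prod.snd := fun h => by
        obtain ⟨p, hp, rfl⟩ := (hm2 v).1 h
        exact hvU ((hmemU _).2 (Or.inr ⟨p, hp, Or.inr rfl⟩))
      rw [if_neg hvA, if_neg hv2, hparo v hvx hvU] at h0
      exact hv0 h0
    · rw [Finset.mem_union, Finset.mem_sdiff, Finset.mem_image]
      rintro (⟨hvB, hvA⟩ | ⟨p, hp, rfl⟩)
      · rw [if_neg hvA, if_neg (hB2 v hvB), hparU v ((hmemU v).2 (Or.inl hvB))] at h0
        omega
      · have hv2 : p.1 ∉ M.image Prod.snd := fun h => by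
          obtain ⟨q, hq, h⟩ := (hm2 _).1 h
          exact h12 p hp q hq h
        rw [if_neg (fun h => hMB p hp (hAB h)), if_neg hv2,
          hparU _ ((hmemU _).2 (Or.inr ⟨p, hp, Or.inl rfl⟩))] at h0
        omega
  have hz : ∀ (E' : Finset (Sym2 V)) (g' : V → ℕ) (r : V), (∀ w, s(r, w) ∈ E' → s(r, w) ∈ E₁) →
      (∀ v, v ≠ x → g' v = g v) → r ∈ B \ A →
      zeroNbrs E' g' r ⊆ evenNbrs E r \ (B \ A ∪ M.image Prod.fst) := by
    intro E' g' r hE' hg' hr v hv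
    simp only [zeroNbrs, Finset.mem_filter, Finset.mem_univ, true_and] at hv
    rw [Finset.mem_sdiff] at hr
    have hv1 := hE' v hv.1
    have hrx : r ≠ x := by rintro rfl; exact hxB hr.1
    have hrv : s(r, v) ∈ E \ F := by
      rw [hE₁, Finset.mem_union, Finset.mem_union] at hv1
      rcases hv1 with (h | h) | h
      · exact h
      · exact absurd h (hBMe r hr.1 v)
      · exact absurd ((mem_starEdges hrx).1 h).2 hr.2
    have hvx : v ≠ x := by rintro rfl; exact hBx r hr.1 hrv
    obtain ⟨h4, h5⟩ := hgne v hvx (by rw [← hg' v hvx, hv.2])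
    exact Finset.mem_sdiff.2 ⟨mem_evenNbrs.2 ⟨hsubE _ hrv, h4⟩, h5⟩
  have hxR : x ∉ B \ A := fun h => hxB (Finset.mem_sdiff.1 h).1
  have hER : ∀ r ∈ B \ A, s(x, r) ∉ E₁ := by
    intro r hr h
    rw [Finset.mem_sdiff] at hr
    rw [hE₁, Finset.mem_union, Finset.mem_union] at h
    rcases h with (h | h) | h
    · rw [Sym2.eq_swap] at h
      exact hBx r hr.1 h
    · exact hxMe r h
    · exact hr.2 (mem_starEdges_self.1 h)
  have hEeq : E₁ ∪ starEdges x (B \ A) = E := by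
    have h4 : starEdges x A ∪ starEdges x (B \ A) = starEdges x B := by
      rw [starEdges, starEdges, ← Finset.image_union, Finset.union_sdiff_of_subset hAB, starEdges]
    rw [hE₁, Finset.union_assoc, h4, Finset.union_assoc, Finset.union_comm Me, ← hFdef,
      Finset.sdiff_union_of_subset hF]
  have hle2 : ∀ r ∈ B \ A, (evenNbrs E r \ (B \ A ∪ M.image Prod.fst)).card ≤ 2 := fun r hr =>
    (Finset.card_le_card Finset.sdiff_subset).trans
      (hT.card_le (hB0' r (Finset.mem_sdiff.1 hr).1))
  rcases hfin A hAB hAcard with h | h | ⟨r, hr, hr1⟩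
  · rw [← hEeq, h]
    simpa [starEdges] using h3.mono fun v => Nat.zero_le _
  · rw [← hEeq]
    refine (h3.add_star 2 (B \ A) hxR hER (by rw [hgx]; omega) fun r hr => ?_).mono
      fun v => Nat.zero_le _
    exact (Finset.card_le_card (hz _ _ r (fun _ h => h) (fun _ _ => rfl) hr)).trans (hle2 r hr)
  · have hcr : ((B \ A).erase r).card + 1 = (B \ A).card := Finset.card_erase_add_one hr
    have h4 := h3.add_star 2 ((B \ A).erase r) (fun h => hxR (Finset.mem_of_mem_erase h))
      (fun q hq => hER q (Finset.mem_of_mem_erase hq)) (by rw [hgx]; omega) fun q hq =>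
        (Finset.card_le_card (hz _ _ q (fun _ h => h) (fun _ _ => rfl)
          (Finset.mem_of_mem_erase hq))).trans (hle2 q (Finset.mem_of_mem_erase hq))
    have hrx : r ≠ x := by rintro rfl; exact hxR hr
    have hE2 : E₁ ∪ starEdges x ((B \ A).erase r) ∪ starEdges x {r} = E := by
      rw [Finset.union_assoc, starEdges, starEdges, ← Finset.image_union,
        Finset.union_comm _ {r}, ← Finset.insert_eq, Finset.insert_erase hr]
      exact hEeq
    rw [← hE2]
    refine (h4.add_star 1 {r} (by simpa using hrx.symm) ?_ ?_ ?_).mono fun v => Nat.zero_le _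
    · intro q hq h
      rw [Finset.mem_singleton] at hq
      subst hq
      rcases Finset.mem_union.1 h with h | h
      · exact hER q hr h
      · exact Finset.notMem_erase _ _ (mem_starEdges_self.1 h)
    · rw [if_pos rfl, hgx, Finset.card_singleton]
      omega
    · intro q hq
      rw [Finset.mem_singleton] at hq
      subst hq
      refine (Finset.card_le_card (hz _ _ q (fun w h => ?_) (fun v hv => if_neg hv) hr)).trans hr1
      rcases Finset.mem_union.1 h with h | h
      · exact h
      · exact absurd ((mem_starEdges hrx).1 h).2 (Finset.notMem_erase _ _)

end OddStar

section Attachment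

variable [DecidableEq V] [Fintype V] {E : Finset (Sym2 V)}

lemma IsTriangular.cls_eq_of_mem (hT : IsTriangular E) {v w : V} (hv : par E v = 0)
    (hw : w ∈ cls E v) : cls E w = cls E v := by
  rcases Finset.mem_insert.1 hw with rfl | h
  · rfl
  · exact hT.cls_eq v hv w h

lemma par_eq_zero_of_mem_cls {v w : V} (hv : par E v = 0) (hw : w ∈ cls E v) : par E w = 0 := by
  rcases Finset.mem_insert.1 hw with rfl | h
  · exact hv
  · exact (mem_evenNbrs.1 h).2

lemma mem_evenNbrs_of_cls_eq {v w : V} (h : cls E v = cls E w) (hne : w ≠ v) :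
    w ∈ evenNbrs E v :=
  (Finset.mem_insert.1 (h ▸ self_mem_cls E w : w ∈ cls E v)).resolve_left hne

lemma Admissible.card_cls (hE : Admissible E) (v : V) :
    (cls E v).card = (evenNbrs E v).card + 1 :=
  Finset.card_insert_of_notMem (hE.notMem_evenNbrs_self v)

set_option maxHeartbeats 1000000 in
/-- An odd vertex whose even neighbours are neither an even triangle nor two vertices of one. -/
lemma hasDec_of_not_attached {k : ℕ} {x : V} (hE : Admissible E)
    (ih : ∀ H ⊂ E, Admissible H → HasDec H k fun _ => 0) (hT : IsTriangular E)
    (hx : par E x = 1) (hne : (evenNbrs E x).Nonempty)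
    (hN : ∀ v ∈ evenNbrs E x, evenNbrs E x ⊆ cls E v → (evenNbrs E x).card ≤ 1) :
    HasDec E k fun _ => 0 := by
  set N := evenNbrs E x with hNdef
  have hN0 : ∀ v ∈ N, par E v = 0 := fun v hv => (mem_evenNbrs.1 hv).2
  set 𝒯 := (N.filter fun v => ¬ cls E v ⊆ N).image (cls E) with h𝒯
  have hmem𝒯 : ∀ v ∈ N, ¬ cls E v ⊆ N → cls E v ∈ 𝒯 := fun v hv h =>
    Finset.mem_image_of_mem _ (Finset.mem_filter.2 ⟨hv, h⟩)
  have hex : ∀ T, T ∈ 𝒯 → ∃ a b c, T = {a, b, c} ∧ a ≠ b ∧ a ≠ c ∧ b ≠ c ∧ c ∈ N ∧ b ∉ N ∧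
      ∀ v ∈ T, par E v = 0 ∧ cls E v = T := by
    intro T hTm
    obtain ⟨c, hc, rfl⟩ := Finset.mem_image.1 hTm
    obtain ⟨hcN, hsub⟩ := Finset.mem_filter.1 hc
    obtain ⟨b, hb, hbN⟩ := Finset.not_subset.1 hsub
    have hcb : b ≠ c := by rintro rfl; exact hbN hcN
    have hbc : b ∈ evenNbrs E c := (Finset.mem_insert.1 hb).resolve_left hcb
    have h2 := (hT.card c (hN0 c hcN)).resolve_left (Finset.ne_empty_of_mem hbc)
    obtain ⟨a, ha⟩ : ∃ a, (evenNbrs E c).erase b = {a} := by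
      rw [← Finset.card_eq_one, Finset.card_erase_of_mem hbc, h2]
    have ha' := Finset.mem_erase.1 (ha ▸ Finset.mem_singleton_self a)
    refine ⟨a, b, c, ?_, ha'.1, ?_, hcb, hcN, hbN, fun v hv =>
      ⟨par_eq_zero_of_mem_cls (hN0 c hcN) hv, hT.cls_eq_of_mem (hN0 c hcN) hv⟩⟩
    · rw [cls, ← Finset.insert_erase hbc, ha]
      ext z
      simp only [Finset.mem_insert, Finset.mem_singleton]
      tauto
    · rintro rfl
      exact hE.notMem_evenNbrs_self _ ha'.2
  have : Nonempty V := ⟨x⟩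
  choose! a b c hTeq hab hac hbc hcN hbN hTv using hex
  have haT : ∀ T ∈ 𝒯, a T ∈ T := fun T h => by
    have : a T ∈ ({a T, b T, c T} : Finset V) := by simp
    rwa [← hTeq T h] at this
  have hbT : ∀ T ∈ 𝒯, b T ∈ T := fun T h => by
    have : b T ∈ ({a T, b T, c T} : Finset V) := by simp
    rwa [← hTeq T h] at this
  have hcT : ∀ T ∈ 𝒯, c T ∈ T := fun T h => by
    have : c T ∈ ({a T, b T, c T} : Finset V) := by simp
    rwa [← hTeq T h] at this
  have hcases : ∀ T ∈ 𝒯, ∀ v ∈ T, v = a T ∨ v = b T ∨ v = c T := fun T h v hv => by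
    rw [hTeq T h] at hv
    simpa using hv
  have key : ∀ S ⊆ 𝒯, ∀ B, B = N.filter (fun v => cls E v ∈ S → v = c (cls E v)) →
      (∀ T ∈ 𝒯, T ∉ S → a T ∈ N) → (Even B.card ∨ ∀ T ∈ S, a T ∉ N) →
      (∀ A ⊆ B, (B \ A).Nonempty → (B \ A).card ≤ A.card →
        (1 + B.card) % 2 + A.card ≤ (B \ A).card + 1 →
        (∀ r ∈ B \ A, cls E r ∉ S) → (∀ r ∈ B \ A, (evenNbrs E r).card = 2) →
        (∀ r ∈ B \ A, evenNbrs E r ∩ B ⊆ A) →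
        (∀ r ∈ B \ A, ∀ r' ∈ B \ A, r ≠ r' → Disjoint (evenNbrs E r) (evenNbrs E r')) → False) →
      HasDec E k fun _ => 0 := by
    intro S hS B hBdef hSa heven hfin
    have hmemB : ∀ v, v ∈ B ↔ v ∈ N ∧ (cls E v ∈ S → v = c (cls E v)) := by
      intro v
      rw [hBdef, Finset.mem_filter]
    have hcB : ∀ T ∈ S, c T ∈ B := by
      intro T h
      have := hS h
      rw [hmemB, (hTv T this _ (hcT T this)).2]
      exact ⟨hcN T this, fun _ => rfl⟩
    have hBN : B ⊆ N := fun v hv => ((hmemB v).1 hv).1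
    have hM1 : ∀ v, v ∈ (S.image fun T => (a T, b T)).image Prod.fst ↔ ∃ T ∈ S, v = a T := by
      intro v
      simp [eq_comm]
    have hM2 : ∀ v, v ∈ (S.image fun T => (a T, b T)).image Prod.snd ↔ ∃ T ∈ S, v = b T := by
      intro v
      simp [eq_comm]
    have hfull : ∀ v ∈ B, cls E v ∉ S → ∀ w ∈ evenNbrs E v, w ∈ N → w ∈ B := by
      intro v hv hvS w hw hwN
      rw [hmemB, hT.cls_eq v (hN0 v (hBN hv)) w hw]
      exact ⟨hwN, fun h => absurd h hvS⟩
    refine hasDec_of_oddStar (B := B) (M := S.image fun T => (a T, b T)) hE ih hT hx hBN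
      ?_ ?_ ?_ ?_ ?_ ?_ ?_ ?_ ?_ ?_ ?_
    · obtain ⟨v, hv⟩ := hne
      by_cases h : cls E v ∈ S
      · exact ⟨_, hcB _ h⟩
      · exact ⟨v, (hmemB v).2 ⟨hv, fun h' => absurd h' h⟩⟩
    · intro p hp
      obtain ⟨T, hTS, rfl⟩ := Finset.mem_image.1 hp
      exact (hTv T (hS hTS) _ (haT T (hS hTS))).1
    · intro p hp
      obtain ⟨T, hTS, rfl⟩ := Finset.mem_image.1 hp
      have h := hS hTS
      exact mem_evenNbrs_of_cls_eq
        (by rw [(hTv T h _ (haT T h)).2, (hTv T h _ (hbT T h)).2]) (hab T h).symm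
    · intro p hp hpB
      obtain ⟨T, hTS, rfl⟩ := Finset.mem_image.1 hp
      have h := hS hTS
      have h1 := ((hmemB _).1 hpB).2
      rw [(hTv T h _ (haT T h)).2] at h1
      exact hac T h (h1 hTS)
    · intro p hp
      obtain ⟨T, hTS, rfl⟩ := Finset.mem_image.1 hp
      exact hbN T (hS hTS)
    · intro p hp w hw
      obtain ⟨T, hTS, rfl⟩ := Finset.mem_image.1 hp
      have h := hS hTS
      have hwT : w ∈ T := by
        rw [← (hTv T h _ (haT T h)).2]
        exact Finset.mem_insert_of_mem hw
      rcases hcases T h w hwT with rfl | rfl | rfl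
      · exact absurd hw (hE.notMem_evenNbrs_self _)
      · exact Finset.mem_insert_self _ _
      · exact Finset.mem_insert_of_mem (hcB T hTS)
    · intro p hp q hq hpq
      obtain ⟨T, hTS, rfl⟩ := Finset.mem_image.1 hp
      obtain ⟨T', hTS', rfl⟩ := Finset.mem_image.1 hq
      rw [(hTv T (hS hTS) _ (haT T (hS hTS))).2, (hTv T' (hS hTS') _ (haT T' (hS hTS'))).2] at hpq
      rw [hpq]
    · intro v hv
      rw [Finset.mem_union, hM1, hmemB]
      by_cases h : cls E v ∈ S
      · rcases hcases _ (hS h) v (self_mem_cls E v) with h' | h' | h'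
        · exact Or.inr ⟨_, h, h'⟩
        · exact absurd hv (h' ▸ hbN _ (hS h))
        · exact Or.inl ⟨hv, fun _ => h'⟩
      · exact Or.inl ⟨hv, fun h' => absurd h' h⟩
    · intro v hv
      have hv' := (hmemB v).1 hv
      by_cases h : cls E v ∈ S
      · have hvc := hv'.2 h
        rw [Finset.card_eq_zero.2]
        · exact Nat.zero_le _
        · rw [Finset.sdiff_eq_empty_iff_subset]
          intro w hw
          rw [Finset.mem_union, Finset.mem_union, hM1, hM2]
          rcases hcases _ (hS h) w (Finset.mem_insert_of_mem hw) with h' | h' | h'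
          · exact Or.inr (Or.inl ⟨_, h, h'⟩)
          · exact Or.inr (Or.inr ⟨_, h, h'⟩)
          · exact Or.inl (h' ▸ hcB _ h)
      · by_cases h2 : cls E v ⊆ N
        · rw [Finset.card_eq_zero.2]
          · exact Nat.zero_le _
          · rw [Finset.sdiff_eq_empty_iff_subset]
            intro w hw
            exact Finset.mem_union_left _
              (hfull v hv h w hw (h2 (Finset.mem_insert_of_mem hw)))
        · have hm := hmem𝒯 v hv'.1 h2
          have haN := hSa _ hm h
          refine (Finset.card_le_card (t := {b (cls E v)}) fun w hw => ?_).trans (by simp)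
          rw [Finset.mem_sdiff] at hw
          rw [Finset.mem_singleton]
          have hwB : w ∉ B := fun h => hw.2 (Finset.mem_union_left _ h)
          have hwN : w ∉ N := fun h' => hwB (hfull v hv h w hw.1 h')
          rcases hcases _ hm w (Finset.mem_insert_of_mem hw.1) with h' | h' | h'
          · exact absurd (h' ▸ haN) hwN
          · exact h'
          · exact absurd (h' ▸ hcN _ hm) hwN
    · rcases heven with h | h
      · exact Or.inl h
      · refine Or.inr fun p hp => ?_
        obtain ⟨T, hTS, rfl⟩ := Finset.mem_image.1 hp
        exact h T hTS
    · intro A hAB hcard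
      by_contra hcon
      push Not at hcon
      obtain ⟨hR, hlt, hheavy⟩ := hcon
      have hRB : ∀ r ∈ B \ A, r ∈ B := fun r hr => (Finset.mem_sdiff.1 hr).1
      have hheavy' : ∀ r ∈ B \ A, (evenNbrs E r).card = 2 ∧
          Disjoint (evenNbrs E r) (B \ A ∪ (S.image fun T => (a T, b T)).image Prod.fst) := by
        intro r hr
        have h1 := hheavy r hr
        have h2 := hT.card_le (hN0 r (hBN (hRB r hr)))
        have h3 : evenNbrs E r \ (B \ A ∪ (S.image fun T => (a T, b T)).image Prod.fst) =
            evenNbrs E r := Finset.eq_of_subset_of_card_le Finset.sdiff_subset (by omega)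
        refine ⟨?_, Finset.sdiff_eq_self_iff_disjoint.1 h3⟩
        rw [h3] at h1
        omega
      have hRS : ∀ r ∈ B \ A, cls E r ∉ S := by
        intro r hr h
        have hm := hS h
        have hrc := ((hmemB r).1 (hRB r hr)).2 h
        have hd : a (cls E r) ∈ evenNbrs E r → _ := fun h' =>
          Finset.disjoint_left.1 (hheavy' r hr).2 h'
        refine hd ?_ ?_
        · refine mem_evenNbrs_of_cls_eq (hTv _ hm _ (haT _ hm)).2.symm ?_
          exact fun h' => hac _ hm (h'.trans hrc)
        · exact Finset.mem_union_right _ ((hM1 _).2 ⟨_, h, rfl⟩)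
      refine hfin A hAB hR hcard (by omega) hRS
        (fun r hr => (hheavy' r hr).1) ?_ ?_
      · intro r hr w hw
        by_contra hwA
        rw [Finset.mem_inter] at hw
        exact Finset.disjoint_left.1 (hheavy' r hr).2 hw.1
          (Finset.mem_union_left _ (Finset.mem_sdiff.2 ⟨hw.2, hwA⟩))
      · intro r hr r' hr' hrr'
        rw [Finset.disjoint_left]
        intro w hw hw'
        have h0 := hN0 r (hBN (hRB r hr))
        have h0' := hN0 r' (hBN (hRB r' hr'))
        have : r' ∈ evenNbrs E r := mem_evenNbrs_of_cls_eq
          ((hT.cls_eq r h0 w hw).symm.trans (hT.cls_eq r' h0' w hw')) hrr'.symm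
        exact Finset.disjoint_left.1 (hheavy' r hr).2 this (Finset.mem_union_left _ hr')
  by_cases hcase : Even (N.filter (fun v => cls E v ∈ 𝒯 → v = c (cls E v))).card ∨
      ∀ T ∈ 𝒯, a T ∉ N
  · refine key 𝒯 (Finset.Subset.refl _) _ rfl (fun T h h' => absurd h h') hcase ?_
    set B := N.filter (fun v => cls E v ∈ 𝒯 → v = c (cls E v)) with hBdef
    intro A hAB hR hcard hle hRS hR2 hRA hdisj
    have hcardB : (B \ A).card + A.card = B.card := Finset.card_sdiff_add_card_eq_card hAB
    have hBN : B ⊆ N := Finset.filter_subset _ _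
    have hRN : ∀ r ∈ B \ A, r ∈ N := fun r hr => hBN (Finset.mem_sdiff.1 hr).1
    have hsub : ∀ r ∈ B \ A, evenNbrs E r ⊆ A := by
      intro r hr w hw
      have hrsub : cls E r ⊆ N := by
        by_contra h
        exact hRS r hr (hmem𝒯 r (hRN r hr) h)
      refine hRA r hr (Finset.mem_inter.2 ⟨hw, Finset.mem_filter.2
        ⟨hrsub (Finset.mem_insert_of_mem hw), fun h => absurd h ?_⟩⟩)
      rw [hT.cls_eq r (hN0 r (hRN r hr)) w hw]
      exact hRS r hr
    have hbi : ((B \ A).biUnion (evenNbrs E)).card = (B \ A).card * 2 := by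
      rw [Finset.card_biUnion hdisj, Finset.sum_congr rfl hR2, Finset.sum_const, smul_eq_mul]
    have hbi2 := Finset.card_le_card (Finset.biUnion_subset.2 hsub)
    rw [hbi] at hbi2
    have hR1 := Finset.card_pos.2 hR
    have hR' : (B \ A).card = 1 := by omega
    obtain ⟨r, hr⟩ := Finset.card_eq_one.1 hR'
    have hrR : r ∈ B \ A := by simp [hr]
    have hA : evenNbrs E r = A :=
      Finset.eq_of_subset_of_card_le (hsub r hrR) (by rw [hR2 r hrR]; omega)
    have hBr : B = cls E r := by
      rw [cls, hA, ← Finset.sdiff_union_of_subset hAB, hr, Finset.insert_eq]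
    have hodd : ∀ T ∈ 𝒯, a T ∉ N := by
      refine hcase.resolve_left fun h => ?_
      rw [Nat.even_iff] at h
      have := hR2 r hrR
      rw [hA] at this
      omega
    have hNB : N ⊆ cls E r := by
      rw [← hBr]
      intro v hv
      refine Finset.mem_filter.2 ⟨hv, fun h => ?_⟩
      rcases hcases _ h v (self_mem_cls E v) with h' | h' | h'
      · exact absurd hv (h' ▸ hodd _ h)
      · exact absurd hv (h' ▸ hbN _ h)
      · exact h'
    have h3 := hN r (hRN r hrR) hNB
    have h4 := Finset.card_le_card hBN
    omega
  · push Not at hcase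
    obtain ⟨hodd, T₀, hT₀, haN⟩ := hcase
    set B' := N.filter (fun v => cls E v ∈ 𝒯 → v = c (cls E v)) with hB'
    set B := N.filter (fun v => cls E v ∈ 𝒯.erase T₀ → v = c (cls E v)) with hBdef
    have haT₀ := (hTv _ hT₀ _ (haT _ hT₀)).2
    have hcT₀ := (hTv _ hT₀ _ (hcT _ hT₀)).2
    have hins : B = insert (a T₀) B' := by
      ext v
      simp only [hBdef, hB', Finset.mem_filter, Finset.mem_insert, Finset.mem_erase]
      constructor
      · rintro ⟨hv, h⟩
        by_cases hvT : cls E v = T₀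
        · rcases hcases _ hT₀ v (hvT ▸ self_mem_cls E v) with h' | h' | h'
          · exact Or.inl h'
          · exact absurd hv (h' ▸ hbN _ hT₀)
          · exact Or.inr ⟨hv, fun _ => by rw [hvT]; exact h'⟩
        · exact Or.inr ⟨hv, fun h' => h ⟨hvT, h'⟩⟩
      · rintro (rfl | ⟨hv, h⟩)
        · exact ⟨haN, fun h => absurd haT₀ h.1⟩
        · exact ⟨hv, fun h' => h h'.2⟩
    have haB' : a T₀ ∉ B' := by
      rw [hB', Finset.mem_filter]
      rintro ⟨-, h⟩
      rw [haT₀] at h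
      exact hac _ hT₀ (h hT₀)
    have hBcard : B.card = B'.card + 1 := by rw [hins, Finset.card_insert_of_notMem haB']
    rw [Nat.not_even_iff] at hodd
    refine key (𝒯.erase T₀) (Finset.erase_subset _ _) B rfl ?_
      (Or.inl (by rw [Nat.even_iff]; omega)) ?_
    · intro T h h'
      have : T = T₀ := by
        by_contra hne'
        exact h' (Finset.mem_erase.2 ⟨hne', h⟩)
      rwa [this]
    intro A hAB hR hcard hle hRS hR2 hRA hdisj
    have hcardB : (B \ A).card + A.card = B.card := Finset.card_sdiff_add_card_eq_card hAB
    have hBN : B ⊆ N := Finset.filter_subset _ _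
    have hRN : ∀ r ∈ B \ A, r ∈ N := fun r hr => hBN (Finset.mem_sdiff.1 hr).1
    have haB : a T₀ ∈ B := by rw [hins]; exact Finset.mem_insert_self _ _
    have hcB : c T₀ ∈ B := by
      rw [hBdef, Finset.mem_filter, hcT₀]
      exact ⟨hcN _ hT₀, fun _ => rfl⟩
    have hT₀N : ∀ v w, cls E v = T₀ → cls E w = T₀ → w ≠ v → w ∈ evenNbrs E v :=
      fun v w hv hw => mem_evenNbrs_of_cls_eq (hv.trans hw.symm)
    have hfull : ∀ r ∈ B \ A, cls E r ≠ T₀ → evenNbrs E r ∩ B = evenNbrs E r := by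
      intro r hr hrT
      rw [Finset.inter_eq_left]
      intro w hw
      have hrT' : cls E r ∉ 𝒯 := fun h => hRS r hr (Finset.mem_erase.2 ⟨hrT, h⟩)
      have hrsub : cls E r ⊆ N := by
        by_contra h
        exact hrT' (hmem𝒯 r (hRN r hr) h)
      refine Finset.mem_filter.2 ⟨hrsub (Finset.mem_insert_of_mem hw), fun h => absurd h ?_⟩
      rw [hT.cls_eq r (hN0 r (hRN r hr)) w hw]
      exact hRS r hr
    have hone : ∀ r ∈ B \ A, 1 ≤ (evenNbrs E r ∩ B).card := by
      intro r hr
      by_cases hrT : cls E r = T₀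
      · rw [Nat.one_le_iff_ne_zero, Finset.card_ne_zero]
        by_cases hra : a T₀ = r
        · exact ⟨c T₀, Finset.mem_inter.2 ⟨hT₀N _ _ hrT hcT₀
            fun h => hac _ hT₀ (hra.trans h.symm), hcB⟩⟩
        · exact ⟨a T₀, Finset.mem_inter.2 ⟨hT₀N _ _ hrT haT₀ hra, haB⟩⟩
      · rw [hfull r hr hrT, hR2 r hr]
        norm_num
    have hbi : ∑ r ∈ B \ A, (evenNbrs E r ∩ B).card ≤ A.card := by
      rw [← Finset.card_biUnion fun r hr r' hr' h => (hdisj r hr r' hr' h).mono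
        Finset.inter_subset_left Finset.inter_subset_left]
      exact Finset.card_le_card (Finset.biUnion_subset.2 hRA)
    have hRT : ∀ r ∈ B \ A, cls E r = T₀ := by
      intro r hr
      by_contra hrT
      have := Finset.sum_lt_sum hone ⟨r, hr, by rw [hfull r hr hrT, hR2 r hr]; norm_num⟩
      rw [Finset.sum_const, smul_eq_mul, mul_one] at this
      omega
    have hR1 : (B \ A).card ≤ 1 := by
      rw [Finset.card_le_one]
      intro r hr r' hr'
      by_contra hrr'
      have h1 := hRA r hr (Finset.mem_inter.2
        ⟨hT₀N r r' (hRT r hr) (hRT r' hr') (Ne.symm hrr'), (Finset.mem_sdiff.1 hr').1⟩)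
      exact (Finset.mem_sdiff.1 hr').2 h1
    have hB2 : ({a T₀, c T₀} : Finset V) = B := by
      refine Finset.eq_of_subset_of_card_le ?_ ?_
      · intro v hv
        simp only [Finset.mem_insert, Finset.mem_singleton] at hv
        rcases hv with rfl | rfl
        exacts [haB, hcB]
      · rw [Finset.card_pair (hac _ hT₀)]
        omega
    have hBT : B ⊆ T₀ := by
      rw [← hB2]
      intro v hv
      simp only [Finset.mem_insert, Finset.mem_singleton] at hv
      rcases hv with rfl | rfl
      exacts [haT _ hT₀, hcT _ hT₀]
    have hNB : N ⊆ B := by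
      intro v hv
      refine Finset.mem_filter.2 ⟨hv, fun h => ?_⟩
      exfalso
      rw [Finset.mem_erase] at h
      have hc := hTv _ h.2 _ (hcT _ h.2)
      have : c (cls E v) ∈ B := Finset.mem_filter.2 ⟨hcN _ h.2, fun _ => by rw [hc.2]⟩
      exact h.1 (hc.2.symm.trans (hTv _ hT₀ _ (hBT this)).2)
    have h3 := hN _ (hcN _ hT₀) (by rw [hcT₀]; exact hNB.trans hBT)
    have h4 := Finset.card_le_card hBN
    rw [← hB2, Finset.card_pair (hac _ hT₀)] at h4
    omega

end Attachment

section Gadget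

variable [DecidableEq V] [Fintype V] {E : Finset (Sym2 V)}

/-- A set `F` of edges at `u` and inside a union `T` of even classes containing all even neighbours
of `u`, which can be added to any suitable decomposition, creating `d` new path ends at `u`. -/
structure IsGadget (E : Finset (Sym2 V)) (u : V) (T : Finset V) (F : Finset (Sym2 V)) (d : ℕ) :
    Prop where
  subset : F ⊆ E
  par_eq : ∀ r ∈ T, par E r = 0
  closed : ∀ r ∈ T, evenNbrs E r ⊆ T
  nbrs : evenNbrs E u ⊆ T
  touch : ∀ p q, s(p, q) ∈ F → p = u ∨ p ∈ T
  meets : ∀ p q, s(p, q) ∈ F → p ∈ T ∨ q ∈ T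
  deg : ∀ r ∈ T, edgeDeg F r = 1
  deg_self : edgeDeg F u % 2 = d
  eq_empty : d = 0 → T = ∅
  add : ∀ (E₀ : Finset (Sym2 V)) (k : ℕ) (g : V → ℕ), E₀ ⊆ E → Disjoint E₀ F → HasDec E₀ k g →
    1 ≤ g u → (∀ r ∈ T, 1 ≤ g r) → (∀ w, s(u, w) ∈ E₀ → 1 ≤ g w) →
    (∀ r ∈ T, ∀ w, s(r, w) ∈ E₀ → 1 ≤ g w) →
    HasDec (E₀ ∪ F) k fun w => if w = u then g u + d else if w ∈ T then 0 else g w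

lemma isGadget_empty {u : V} (h : evenNbrs E u = ∅) : IsGadget E u ∅ ∅ 0 where
  subset := Finset.empty_subset _
  par_eq := by simp
  closed := by simp
  nbrs := by simp [h]
  touch := by simp
  meets := by simp
  deg := by simp
  deg_self := by simp [edgeDeg]
  eq_empty := by simp
  add := by
    intro E₀ k g _ _ h _ _ _ _
    rw [Finset.union_empty]
    refine h.mono fun w => ?_
    split_ifs with h1
    · simp [h1]
    · simp_all
    · exact le_rfl

/-- An odd vertex adjacent to all vertices of an even triangle. -/
lemma isGadget_star (hE : Admissible E) (hT : IsTriangular E) {u v : V} (hu : par E u = 1)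
    (hN : evenNbrs E u = cls E v) (hv : par E v = 0) (h3 : (cls E v).card = 3) :
    IsGadget E u (cls E v) (starEdges u (cls E v)) 1 := by
  have hpar : ∀ r ∈ cls E v, par E r = 0 := fun r hr => par_eq_zero_of_mem_cls hv hr
  have huT : u ∉ cls E v := fun h => by have := hpar u h; omega
  refine ⟨?_, hpar, ?_, hN.le, ?_, ?_, ?_, ?_, by simp, ?_⟩
  · rw [← hN]
    exact starEdges_evenNbrs_subset E u
  · intro r hr w hw
    rw [← hT.cls_eq_of_mem hv hr]
    exact Finset.mem_insert_of_mem hw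
  · intro p q hpq
    by_cases hp : p = u
    · exact Or.inl hp
    · exact Or.inr ((mem_starEdges hp).1 hpq).2
  · intro p q hpq
    by_cases hp : p = u
    · subst hp
      exact Or.inr (mem_starEdges_self.1 hpq)
    · exact Or.inl ((mem_starEdges hp).1 hpq).2
  · intro r hr
    rw [edgeDeg_starEdges huT, if_neg (by rintro rfl; exact huT hr), if_pos hr]
  · rw [edgeDeg_starEdges huT, if_pos rfl, h3]
  · intro E₀ k g hE₀ hd h h1 h2 h4 h5
    refine h.add_three h3 huT ?_ h1 h2 h4 ?_ (by simp) ?_ ?_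
    · exact fun r hr h => Finset.disjoint_left.1 hd h (mem_starEdges_self.2 hr)
    · intro r hr
      have hsub : (Finset.univ.filter fun w => s(r, w) ∈ E₀ ∧ (g w = 0 ∨ w ∈ cls E v)) ⊆
          (cls E v).erase r := by
        intro w hw
        simp only [Finset.mem_filter, Finset.mem_univ, true_and] at hw
        refine Finset.mem_erase.2 ⟨?_, hw.2.resolve_left ?_⟩
        · rintro rfl
          exact hE.loopless _ (hE₀ hw.1)
        · have := h5 r hr w hw.1
          omega
      have := Finset.card_le_card hsub
      rw [Finset.card_erase_of_mem hr] at this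
      omega
    · intro r hr
      rw [if_neg (by rintro rfl; exact huT hr), if_pos hr]
    · intro w hw
      rw [if_neg hw]
      split_ifs
      exacts [Nat.zero_le _, le_rfl]

/-- An odd vertex adjacent to two vertices of an even triangle. -/
lemma isGadget_pair (hT : IsTriangular E) {u a b c : V} (hu : par E u = 1)
    (ha : par E a = 0) (hcls : cls E a = {a, b, c}) (hab : a ≠ b) (hac : a ≠ c) (hbc : b ≠ c)
    (hNu : evenNbrs E u = {a, c}) :
    IsGadget E u (cls E a) {s(u, c), s(a, b)} 1 := by
  have hpar : ∀ r ∈ cls E a, par E r = 0 := fun r hr => par_eq_zero_of_mem_cls ha hr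
  have huT : u ∉ cls E a := fun h => by have := hpar u h; omega
  have hmem : ∀ r, r ∈ cls E a ↔ r = a ∨ r = b ∨ r = c := fun r => by rw [hcls]; simp
  have hua : u ≠ a := by rintro rfl; simp [hmem] at huT
  have hub : u ≠ b := by rintro rfl; simp [hmem] at huT
  have huc : u ≠ c := by rintro rfl; simp [hmem] at huT
  have hcu : s(u, c) ∈ E := (mem_evenNbrs.1 (by rw [hNu]; simp : c ∈ evenNbrs E u)).1
  have hba : s(a, b) ∈ E := by
    have : b ∈ cls E a := (hmem b).2 (by simp)
    exact (mem_evenNbrs.1 ((Finset.mem_insert.1 this).resolve_left hab.symm)).1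
  have hne : s(u, c) ≠ s(a, b) := by
    intro h
    rcases Sym2.eq_iff.1 h with ⟨h, -⟩ | ⟨h, -⟩
    exacts [hua h, hub h]
  have hbu : s(u, b) ∉ E := by
    intro h
    have : b ∈ evenNbrs E u := mem_evenNbrs.2 ⟨h, hpar b ((hmem b).2 (by simp))⟩
    rw [hNu] at this
    simp only [Finset.mem_insert, Finset.mem_singleton] at this
    rcases this with h | h
    exacts [hab h.symm, hbc h]
  have hdeg : ∀ w, edgeDeg {s(u, c), s(a, b)} w =
      if w = u ∨ w = a ∨ w = b ∨ w = c then 1 else 0 := by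
    intro w
    rw [edgeDeg_insert (by simpa using hne), edgeDeg_singleton]
    by_cases h1 : w = u
    · subst h1; simp [hua, hub]
    · by_cases h2 : w = c
      · subst h2; simp [hac.symm, hbc.symm]
      · simp [h1, h2]
  have hmemF : ∀ p q, s(p, q) ∈ ({s(u, c), s(a, b)} : Finset (Sym2 V)) →
      p = u ∧ q = c ∨ p = c ∧ q = u ∨ p = a ∧ q = b ∨ p = b ∧ q = a := by
    intro p q h
    simp only [Finset.mem_insert, Finset.mem_singleton, Sym2.eq_iff] at h
    tauto
  refine ⟨?_, hpar, ?_, ?_, ?_, ?_, ?_, ?_, by simp, ?_⟩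
  · intro e he
    simp only [Finset.mem_insert, Finset.mem_singleton] at he
    rcases he with rfl | rfl
    exacts [hcu, hba]
  · intro r hr w hw
    rw [← hT.cls_eq_of_mem ha hr]
    exact Finset.mem_insert_of_mem hw
  · rw [hNu, hcls]
    intro w hw
    simp only [Finset.mem_insert, Finset.mem_singleton] at hw ⊢
    tauto
  · intro p q hpq
    have := hmemF p q hpq
    rw [hmem]
    tauto
  · intro p q hpq
    have := hmemF p q hpq
    rw [hmem, hmem]
    tauto
  · intro r hr
    rw [hdeg, if_pos (Or.inr ((hmem r).1 hr))]
  · rw [hdeg, if_pos (Or.inl rfl)]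
  · intro E₀ k g hE₀ hd h h1 h2 h4 h5
    have hnot : ∀ e ∈ ({s(u, c), s(a, b)} : Finset (Sym2 V)), e ∉ E₀ := fun e he h =>
      Finset.disjoint_left.1 hd h he
    have h6 : HasDec (insert s(a, b) E₀) k fun w => if w = b then 0 else g w := by
      refine h.insert_edge hab (hnot _ (by simp)) ?_ ?_
      · rw [Finset.card_eq_zero.2]
        · exact h2 b ((hmem b).2 (by simp))
        · rw [Finset.eq_empty_iff_forall_notMem]
          intro w hw
          simp only [zeroNbrs, Finset.mem_filter, Finset.mem_univ, true_and] at hw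
          have := h5 a ((hmem a).2 (by simp)) w hw.1
          omega
      · intro w
        by_cases hw : w = b
        · have := h2 b ((hmem b).2 (by simp))
          simp only [hw, if_true]
          omega
        · simp [hw]
    have hEeq : E₀ ∪ {s(u, c), s(a, b)} = insert s(u, c) (insert s(a, b) E₀) := by
      ext e
      simp only [Finset.mem_union, Finset.mem_insert, Finset.mem_singleton]
      tauto
    rw [hEeq]
    refine h6.insert_edge huc ?_ ?_ ?_
    · rw [Finset.mem_insert, not_or]
      exact ⟨hne, hnot _ (by simp)⟩
    · rw [Finset.card_eq_zero.2]
      · rw [if_neg hbc.symm]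
        exact h2 c ((hmem c).2 (by simp))
      · rw [Finset.eq_empty_iff_forall_notMem]
        intro w hw
        simp only [zeroNbrs, Finset.mem_filter, Finset.mem_univ, true_and, Finset.mem_insert] at hw
        obtain ⟨hw1 | hw1, hw2⟩ := hw
        · rcases Sym2.eq_iff.1 hw1 with ⟨h, -⟩ | ⟨h, -⟩
          exacts [hua h, hub h]
        · split_ifs at hw2 with h7
          · subst h7
            exact hbu (hE₀ hw1)
          · have := h4 w hw1
            omega
    · intro w
      by_cases hw : w = u
      · subst hw
        simp [huc, hub]
      · simp only [hw, if_false, add_zero]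
        by_cases hwc : w = c
        · have h7 := h2 c ((hmem c).2 (by simp))
          have h8 : c ∈ cls E a := (hmem c).2 (by simp)
          simpa [hwc, h8, hbc.symm] using h7
        · simp only [hwc, if_false, add_zero]
          by_cases hwT : w ∈ cls E a
          · simp [hwT]
          · have hwb : w ≠ b := by rintro rfl; exact hwT ((hmem _).2 (by simp))
            simp [hwT, hwb]

lemma exists_isGadget (hE : Admissible E) (hT : IsTriangular E) {u v : V} (hu : par E u = 1)
    (hv : v ∈ evenNbrs E u) (hsub : evenNbrs E u ⊆ cls E v) (h2 : 2 ≤ (evenNbrs E u).card) :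
    ∃ F, IsGadget E u (cls E v) F 1 := by
  have hv0 := (mem_evenNbrs.1 hv).2
  have hle := Finset.card_le_card hsub
  have h3 : (cls E v).card = 3 := by
    have h4 := hE.card_cls v
    rcases hT.card v hv0 with h | h
    · rw [h, Finset.card_empty] at h4
      omega
    · omega
  by_cases hfull : evenNbrs E u = cls E v
  · exact ⟨_, isGadget_star hE hT hu hfull hv0 h3⟩
  · have hN2 : (evenNbrs E u).card = 2 := by
      have := Finset.card_lt_card (Finset.ssubset_iff_subset_ne.2 ⟨hsub, hfull⟩)
      omega
    obtain ⟨c, hc⟩ : ∃ c, (evenNbrs E u).erase v = {c} := by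
      rw [← Finset.card_eq_one, Finset.card_erase_of_mem hv, hN2]
    obtain ⟨b, hb⟩ : ∃ b, cls E v \ evenNbrs E u = {b} := by
      rw [← Finset.card_eq_one, Finset.card_sdiff_of_subset hsub]
      omega
    have hc' := Finset.mem_erase.1 (hc ▸ Finset.mem_singleton_self c)
    have hb' := Finset.mem_sdiff.1 (hb ▸ Finset.mem_singleton_self b)
    have hNu : evenNbrs E u = {v, c} := by rw [← hc, Finset.insert_erase hv]
    refine ⟨_, isGadget_pair hT (a := v) (b := b) (c := c) hu hv0 ?_ ?_ hc'.1.symm ?_ hNu⟩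
    · rw [← Finset.sdiff_union_of_subset hsub, hb, hNu]
      ext w
      simp only [Finset.mem_union, Finset.mem_insert, Finset.mem_singleton]
      tauto
    · rintro rfl
      exact hb'.2 hv
    · rintro rfl
      exact hb'.2 hc'.2

/-- Two adjacent odd vertices with disjoint gadgets. -/
lemma hasDec_of_isGadget {k d : ℕ} {y z : V} {S T : Finset V} {Fy Fz : Finset (Sym2 V)}
    (hE : Admissible E) (ih : ∀ H ⊂ E, Admissible H → HasDec H k fun _ => 0)
    (hy : par E y = 1) (hz : par E z = 1) (hyz : s(y, z) ∈ E)
    (hGz : IsGadget E z T Fz 1) (hGy : IsGadget E y S Fy d) (hST : Disjoint S T) :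
    HasDec E k fun _ => 0 := by
  have hne : y ≠ z := by rintro rfl; exact hE.loopless _ hyz
  have hyT : y ∉ T := fun h => by have := hGz.par_eq y h; omega
  have hzT : z ∉ T := fun h => by have := hGz.par_eq z h; omega
  have hyS : y ∉ S := fun h => by have := hGy.par_eq y h; omega
  have hzS : z ∉ S := fun h => by have := hGy.par_eq z h; omega
  have hST' : ∀ w ∈ S, w ∉ T := fun w hw => Finset.disjoint_left.1 hST hw
  have hyFz : ∀ w, s(y, w) ∉ Fz := fun w h => by
    rcases hGz.touch y w h with h | h
    exacts [hne h, hyT h]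
  have hzFy : ∀ w, s(z, w) ∉ Fy := fun w h => by
    rcases hGy.touch z w h with h | h
    exacts [hne h.symm, hzS h]
  have hSFz : ∀ r ∈ S, ∀ w, s(r, w) ∉ Fz := fun r hr w h => by
    rcases hGz.touch r w h with rfl | h
    exacts [hzS hr, hST' r hr h]
  have hTFy : ∀ r ∈ T, ∀ w, s(r, w) ∉ Fy := fun r hr w h => by
    rcases hGy.touch r w h with rfl | h
    exacts [hyT hr, hST' r h hr]
  have hdisj : Disjoint Fz Fy := by
    rw [Finset.disjoint_left]
    intro e
    induction e with
    | _ p q =>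
      intro h h'
      rcases hGz.meets p q h with h1 | h1
      · exact hTFy p h1 q h'
      · rw [Sym2.eq_swap] at h'
        exact hTFy q h1 p h'
  have hyzF : s(y, z) ∉ Fz ∪ Fy := by
    rw [Finset.mem_union, not_or]
    exact ⟨hyFz z, by rw [Sym2.eq_swap]; exact hzFy y⟩
  set F := insert s(y, z) (Fz ∪ Fy) with hFdef
  have hF : F ⊆ E := Finset.insert_subset hyz (Finset.union_subset hGz.subset hGy.subset)
  have hdegF : ∀ w, edgeDeg F w =
      edgeDeg Fz w + edgeDeg Fy w + if w = y ∨ w = z then 1 else 0 := by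
    intro w
    rw [hFdef, Finset.insert_eq, Finset.union_comm, edgeDeg_union (by simpa using hyzF),
      edgeDeg_union hdisj, edgeDeg_singleton]
  have hparz : par (E \ F) z = 1 := by
    have h1 := edgeDeg_eq_sdiff_add hF z
    have h2 := hGz.deg_self
    rw [hdegF, edgeDeg_eq_zero hzFy, if_pos (Or.inr rfl)] at h1
    unfold par at *
    omega
  have hpary : par (E \ F) y = d := by
    have h1 := edgeDeg_eq_sdiff_add hF y
    have h2 := hGy.deg_self
    rw [hdegF, edgeDeg_eq_zero hyFz, if_pos (Or.inl rfl)] at h1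
    unfold par at *
    omega
  have hparT : ∀ r ∈ T, par (E \ F) r = 1 := by
    intro r hr
    have h1 := edgeDeg_eq_sdiff_add hF r
    have h2 := hGz.par_eq r hr
    rw [hdegF, edgeDeg_eq_zero (hTFy r hr), hGz.deg r hr, if_neg] at h1
    · unfold par at *
      omega
    · rintro (rfl | rfl)
      exacts [hyT hr, hzT hr]
  have hparS : ∀ r ∈ S, par (E \ F) r = 1 := by
    intro r hr
    have h1 := edgeDeg_eq_sdiff_add hF r
    have h2 := hGy.par_eq r hr
    rw [hdegF, edgeDeg_eq_zero (hSFz r hr), hGy.deg r hr, if_neg] at h1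
    · unfold par at *
      omega
    · rintro (rfl | rfl)
      exacts [hyS hr, hzS hr]
  have htouch : ∀ v w, s(v, w) ∈ F → v = y ∨ v = z ∨ v ∈ S ∨ v ∈ T := by
    intro v w h
    rw [hFdef, Finset.mem_insert, Finset.mem_union, Sym2.eq_iff] at h
    rcases h with h | h | h
    · tauto
    · have := hGz.touch v w h
      tauto
    · have := hGy.touch v w h
      tauto
  have hsubE : ∀ e ∈ E \ F, e ∈ E := fun e he => (Finset.mem_sdiff.1 he).1
  have hpos : ∀ v, (v = y ∨ v = z ∨ v ∈ S ∨ v ∈ T) → ∀ w, s(v, w) ∈ E \ F →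
      1 ≤ par (E \ F) w := by
    intro v hv w hvw
    by_contra h0
    have h0' : par (E \ F) w = 0 := by omega
    have hwS : w ∉ S := fun h => by have := hparS w h; omega
    have hwT : w ∉ T := fun h => by have := hparT w h; omega
    have hwz : w ≠ z := by rintro rfl; omega
    by_cases hwy : w = y
    · subst hwy
      have hS : S = ∅ := hGy.eq_empty (by omega)
      have hmem : par E v = 0 → v ∈ S := fun hv0 =>
        hGy.nbrs (mem_evenNbrs.2 ⟨by rw [Sym2.eq_swap]; exact hsubE _ hvw, hv0⟩)
      rcases hv with rfl | rfl | hv | hv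
      · exact hE.loopless _ (hsubE _ hvw)
      · rw [Sym2.eq_swap] at hvw
        exact (Finset.mem_sdiff.1 hvw).2 (Finset.mem_insert_self _ _)
      · simp [hS] at hv
      · exact hST' v (hmem (hGz.par_eq v hv)) hv
    · have hw : ∀ u, s(w, u) ∉ F := fun u h => by
        rcases htouch w u h with h | h | h | h
        exacts [hwy h, hwz h, hwS h, hwT h]
      rw [par_sdiff_of_notMem hF hw] at h0'
      have hwv : w ∈ evenNbrs E v := mem_evenNbrs.2 ⟨hsubE _ hvw, h0'⟩
      rcases hv with rfl | rfl | hv | hv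
      · exact hwS (hGy.nbrs hwv)
      · exact hwT (hGz.nbrs hwv)
      · exact hwS (hGy.closed v hv hwv)
      · exact hwT (hGz.closed v hv hwv)
  have hadm : Admissible (E \ F) := by
    refine hE.sdiff hF fun v w hvw => ?_
    have : evenNbrs (E \ F) v = ∅ := by
      rw [Finset.eq_empty_iff_forall_notMem]
      intro u hu
      rw [mem_evenNbrs] at hu
      have := hpos v (htouch v w hvw) u hu.1
      omega
    simp [this]
  have h1 : HasDec (E \ F) k (par (E \ F)) :=
    (ih _ (sdiff_ssubset_of_mem hF (Finset.mem_insert_self _ _)) hadm).parity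
  have hdF : ∀ F' ⊆ F, Disjoint (E \ F) F' := fun F' h => Finset.sdiff_disjoint.mono_right h
  have hFzF : Fz ⊆ F := Finset.subset_union_left.trans (Finset.subset_insert _ _)
  have hFyF : Fy ⊆ F := Finset.subset_union_right.trans (Finset.subset_insert _ _)
  have h2 := hGz.add (E \ F) k (par (E \ F)) Finset.sdiff_subset (hdF Fz hFzF) h1 hparz.ge
    (fun r hr => (hparT r hr).ge) (hpos z (by simp)) (fun r hr => hpos r (by simp [hr]))
  have hnT : ∀ v, (v = y ∨ v ∈ S) → ∀ w, s(v, w) ∈ E → w ∉ T := by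
    intro v hv w hvw hw
    have hwv : w ∈ evenNbrs E v := mem_evenNbrs.2 ⟨hvw, hGz.par_eq w hw⟩
    rcases hv with rfl | hv
    · exact hST' w (hGy.nbrs hwv) hw
    · exact hST' w (hGy.closed v hv hwv) hw
  have h3 : HasDec (insert s(y, z) (E \ F ∪ Fz)) k fun w => if w = z then 1 else
      if w = y then d + 1 else if w ∈ T then 0 else par (E \ F) w := by
    refine h2.insert_edge hne ?_ ?_ ?_
    · rw [Finset.mem_union, not_or]
      exact ⟨fun h => (Finset.mem_sdiff.1 h).2 (Finset.mem_insert_self _ _), hyFz z⟩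
    · rw [Finset.card_eq_zero.2]
      · simp
      · rw [Finset.eq_empty_iff_forall_notMem]
        intro w hw
        simp only [zeroNbrs, Finset.mem_filter, Finset.mem_univ, true_and, Finset.mem_union] at hw
        obtain ⟨hw1 | hw1, hw2⟩ := hw
        · have h4 := hpos y (by simp) w hw1
          have h5 := hnT y (by simp) w (hsubE _ hw1)
          split_ifs at hw2
          omega
        · exact hyFz w hw1
    · intro w
      by_cases hwz : w = z
      · subst hwz
        simp [hparz]
      · by_cases hwy : w = y
        · subst hwy
          simp [hwz, hyT, hpary]
        · simp [hwz, hwy]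
  have hpos3 : ∀ v, (v = y ∨ v ∈ S) → ∀ w, s(v, w) ∈ insert s(y, z) (E \ F ∪ Fz) →
      1 ≤ (if w = z then 1 else if w = y then d + 1 else if w ∈ T then 0 else par (E \ F) w) := by
    intro v hv w hw
    have hv' : v = y ∨ v = z ∨ v ∈ S ∨ v ∈ T := by tauto
    by_cases hwz : w = z
    · simp [hwz]
    rw [Finset.mem_insert, Finset.mem_union, Sym2.eq_iff] at hw
    rcases hw with (⟨-, h⟩ | ⟨h, -⟩) | hw | hw
    · exact absurd h hwz
    · rcases hv with rfl | hv
      exacts [absurd h hne, absurd hv (h ▸ hzS)]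
    · rw [if_neg hwz, if_neg (hnT v hv w (hsubE _ hw))]
      have := hpos v hv' w hw
      split_ifs <;> omega
    · rcases hv with rfl | hv
      exacts [absurd hw (hyFz w), absurd hw (hSFz v hv w)]
  have h4 := hGy.add _ k _ ?_ ?_ h3 ?_ ?_ (hpos3 y (by simp)) (fun r hr => hpos3 r (by simp [hr]))
  · have hEeq : insert s(y, z) (E \ F ∪ Fz) ∪ Fy = E := by
      rw [Finset.insert_union, Finset.union_assoc, ← Finset.union_insert, ← hFdef,
        Finset.sdiff_union_of_subset hF]
    rw [hEeq] at h4
    exact h4.mono fun w => Nat.zero_le _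
  · exact Finset.insert_subset hyz (Finset.union_subset Finset.sdiff_subset hGz.subset)
  · rw [Finset.disjoint_insert_left, Finset.disjoint_union_left]
    exact ⟨fun h => hyzF (Finset.mem_union_right _ h), hdF Fy hFyF, hdisj⟩
  · simp [hne]
  · intro r hr
    rw [if_neg (by rintro rfl; exact hzS hr), if_neg (by rintro rfl; exact hyS hr),
      if_neg (hST' r hr), hparS r hr]

end Gadget

section Main

variable [DecidableEq V] [Fintype V] {E : Finset (Sym2 V)}

lemma even_sum_edgeDeg (h : ∀ v, s(v, v) ∉ E) : Even (∑ v, edgeDeg E v) := by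
  induction E using Finset.induction_on with
  | empty => simp [edgeDeg]
  | insert e E he ih =>
    induction e with
    | _ a b =>
      have hab : a ≠ b := by rintro rfl; exact h a (Finset.mem_insert_self _ _)
      have h1 := ih fun v hv => h v (Finset.mem_insert_of_mem hv)
      simp only [edgeDeg_insert he, Finset.sum_add_distrib]
      refine h1.add ?_
      rw [← Finset.card_filter]
      have : (Finset.univ.filter fun v => v = a ∨ v = b) = {a, b} := by
        ext v
        simp
      rw [this, Finset.card_pair hab]
      exact even_two

lemma even_sum_par (h : ∀ v, s(v, v) ∉ E) : Even (∑ v, par E v) := by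
  have h1 := even_sum_edgeDeg h
  rw [Nat.even_iff] at h1 ⊢
  rw [← h1, Finset.sum_nat_mod]
  simp [par, Finset.sum_nat_mod Finset.univ 2 (edgeDeg E)]

lemma hasDec_of_forall_odd (h : ∀ v, s(v, v) ∉ E) (hodd : ∀ v w, s(v, w) ∈ E → par E v ≠ 0) :
    HasDec E (Fintype.card V / 2) fun _ => 0 := by
  obtain ⟨k, hk⟩ := even_sum_par h
  have h1 : HasDec E k (par E) := by
    refine hasDec_of_unique_zero E.card le_rfl h (fun v => Nat.mod_mod _ _) (by omega) ?_
    rintro x y hx - ⟨w, hw⟩ -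
    exact absurd hx (hodd x w hw)
  have h2 : ∑ v, par E v ≤ Fintype.card V := by
    refine (Finset.sum_le_card_nsmul _ _ 1 fun v _ => ?_).trans (by simp)
    rcases par_eq_zero_or_one E v with h | h <;> omega
  obtain ⟨D, hD, hc, -⟩ := h1
  exact ⟨D, hD, by omega, fun _ => Nat.zero_le _⟩

theorem hasDec_of_admissible (hE : Admissible E) : HasDec E (Fintype.card V / 2) fun _ => 0 := by
  induction E using Finset.strongInduction with
  | H E ih =>
  by_contra hD
  have hT := (hasDec_or_isTriangular hE ih).resolve_left hD
  have hatt : ∀ x, par E x = 1 → (evenNbrs E x).Nonempty → ∃ v ∈ evenNbrs E x,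
      evenNbrs E x ⊆ cls E v ∧ 2 ≤ (evenNbrs E x).card := by
    intro x hx hne
    by_contra hcon
    push Not at hcon
    exact hD (hasDec_of_not_attached hE ih hT hx hne fun v hv h =>
      Nat.lt_succ_iff.1 (hcon v hv h))
  have hatt' : ∀ x, par E x = 1 → ∀ t ∈ evenNbrs E x,
      evenNbrs E x ⊆ cls E t ∧ 2 ≤ (evenNbrs E x).card := by
    intro x hx t ht
    obtain ⟨v, hv, h1, h2⟩ := hatt x hx ⟨t, ht⟩
    rw [hT.cls_eq_of_mem (mem_evenNbrs.1 hv).2 (h1 ht)]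
    exact ⟨h1, h2⟩
  have hadj : ∀ z y t, par E z = 1 → par E y = 1 → s(y, z) ∈ E → t ∈ evenNbrs E z →
      ∃ t' ∈ evenNbrs E y, t' ∈ cls E t := by
    intro z y t hz hy hyz ht
    obtain ⟨h1, h2⟩ := hatt' z hz t ht
    obtain ⟨Fz, hGz⟩ := exists_isGadget hE hT hz ht h1 h2
    rcases (evenNbrs E y).eq_empty_or_nonempty with hNy | ⟨t', ht'⟩
    · exact absurd (hasDec_of_isGadget hE ih hy hz hyz hGz (isGadget_empty hNy)
        (Finset.disjoint_empty_left _)) hD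
    · refine ⟨t', ht', ?_⟩
      obtain ⟨h1', h2'⟩ := hatt' y hy t' ht'
      obtain ⟨Fy, hGy⟩ := exists_isGadget hE hT hy ht' h1' h2'
      by_contra hcon
      refine hD (hasDec_of_isGadget hE ih hy hz hyz hGz hGy ?_)
      rw [Finset.disjoint_left]
      intro w hw hw'
      refine hcon ?_
      rw [← hT.cls_eq_of_mem (mem_evenNbrs.1 ht).2 hw',
        hT.cls_eq_of_mem (mem_evenNbrs.1 ht').2 hw]
      exact self_mem_cls E t'
  by_cases hodd : ∀ v w, s(v, w) ∈ E → par E v ≠ 0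
  · exact hD (hasDec_of_forall_odd hE.loopless hodd)
  push Not at hodd
  obtain ⟨v, w, hvw, hv⟩ := hodd
  have hNv : (evenNbrs E v).card = 2 := by
    refine (hT.card v hv).resolve_left fun h => ?_
    rcases par_eq_zero_or_one E w with hw | hw
    · have : w ∈ evenNbrs E v := mem_evenNbrs.2 ⟨hvw, hw⟩
      simp [h] at this
    · obtain ⟨h1, h2⟩ := hatt' w hw v (mem_evenNbrs.2 ⟨by rw [Sym2.eq_swap]; exact hvw, hv⟩)
      have h3 := Finset.card_le_card h1
      rw [hE.card_cls, h, Finset.card_empty] at h3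
      omega
  have hpar : ∀ u ∈ cls E v, par E u = 0 := fun u hu => par_eq_zero_of_mem_cls hv hu
  refine hE.not_set {u | u ∈ cls E v ∨ par E u = 1 ∧ ∃ t ∈ evenNbrs E u, t ∈ cls E v} (cls E v)
    ⟨by rw [hE.card_cls, hNv], fun u hu => Or.inl hu, ?_, ?_, ?_, ?_⟩
  · intro u hu t ht hut
    exact (mem_evenNbrs.1 (mem_evenNbrs_of_cls_eq
      ((hT.cls_eq_of_mem hv hu).trans (hT.cls_eq_of_mem hv ht).symm) hut.symm)).1
  · intro u hu
    refine ⟨fun h => hu.resolve_right fun h' => ?_, hpar u⟩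
    have := h'.1
    omega
  · rintro u hu t hut
    have hut' : s(t, u) ∈ E := by rwa [Sym2.eq_swap]
    rcases hu with hu | ⟨hu1, r, hr, hrv⟩
    · rcases par_eq_zero_or_one E t with ht | ht
      · left
        rw [← hT.cls_eq_of_mem hv hu]
        exact Finset.mem_insert_of_mem (mem_evenNbrs.2 ⟨hut, ht⟩)
      · exact Or.inr ⟨ht, u, mem_evenNbrs.2 ⟨hut', hpar u hu⟩, hu⟩
    · have hcls := hT.cls_eq_of_mem hv hrv
      rcases par_eq_zero_or_one E t with ht | ht
      · left
        rw [← hcls]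
        exact (hatt' u hu1 r hr).1 (mem_evenNbrs.2 ⟨hut, ht⟩)
      · obtain ⟨t', ht', ht''⟩ := hadj u t r hu1 ht hut' hr
        exact Or.inr ⟨ht, t', ht', hcls ▸ ht''⟩
  · rintro u hu hu1
    rcases hu with hu | ⟨-, r, hr, -⟩
    · have := hpar u hu
      omega
    · exact (hatt' u hu1 r hr).2

end Main

section Conversion

variable (G : SimpleGraph V)

lemma exists_walk_of_pathEdges (x : V) (l : List V)
    (h : ∀ e ∈ pathEdges (x :: l), e ∈ G.edgeSet) :
    ∃ (y : V) (p : G.Walk x y), p.support = x :: l ∧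
      (p.edges : Multiset (Sym2 V)) = pathEdges (x :: l) := by
  induction l generalizing x with
  | nil => exact ⟨x, SimpleGraph.Walk.nil, by simp [pathEdges]⟩
  | cons a l ih =>
    simp only [pathEdges, Multiset.mem_cons] at h
    obtain ⟨y, p, h1, h2⟩ := ih a fun e he => h e (Or.inr he)
    have hxa : G.Adj x a := h _ (Or.inl rfl)
    refine ⟨y, SimpleGraph.Walk.cons hxa p, by simp [h1], ?_⟩
    rw [SimpleGraph.Walk.edges_cons, ← Multiset.cons_coe, h2, pathEdges]

lemma exists_walks_of_pathEdges (L : List (List V))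
    (h : ∀ l ∈ L, l ≠ [] ∧ l.Nodup ∧ ∀ e ∈ pathEdges l, e ∈ G.edgeSet) :
    ∃ P : List (Σ a b : V, G.Walk a b), P.length = L.length ∧ (∀ p ∈ P, p.2.2.IsPath) ∧
      (P.flatMap (fun p => p.2.2.edges) : Multiset (Sym2 V)) =
        (L : Multiset (List V)).bind pathEdges := by
  induction L with
  | nil => exact ⟨[], by simp⟩
  | cons l L ih =>
    obtain ⟨P, h1, h2, h3⟩ := ih fun l' hl' => h l' (List.mem_cons_of_mem _ hl')
    obtain ⟨hne, hnd, hl⟩ := h l List.mem_cons_self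
    obtain ⟨x, l, rfl⟩ := List.exists_cons_of_ne_nil hne
    obtain ⟨y, p, hp1, hp2⟩ := exists_walk_of_pathEdges G x l hl
    refine ⟨⟨x, y, p⟩ :: P, by simp [h1], ?_, ?_⟩
    · intro q hq
      rcases List.mem_cons.1 hq with rfl | hq
      · rw [SimpleGraph.Walk.isPath_def]
        exact hp1 ▸ hnd
      · exact h2 q hq
    · rw [List.flatMap_cons, ← Multiset.coe_add, h3, ← Multiset.cons_coe, Multiset.cons_bind, hp2]

end Conversion

section Graphs

variable [Fintype V] [DecidableEq V] (G : SimpleGraph V) [DecidableRel G.Adj]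

lemma HasDec.exists_pathDecomp {G : SimpleGraph V} [DecidableRel G.Adj] {k : ℕ} {g : V → ℕ}
    (h : HasDec G.edgeFinset k g) : ∃ D : PathDecomp G, pdCard D ≤ k := by
  obtain ⟨D, hD, hk, -⟩ := h
  have hmem : ∀ e ∈ D.bind pathEdges, e ∈ G.edgeSet := by
    intro e he
    rw [hD.edges] at he
    exact SimpleGraph.mem_edgeFinset.1 he
  obtain ⟨P, hlen, hpath, hedges⟩ := exists_walks_of_pathEdges G D.toList fun l hl => by
    rw [Multiset.mem_toList] at hl
    exact ⟨hD.ne_nil l hl, hD.nodup l hl, fun e he => hmem e (Multiset.mem_bind.2 ⟨l, hl, he⟩)⟩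
  rw [Multiset.coe_toList, hD.edges] at hedges
  have hnodup : (P.flatMap fun p => p.2.2.edges).Nodup := by
    rw [← Multiset.coe_nodup, hedges]
    exact G.edgeFinset.nodup
  refine ⟨⟨P.filter fun p => 0 < p.2.2.length, ?_, ?_, ?_, ?_⟩, ?_⟩
  · intro p hp
    simpa using (List.mem_filter.1 hp).2
  · intro p hp
    exact hpath p (List.mem_filter.1 hp).1
  · refine List.Pairwise.filter _ ((List.nodup_flatMap.1 hnodup).2.imp ?_)
    intro p q hpq e hp hq
    exact hpq hp hq
  · intro e he
    have he' : e ∈ (P.flatMap (fun p => p.2.2.edges) : Multiset (Sym2 V)) := by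
      rw [hedges]
      exact SimpleGraph.mem_edgeFinset.2 he
    obtain ⟨p, hp, hep⟩ := List.mem_flatMap.1 (Multiset.mem_coe.1 he')
    refine ⟨p, List.mem_filter.2 ⟨hp, ?_⟩, hep⟩
    rw [decide_eq_true_eq, ← SimpleGraph.Walk.length_edges]
    exact List.length_pos_of_mem hep
  · refine (List.length_filter_le _ _).trans ?_
    rw [hlen, Multiset.length_toList]
    exact hk

lemma edgeDeg_edgeFinset (v : V) : edgeDeg G.edgeFinset v = ndeg G v := by
  rw [ndeg, edgeDeg, ← SimpleGraph.incidenceFinset_eq_filter,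
    SimpleGraph.card_incidenceFinset_eq_degree, ← SimpleGraph.card_neighborFinset_eq_degree,
    ← Set.ncard_coe_finset]
  congr 1
  ext w
  simp

lemma even_ndeg_iff (v : V) : Even (ndeg G v) ↔ par G.edgeFinset v = 0 := by
  rw [par, edgeDeg_edgeFinset, Nat.even_iff]

lemma coe_evenNbrs_edgeFinset (v : V) :
    (evenNbrs G.edgeFinset v : Set V) = {w | G.Adj v w ∧ Even (ndeg G w)} := by
  ext w
  simp [mem_evenNbrs, even_ndeg_iff]

lemma IsSETOn.isSETGraph {G : SimpleGraph V} [DecidableRel G.Adj] {W : Set V} {T : Finset V}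
    (hT : IsSETOn G.edgeFinset W T) (hG : G.Connected) : IsSETGraph G := by
  have hadj : ∀ {u v : V}, s(u, v) ∈ G.edgeFinset ↔ G.Adj u v := by simp
  obtain ⟨a, b, c, hab, hac, hbc, rfl⟩ := Finset.card_eq_three.1 hT.card
  have hW : ∀ v, v ∈ W := by
    intro v
    have ha : a ∈ W := hT.subset a (by simp)
    have hclosed := hT.closed
    obtain ⟨p⟩ := hG.preconnected v a
    clear hT hab hac
    induction p with
    | nil => exact ha
    | cons huv _ ih => exact hclosed _ (ih ha) _ (hadj.2 huv.symm)
  refine ⟨⟨a, b, c, hab, hac, hbc, ?_, ?_, ?_, ?_⟩, ?_⟩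
  · ext v
    simpa [even_ndeg_iff] using hT.par_iff v (hW v)
  · exact hadj.1 (hT.adj a (by simp) b (by simp) hab)
  · exact hadj.1 (hT.adj a (by simp) c (by simp) hac)
  · exact hadj.1 (hT.adj b (by simp) c (by simp) hbc)
  · intro v hv
    have h1 : par G.edgeFinset v = 1 := by
      rw [par, edgeDeg_edgeFinset]
      exact Nat.odd_iff.1 hv
    obtain ⟨w₁, hw₁, w₂, hw₂, hne⟩ := Finset.one_lt_card.1 (hT.two_le v (hW v) h1)
    rw [mem_evenNbrs, hadj, ← even_ndeg_iff] at hw₁ hw₂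
    exact ⟨w₁, w₂, hne, hw₁.1, hw₂.1, hw₁.2, hw₂.2⟩

end Graphs

theorem gallai_or_set_of_max_edegree_three [Fintype V] (G : SimpleGraph V)
    (hconn : G.Connected)
    (h : ∀ v : V, Even (ndeg G v) → {w | G.Adj v w ∧ Even (ndeg G w)}.ncard ≤ 3) :
    (∃ D : PathDecomp G, pdCard D ≤ Fintype.card V / 2) ∨ IsSETGraph G := by
  classical
  by_cases hset : ∃ W T, IsSETOn G.edgeFinset W T
  · obtain ⟨W, T, hT⟩ := hset
    exact Or.inr (hT.isSETGraph hconn)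
  · push Not at hset
    have hE : Admissible G.edgeFinset :=
      { loopless := by simp
        card_le := fun v hv => by
          rw [← Set.ncard_coe_finset, coe_evenNbrs_edgeFinset]
          exact h v ((even_ndeg_iff G v).2 hv)
        not_set := hset }
    exact Or.inl (hasDec_of_admissible hE).exists_pathDecomp
end

section
/- Let G be a connected simple graph on n vertices in which every vertex has odd degree except possibly one. Then pn(G) ≤ ⌊n/2⌋. -/
open SimpleGraph

variable {V : Type*}

namespace PathCover

open Multiset

/-- The multiset of edges joining consecutive entries of a list of vertices. -/
def trailEdges : List V → Multiset (Sym2 V)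
  | [] => 0
  | [_] => 0
  | x :: y :: l => s(x, y) ::ₘ trailEdges (y :: l)

/-- The first and the last entry of a list, with multiplicity; a singleton list has both of its
ends at its only entry. -/
def listEnds (l : List V) : Multiset V :=
  (l.head?.toList : Multiset V) + (l.getLast?.toList : Multiset V)

/-- `D` is a multiset of paths, given by their lists of vertices and possibly trivial, whose edges
form the multiset `E` and whose ends form the multiset `C`. -/
structure IsDecomp (E : Multiset (Sym2 V)) (C : Multiset V) (D : Multiset (List V)) : Prop where
  nodup : ∀ l ∈ D, l.Nodup
  ne_nil : ∀ l ∈ D, l ≠ []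
  edges : D.bind trailEdges = E
  ends : D.bind listEnds = C

theorem trailEdges_append_cons (l : List V) (x : V) (r : List V) :
    trailEdges (l ++ x :: r) = trailEdges (l ++ [x]) + trailEdges (x :: r) := by
  induction l with
  | nil => simp [trailEdges]
  | cons z l ih =>
    cases l with
    | nil => simp [trailEdges]
    | cons w l => simpa [trailEdges] using ih

theorem trailEdges_append_pair (l : List V) (x y : V) (r : List V) :
    trailEdges (l ++ x :: y :: r) =
      s(x, y) ::ₘ (trailEdges (l ++ [x]) + trailEdges (y :: r)) := by
  rw [trailEdges_append_cons, trailEdges, add_cons]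

theorem trailEdges_reverse (l : List V) : trailEdges l.reverse = trailEdges l := by
  induction l with
  | nil => rfl
  | cons x l ih =>
    cases l with
    | nil => rfl
    | cons y l =>
      rw [List.reverse_cons, List.reverse_cons, List.append_assoc, List.singleton_append,
        trailEdges_append_pair, ← List.reverse_cons, ih, trailEdges, Sym2.eq_swap]
      simp [trailEdges]

theorem listEnds_reverse (l : List V) : listEnds l.reverse = listEnds l := by
  simp [listEnds, add_comm]

theorem listEnds_cons_append_cons (x : V) (l : List V) (a : V) (t : List V) :
    listEnds (x :: l ++ a :: t) = x ::ₘ ((a :: t).getLast?.toList : Multiset V) := by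
  rw [listEnds, List.getLast?_append_of_ne_nil _ (List.cons_ne_nil a t)]
  simp

theorem mem_listEnds {l : List V} {v : V} :
    v ∈ listEnds l ↔ l.head? = some v ∨ l.reverse.head? = some v := by
  simp [listEnds]

theorem card_listEnds {l : List V} (h : l ≠ []) : card (listEnds l) = 2 := by
  obtain ⟨x, hx⟩ := Option.isSome_iff_exists.1 (List.isSome_head?.2 h)
  obtain ⟨y, hy⟩ := Option.isSome_iff_exists.1 (List.getLast?_isSome.2 h)
  simp [listEnds, hx, hy]

theorem IsDecomp.mem_edges {E : Multiset (Sym2 V)} {C : Multiset V} {D : Multiset (List V)}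
    (h : IsDecomp E C D) {l : List V} (hl : l ∈ D ∨ l.reverse ∈ D) {e : Sym2 V}
    (he : e ∈ trailEdges l) : e ∈ E := by
  rw [← h.edges, mem_bind]
  rcases hl with hl | hl
  · exact ⟨_, hl, he⟩
  · exact ⟨_, hl, by rwa [trailEdges_reverse]⟩

/-- Replacing a path of a decomposition by its reverse gives a decomposition. -/
theorem IsDecomp.cons_reverse {E : Multiset (Sym2 V)} {C : Multiset V} {D : Multiset (List V)}
    {l : List V} (h : IsDecomp E C (l.reverse ::ₘ D)) : IsDecomp E C (l ::ₘ D) where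
  nodup := by simpa using h.nodup
  ne_nil := by simpa using h.ne_nil
  edges := by simpa [trailEdges_reverse] using h.edges
  ends := by simpa [listEnds_reverse] using h.ends

/-- Rerouting a path `b … y a …` at `a` gives a path `y … b a …`, which trades the edge `ay` for
the edge `ab` and the end `b` for the end `y`. -/
theorem IsDecomp.switch {E : Multiset (Sym2 V)} {C : Multiset V} {D : Multiset (List V)}
    {a b y : V} {s t : List V}
    (h : IsDecomp (s(a, y) ::ₘ E) (b ::ₘ C) ((b :: s ++ y :: a :: t) ::ₘ D)) :
    IsDecomp (s(a, b) ::ₘ E) (y ::ₘ C) ((y :: s.reverse ++ b :: a :: t) ::ₘ D) := by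
  refine ⟨?_, ?_, ?_, ?_⟩
  · have := h.nodup
    simp only [mem_cons, forall_eq_or_imp] at this ⊢
    refine ⟨?_, this.2⟩
    refine (List.Perm.nodup_iff ?_).1 this.1
    have h1 : (b :: s ++ y :: a :: t) = (b :: s ++ [y]) ++ a :: t := by simp
    have h2 : (y :: s.reverse ++ b :: a :: t) = (b :: s ++ [y]).reverse ++ a :: t := by simp
    rw [h1, h2]
    exact (List.reverse_perm _).symm.append_right _
  · have := h.ne_nil
    simp_all
  · have := h.edges
    have h2 : trailEdges (y :: s.reverse ++ [b]) = trailEdges (b :: s ++ [y]) := by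
      rw [← trailEdges_reverse (b :: s ++ [y])]; simp
    rw [cons_bind, trailEdges_append_pair, Sym2.eq_swap, cons_add, cons_inj_right]
      at this
    rw [cons_bind, trailEdges_append_pair, Sym2.eq_swap, cons_add, h2, this]
  · have := h.ends
    rw [cons_bind, listEnds_cons_append_cons, List.getLast?_cons_cons, cons_add,
      cons_inj_right] at this
    rw [cons_bind, listEnds_cons_append_cons, List.getLast?_cons_cons, cons_add, this]

/-- Some path of `D`, traversed from `v`, either avoids `a` or reaches `a` from a vertex
outside `S`. -/
def HasFreeEnd (D : Multiset (List V)) (a : V) (S : Finset V) (v : V) : Prop :=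
  ∃ l : List V, (l ∈ D ∨ l.reverse ∈ D) ∧ l.head? = some v ∧
    (a ∉ l ∨ ∃ s y t, l = s ++ y :: a :: t ∧ y ∉ S)

/-- The edge `ab` can be added by repeated switching at `a`; `S` records the neighbours of `a`
already used, so that no switch is undone. -/
theorem exists_isDecomp_cons_of_hasFreeEnd [Fintype V] [DecidableEq V] {a : V} {C : Multiset V}
    (k : ℕ) : ∀ {E : Multiset (Sym2 V)} {b : V} {D : Multiset (List V)} {S : Finset V},
    (Finset.univ.filter fun v => s(a, v) ∈ E ∧ v ∉ S).card = k →
    IsDecomp E (b ::ₘ C) D → (s(a, b) ::ₘ E).Nodup → s(a, a) ∉ E → a ≠ b →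
    (∀ v, v = b ∨ (s(a, v) ∈ E ∧ v ∉ S) → HasFreeEnd D a S v) →
    ∃ D', IsDecomp (s(a, b) ::ₘ E) (a ::ₘ C) D' := by
  induction k using Nat.strong_induction_on with
  | _ k ih =>
  intro E b D S hk hD hE hloop hab hfree
  obtain ⟨l, hl, hhead, hsplit⟩ := hfree b (Or.inl rfl)
  obtain ⟨D₀, hD₀, hfree⟩ : ∃ D₀, IsDecomp E (b ::ₘ C) (l ::ₘ D₀) ∧
      ∀ v, v = b ∨ (s(a, v) ∈ E ∧ v ∉ S) → HasFreeEnd (l ::ₘ D₀) a S v := by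
    rcases hl with hl | hl
    · obtain ⟨D₀, rfl⟩ := exists_cons_of_mem hl
      exact ⟨D₀, hD, hfree⟩
    · obtain ⟨D₀, rfl⟩ := exists_cons_of_mem hl
      refine ⟨D₀, hD.cons_reverse, fun v hv => ?_⟩
      obtain ⟨m, hm, h⟩ := hfree v hv
      refine ⟨m, ?_, h⟩
      simp only [mem_cons, List.reverse_inj] at hm ⊢
      rcases hm with (rfl | hm) | (rfl | hm) <;> simp_all
  have hbE : s(a, b) ∉ E := (nodup_cons.1 hE).1
  have hlD : l ∈ l ::ₘ D₀ := mem_cons_self _ _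
  have hln := hD₀.nodup l hlD
  rcases hsplit with hal | ⟨s, y, t, rfl, hyS⟩
  · refine ⟨(a :: l) ::ₘ D₀, ?_, ?_, ?_, ?_⟩
    · have := hD₀.nodup
      simp_all
    · have := hD₀.ne_nil
      simp_all
    · rw [← hD₀.edges]
      cases l with
      | nil => simp at hhead
      | cons z l =>
        obtain rfl : z = b := by simpa using hhead
        simp [trailEdges]
    · have := hD₀.ends
      cases l with
      | nil => simp at hhead
      | cons z l =>
        obtain rfl : z = b := by simpa using hhead
        rw [cons_bind, listEnds, List.head?_cons, Option.toList_some, coe_singleton,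
          singleton_add, cons_add, cons_inj_right] at this
        rw [cons_bind, listEnds, List.head?_cons, Option.toList_some, coe_singleton,
          singleton_add, cons_add, List.getLast?_cons_cons, this]
  · have hyE : s(a, y) ∈ E := hD₀.mem_edges (Or.inl hlD) (by
      rw [trailEdges_append_pair, Sym2.eq_swap]; exact mem_cons_self _ _)
    have hyb : y ≠ b := by rintro rfl; exact hbE hyE
    obtain ⟨E₀, rfl⟩ := exists_cons_of_mem hyE
    obtain ⟨s, rfl⟩ : ∃ s', s = b :: s' := by
      cases s with
      | nil => simp at hhead; exact absurd hhead hyb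
      | cons z s => simp at hhead; exact ⟨s, by rw [hhead]⟩
    have hnew := hD₀.switch
    rw [cons_swap]
    rw [cons_swap] at hE
    have hay : a ≠ y := by rintro rfl; exact hloop hyE
    refine ih _ ?_ (S := insert b S) rfl hnew hE ?_ hay ?_
    · rw [← hk]
      refine Finset.card_lt_card (Finset.ssubset_iff_of_subset ?_ |>.2 ⟨y, ?_, ?_⟩)
      · intro v hv
        simp at hv ⊢
        tauto
      · simp [hyS]
      · have := (nodup_cons.1 hE).1
        simp_all
    · simp_all
    · intro v hv
      have hvb : v ≠ b := by
        rintro rfl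
        rcases hv with h | h
        · exact hyb h.symm
        · simp at h
      have hv' : s(a, v) ∈ s(a, y) ::ₘ E₀ ∧ v ∉ S := by
        rcases hv with rfl | h
        · exact ⟨hyE, hyS⟩
        · simp only [mem_cons, Finset.mem_insert, not_or, Sym2.congr_right] at h ⊢
          tauto
      have key : ∀ {m : List V}, (m ∈ (b :: s ++ y :: a :: t) ::ₘ D₀ ∨
          m.reverse ∈ (b :: s ++ y :: a :: t) ::ₘ D₀) →
          (a ∉ m ∨ ∃ s' y' t', m = s' ++ y' :: a :: t' ∧ y' ∉ S) →
          (a ∉ m ∨ ∃ s' y' t', m = s' ++ y' :: a :: t' ∧ y' ∉ insert b S) := by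
        rintro m hm (h | ⟨s', y', t', rfl, h⟩)
        · exact Or.inl h
        · refine Or.inr ⟨s', y', t', rfl, ?_⟩
          rw [Finset.mem_insert, not_or]
          refine ⟨?_, h⟩
          rintro rfl
          refine hbE (hD₀.mem_edges hm ?_)
          rw [trailEdges_append_pair, Sym2.eq_swap]
          exact mem_cons_self _ _
      obtain ⟨m, hm, hmv, hms⟩ := hfree v (Or.inr hv')
      have hms := key hm hms
      by_cases hm₀ : m ∈ D₀ ∨ m.reverse ∈ D₀
      · exact ⟨m, hm₀.imp (mem_cons_of_mem ·) (mem_cons_of_mem ·), hmv, hms⟩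
      · have hm' : m = b :: s ++ y :: a :: t ∨ m.reverse = b :: s ++ y :: a :: t := by
          rw [not_or] at hm₀
          exact hm.imp (fun h => (mem_cons.1 h).resolve_right hm₀.1)
            (fun h => (mem_cons.1 h).resolve_right hm₀.2)
        rcases hm' with rfl | hm'
        · simp at hmv; exact absurd hmv.symm hvb
        · obtain rfl : m = t.reverse ++ a :: y :: (b :: s).reverse := by
            rw [← List.reverse_inj, hm']; simp
          have hat : a ∉ t.reverse ∧ a ∉ y :: (b :: s).reverse := by
            rw [← List.nodup_reverse, ← hm', List.reverse_reverse] at hln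
            have := (List.nodup_cons.1 (List.nodup_middle.1 hln)).1
            rwa [List.mem_append, not_or] at this
          rcases hms with h | ⟨s', y', t', h, hy'⟩
          · simp at h
          · have h3 : t.reverse = s' ++ [y'] := by
              have h4 : t.reverse ++ a :: (y :: (b :: s).reverse) =
                (s' ++ [y']) ++ a :: t' := by rw [h]; simp
              rw [List.append_cons_inj_of_notMem hat.1 hat.2] at h4
              exact h4.1
            refine ⟨t.reverse ++ a :: b :: s ++ [y], Or.inr (by simp), ?_, Or.inr
              ⟨s', y', b :: s ++ [y], by rw [h3]; simp, hy'⟩⟩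
            rw [h3] at hmv ⊢
            cases s' <;> simpa using hmv

/-- Adding an edge `ab` to a decomposition in which `b` and all neighbours of `a` are ends of
paths: the number of paths stays the same and one end moves from `b` to `a`. -/
theorem IsDecomp.exists_add_edge [Fintype V] [DecidableEq V] {E : Multiset (Sym2 V)}
    {C : Multiset V} {D : Multiset (List V)} {a b : V} (hD : IsDecomp E (b ::ₘ C) D)
    (hE : (s(a, b) ::ₘ E).Nodup) (hloop : s(a, a) ∉ E) (hab : a ≠ b)
    (hC : ∀ v, s(a, v) ∈ E → v ∈ b ::ₘ C) :
    ∃ D', IsDecomp (s(a, b) ::ₘ E) (a ::ₘ C) D' := by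
  refine exists_isDecomp_cons_of_hasFreeEnd _ (S := ∅) rfl hD hE hloop hab fun v hv => ?_
  have hvC : v ∈ b ::ₘ C := by
    rcases hv with rfl | hv
    · exact mem_cons_self _ _
    · exact hC v hv.1
  have hva : v ≠ a := by
    rcases hv with rfl | hv
    · exact hab.symm
    · rintro rfl; exact hloop hv.1
  obtain ⟨l, hl, hlv⟩ : ∃ l, (l ∈ D ∨ l.reverse ∈ D) ∧ l.head? = some v := by
    rw [← hD.ends, mem_bind] at hvC
    obtain ⟨l, hl, hv⟩ := hvC
    rcases mem_listEnds.1 hv with h | h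
    · exact ⟨l, Or.inl hl, h⟩
    · exact ⟨l.reverse, Or.inr (by simpa using hl), h⟩
  refine ⟨l, hl, hlv, ?_⟩
  by_cases hal : a ∈ l
  · obtain ⟨s, t, rfl⟩ := List.append_of_mem hal
    rcases List.eq_nil_or_concat s with rfl | ⟨s, y, rfl⟩
    · simp at hlv; exact absurd hlv.symm hva
    · exact Or.inr ⟨s, y, t, by simp, by simp⟩
  · exact Or.inl hal

/-- A finite set `E` of edges decomposes into paths with any prescribed multiset `C` of ends that
satisfies the parity condition and misses at most one vertex incident with `E`. -/
theorem exists_isDecomp [Fintype V] [DecidableEq V] (k : ℕ) :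
    ∀ (E : Finset (Sym2 V)) (C : Multiset V), E.card = k → (∀ e ∈ E, ¬ e.IsDiag) →
    (∀ v, Even (C.count v + (E.filter (v ∈ ·)).card)) →
    (∀ u v, (∃ e ∈ E, u ∈ e) → (∃ e ∈ E, v ∈ e) → u ∉ C → v ∉ C → u = v) →
    ∃ D, IsDecomp E.val C D := by
  induction k with
  | zero =>
    intro E C hk hE hpar _
    obtain rfl := Finset.card_eq_zero.1 hk
    obtain ⟨C', hC'⟩ : ∃ C' : Multiset V, C = C' + C' := by
      refine ⟨∑ v, (C.count v / 2) • {v}, ?_⟩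
      ext v
      have := hpar v
      simp [count_sum', count_singleton] at this ⊢
      obtain ⟨r, hr⟩ := this
      omega
    refine ⟨C'.map fun v => [v], by simp, by simp, ?_, ?_⟩
    · simp [bind_map, trailEdges]
    · rw [hC']
      have := bind_singleton C' id
      simp_all [bind_map, listEnds]
  | succ k ih =>
    intro E C hk hE hpar hzero
    obtain ⟨x, y, hxy, hx, hy⟩ : ∃ x y, s(x, y) ∈ E ∧ x ∈ C ∧
        ∀ v, (∃ e ∈ E, v ∈ e) → v ∉ C → v = y := by
      by_cases h : ∃ y, (∃ e ∈ E, y ∈ e) ∧ y ∉ C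
      · obtain ⟨y, ⟨e, he, hye⟩, hyC⟩ := h
        obtain ⟨x, rfl⟩ := Sym2.mem_iff_exists.1 hye
        refine ⟨x, y, by rwa [Sym2.eq_swap], ?_, fun v hv hvC => hzero v y hv ⟨_, he, hye⟩ hvC hyC⟩
        by_contra hxC
        have := hzero x y ⟨_, he, by simp⟩ ⟨_, he, hye⟩ hxC hyC
        exact hE _ he (by simp [this])
      · push Not at h
        obtain ⟨e, he⟩ := Finset.card_pos.1 (by omega : 0 < E.card)
        induction e with | _ x y =>
        exact ⟨x, y, he, h x ⟨_, he, by simp⟩, fun v hv hvC => absurd (h v hv) hvC⟩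
    have hne : x ≠ y := fun h => hE _ hxy (by simp [h])
    obtain ⟨C, rfl⟩ := exists_cons_of_mem hx
    have hmem : ∀ v, v ≠ x → (∃ e ∈ E, v ∈ e) → v ∈ y ::ₘ C := by
      intro v hvx hv
      by_contra hvC
      rw [mem_cons, not_or] at hvC
      exact hvC.1 (hy v hv (by simp [hvx, hvC.2]))
    have hval : E.val = s(x, y) ::ₘ (E.erase s(x, y)).val := by
      rw [Finset.erase_val, cons_erase hxy]
    obtain ⟨D, hD⟩ := ih (E.erase s(x, y)) (y ::ₘ C) (by rw [Finset.card_erase_of_mem hxy]; omega)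
      (fun e he => hE e (Finset.mem_of_mem_erase he)) (fun v => by
        have h1 := hpar v
        rw [Finset.filter_erase]
        by_cases hv : v ∈ s(x, y)
        · have hmem : s(x, y) ∈ E.filter (v ∈ ·) := by simp [hxy, hv]
          have h2 := Finset.card_pos.2 ⟨_, hmem⟩
          rw [Finset.card_erase_of_mem hmem]
          obtain ⟨r, hr⟩ := h1
          rcases Sym2.mem_iff.1 hv with rfl | rfl
          · rw [count_cons_self] at hr
            rw [count_cons_of_ne hne]
            exact ⟨r - 1, by omega⟩
          · rw [count_cons_of_ne hne.symm] at hr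
            rw [count_cons_self]
            exact ⟨r, by omega⟩
        · rw [Finset.erase_eq_of_notMem (a := s(x, y)) (fun h => hv (Finset.mem_filter.1 h).2)]
          simp only [Sym2.mem_iff, not_or] at hv
          rwa [count_cons_of_ne hv.2, ← count_cons_of_ne hv.1])
      (by
        have aux : ∀ u, (∃ e ∈ E.erase s(x, y), u ∈ e) → u ∉ y ::ₘ C → u = x := by
          rintro u ⟨e, he, hu⟩ huC
          by_contra hux
          exact huC (hmem u hux ⟨e, Finset.mem_of_mem_erase he, hu⟩)
        intro u v hu hv huC hvC
        rw [aux u hu huC, aux v hv hvC])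
    rw [hval]
    refine hD.exists_add_edge ?_ (fun h => hE _ (Finset.mem_of_mem_erase h) (by simp)) hne ?_
    · rw [← hval]; exact E.nodup
    · intro v hv
      have hv := Finset.mem_of_mem_erase hv
      exact hmem v (by rintro rfl; exact hE _ hv (by simp)) ⟨_, hv, by simp⟩

theorem exists_walk_of_trailEdges {G : SimpleGraph V} (l : List V) : ∀ x : V,
    (∀ e ∈ trailEdges (x :: l), e ∈ G.edgeSet) →
    ∃ (y : V) (w : G.Walk x y), w.support = x :: l ∧
      (w.edges : Multiset (Sym2 V)) = trailEdges (x :: l) := by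
  induction l with
  | nil => exact fun x _ => ⟨x, .nil, rfl, rfl⟩
  | cons z l ih =>
    intro x h
    simp only [trailEdges, mem_cons, forall_eq_or_imp] at h
    obtain ⟨y, w, hs, he⟩ := ih z h.2
    refine ⟨y, .cons (G.mem_edgeSet.1 h.1) w, by simp [hs], ?_⟩
    rw [SimpleGraph.Walk.edges_cons, ← cons_coe, he, trailEdges]

/-- Lists of vertices of paths of `G` are realised by walks, discarding the trivial ones. -/
theorem exists_walks {G : SimpleGraph V} (D : Multiset (List V)) (hn : ∀ l ∈ D, l.Nodup)
    (he : ∀ e ∈ D.bind trailEdges, e ∈ G.edgeSet) :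
    ∃ L : List (Σ a b : V, G.Walk a b), (∀ p ∈ L, 0 < p.2.2.length) ∧
      (∀ p ∈ L, p.2.2.IsPath) ∧ L.length ≤ card D ∧
      ((L.flatMap fun p => p.2.2.edges : List (Sym2 V)) : Multiset (Sym2 V)) =
        D.bind trailEdges := by
  induction D using Multiset.induction_on with
  | empty => exact ⟨[], by simp⟩
  | cons l D ih =>
    simp only [mem_cons, forall_eq_or_imp, cons_bind, mem_add] at hn he
    obtain ⟨L, h1, h2, h3, h4⟩ := ih hn.2 fun e h => he e (Or.inr h)
    cases l with
    | nil => exact ⟨L, h1, h2, by simp; omega, by simp [h4, trailEdges]⟩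
    | cons x l =>
      obtain ⟨y, w, hs, hw⟩ := exists_walk_of_trailEdges l x fun e h => he e (Or.inl h)
      rcases Nat.eq_zero_or_pos w.length with h0 | h0
      · refine ⟨L, h1, h2, by simp; omega, ?_⟩
        rw [← SimpleGraph.Walk.length_edges, List.length_eq_zero_iff] at h0
        rw [cons_bind, ← hw, h0, h4]
        simp
      · refine ⟨⟨x, y, w⟩ :: L, ?_, ?_, by simpa using h3, ?_⟩
        · exact List.forall_mem_cons.2 ⟨h0, h1⟩
        · have hp : w.IsPath := SimpleGraph.Walk.IsPath.mk' (by rw [hs]; exact hn.1)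
          exact List.forall_mem_cons.2 ⟨hp, h2⟩
        · rw [List.flatMap_cons, ← coe_add, h4, hw, cons_bind]

theorem IsDecomp.two_mul_card {E : Multiset (Sym2 V)} {C : Multiset V} {D : Multiset (List V)}
    (h : IsDecomp E C D) : 2 * card D = card C := by
  have hmap : D.map (card ∘ listEnds) = D.map fun _ => 2 :=
    map_congr rfl fun l hl => card_listEnds (h.ne_nil l hl)
  rw [← h.ends, card_bind, hmap]
  simp [mul_comm]

end PathCover

theorem lovasz_theorem [Fintype V] (G : SimpleGraph V) (hconn : G.Connected)
    (h : {v : V | Even (ndeg G v)}.Subsingleton) :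
    pn G ≤ Fintype.card V / 2 := by
  classical
  have hdeg : ∀ v, (G.edgeFinset.filter (v ∈ ·)).card = ndeg G v := by
    intro v
    rw [← G.incidenceFinset_eq_filter, G.card_incidenceFinset_eq_degree, ndeg,
      ← G.card_neighborFinset_eq_degree, ← Set.ncard_coe_finset, G.coe_neighborFinset]
    rfl
  obtain ⟨D, hD⟩ := PathCover.exists_isDecomp _ G.edgeFinset
    (Finset.univ.filter fun v => ¬ Even (ndeg G v)).val rfl
    (fun e he => G.not_isDiag_of_mem_edgeFinset he)
    (fun v => by
      rw [hdeg, Multiset.count_eq_of_nodup (Finset.nodup _)]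
      by_cases hv : Even (ndeg G v)
      · rw [if_neg (by simpa using hv), zero_add]
        exact hv
      · rw [if_pos (by simpa using hv), add_comm, Nat.even_add_one]
        exact hv)
    (fun u v _ _ hu hv => h (by simpa using hu) (by simpa using hv))
  obtain ⟨L, hpos, hpath, hlen, hedges⟩ := PathCover.exists_walks (G := G) D hD.nodup (by
    rw [hD.edges]; exact fun e he => G.mem_edgeFinset.1 he)
  rw [hD.edges] at hedges
  have hnodup : (L.flatMap fun p => p.2.2.edges).Nodup := by
    rw [← Multiset.coe_nodup, hedges]; exact G.edgeFinset.nodup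
  let P : PathDecomp G :=
    { paths := L
      nontrivial := hpos
      isPath := hpath
      edgeDisjoint := (List.nodup_flatMap.1 hnodup).2.imp fun hd e he he' => hd he he'
      covers := fun e he => by
        rw [← G.mem_edgeFinset, ← Finset.mem_val, ← hedges] at he
        simpa using he }
  have hcard := hD.two_mul_card
  have hle := Finset.card_le_univ (Finset.univ.filter fun v => ¬ Even (ndeg G v))
  rw [Finset.card_def] at hle
  calc pn G ≤ L.length := Nat.sInf_le ⟨P, rfl⟩
    _ ≤ Fintype.card V / 2 := by omega
end
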